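/- For each choice of sign ± there exist a real number c_± and a constant C > 0 such that for every prime q ≥ 3: |(1/q)·Σ_{a=1}^{q−1} f_±(a/q)² − (1/π²)·(log q)^4 − c_±·(log q)^3| ≤ C·(log q)². -/

import Mathlib

open Real Finset

/-- The list `[b_0, b_1, …, b_κ]` of partial quotients of `a/q` produced by the
Euclidean algorithm. -/
def cfList : ℕ → ℕ → List ℕ
  | a, q =>
    if h : q = 0 then [] else (a / q) :: cfList q (a % q)
termination_by a q => q
decreasing_by exact Nat.mod_lt _ (Nat.pos_of_ne_zero h)

/-- `f_±(a/q) = ∑_{j=1}^κ (±1)^j b_j^{1/2} (log b_j + γ − log 8π ∓ π/2)`. -/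
noncomputable def fpm (ε : ℤ) (a q : ℕ) : ℝ :=
  ∑ j ∈ Finset.Icc 1 ((cfList a q).length - 1),
    (ε : ℝ)^j * Real.sqrt ((cfList a q).getD j 0) *
      (Real.log ((cfList a q).getD j 0) + Real.eulerMascheroniConstant
        - Real.log (8*π) - (ε : ℝ) * π/2)

/-!
The square of `fpm` splits into a diagonal part `∑ b (log b + K)²`, with
`K = γ - log (8π) ∓ π / 2` and `b` running over all partial quotients of all fractions with
denominator `q`, and an off-diagonal part over pairs of distinct positions.

*Diagonal.* A position in an expansion splits it into two ends with continuants `x` and `y`, and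
then `q = b x y + r y + s x` with `r ≤ x` and `s ≤ y`, so that `b` is within `2` of `q / (x y)`.
For prime `q` the pair `(x, y)` is coprime, and together with the parity of the position it
determines the fraction and the position; conversely every coprime pair with `4 x y ≤ q` occurs
with both parities. Hence the diagonal is, up to `O(q (log q)²)`, twice the sum of
`t (log t + K)²` at `t = q / (x y)` over coprime pairs with `x y ≤ q`, which Möbius inversion and
partial summation evaluate.

*Off-diagonal.* This part is `O(q (log q)²)`. Pairs of positions on the same side of the middle of
an expansion are counted exactly. For pairs straddling the middle, small partial quotients are
treated by the Cauchy–Schwarz inequality with threshold `log T = (log q)^(1/3)`, and large ones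
through the identity `x_j y_i = q m ± x_i y_j` and bounds for divisor sums.
-/

/-- The continuant `K(b₁, …, bₙ)`: the numerator of the continued fraction `[b₁; b₂, …, bₙ]`. -/
def continuant : List ℕ → ℕ
  | [] => 1
  | [b] => b
  | b :: c :: l => b * continuant (c :: l) + continuant l

/-- The continuant `K(b₂, …, bₙ)` of the tail: the denominator of `[b₁; b₂, …, bₙ]`. Its value `0`
on the empty list makes `continuant_cons` hold without exception. -/
def tailContinuant : List ℕ → ℕ
  | [] => 0
  | _ :: l => continuant l

/-- A list of partial quotients as produced by the Euclidean algorithm: the entries are positive and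
the last one is not `1`. -/
def IsCanonical (l : List ℕ) : Prop := (∀ b ∈ l, 0 < b) ∧ l.getLast? ≠ some 1

lemma continuant_cons (b : ℕ) (l : List ℕ) :
    continuant (b :: l) = b * continuant l + tailContinuant l := by
  cases l <;> simp [continuant, tailContinuant]

lemma tailContinuant_cons (b : ℕ) (l : List ℕ) : tailContinuant (b :: l) = continuant l := rfl

lemma continuant_pos : ∀ {l : List ℕ}, (∀ b ∈ l, 0 < b) → 0 < continuant l
  | [], _ => by simp [continuant]
  | b :: l, h => by
    rw [List.forall_mem_cons] at h
    rw [continuant_cons]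
    exact Nat.add_pos_left (Nat.mul_pos h.1 (continuant_pos h.2)) _

lemma tailContinuant_le {l : List ℕ} (h : ∀ b ∈ l, 0 < b) : tailContinuant l ≤ continuant l := by
  cases l with
  | nil => simp [tailContinuant]
  | cons b l =>
    rw [continuant_cons]
    exact (Nat.le_mul_of_pos_left _ (List.forall_mem_cons.1 h).1).trans (Nat.le_add_right _ _)

lemma eq_nil_of_tailContinuant_eq_zero {l : List ℕ} (h : ∀ b ∈ l, 0 < b)
    (h0 : tailContinuant l = 0) : l = [] := by
  cases l with
  | nil => rfl
  | cons b l => exact absurd h0 (continuant_pos (List.forall_mem_cons.1 h).2).ne'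

lemma eq_singleton_one_of_tailContinuant_eq {l : List ℕ} (h : ∀ b ∈ l, 0 < b)
    (heq : tailContinuant l = continuant l) : l = [1] := by
  cases l with
  | nil => simp [continuant, tailContinuant] at heq
  | cons b l =>
    obtain ⟨hb, hl⟩ := List.forall_mem_cons.1 h
    have hpos := continuant_pos hl
    rw [continuant_cons, tailContinuant] at heq
    have hb1 : b = 1 := by nlinarith
    have htail : tailContinuant l = 0 := by nlinarith
    rw [hb1, eq_nil_of_tailContinuant_eq_zero hl htail]

lemma IsCanonical.tailContinuant_lt {l : List ℕ} (h : IsCanonical l) :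
    tailContinuant l < continuant l := by
  refine (tailContinuant_le h.1).lt_of_ne fun heq => h.2 ?_
  rw [eq_singleton_one_of_tailContinuant_eq h.1 heq, List.getLast?_singleton]

lemma coprime_continuant_tailContinuant : ∀ l : List ℕ,
    (continuant l).Coprime (tailContinuant l)
  | [] => by simp [continuant]
  | b :: l => by
    simpa [continuant_cons, tailContinuant] using (coprime_continuant_tailContinuant l).symm

lemma continuant_reverse_append : ∀ u v : List ℕ, continuant (u.reverse ++ v) =
    continuant u * continuant v + tailContinuant u * tailContinuant v
  | [], v => by simp [continuant, tailContinuant]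
  | c :: u, v => by
    rw [List.reverse_cons, List.append_assoc, List.singleton_append,
      continuant_reverse_append u (c :: v), continuant_cons, continuant_cons, tailContinuant,
      tailContinuant]
    ring

lemma continuant_reverse (u : List ℕ) : continuant u.reverse = continuant u := by
  simpa [continuant, tailContinuant] using continuant_reverse_append u []

lemma continuant_mul_le_append (u v : List ℕ) :
    continuant u * continuant v ≤ continuant (u ++ v) := by
  have h := continuant_reverse_append u.reverse v
  rw [List.reverse_reverse, continuant_reverse] at h
  rw [h]
  exact Nat.le_add_right _ _

lemma continuant_le_append_right {u : List ℕ} (hu : ∀ b ∈ u, 0 < b) (v : List ℕ) :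
    continuant v ≤ continuant (u ++ v) :=
  (Nat.le_mul_of_pos_left _ (continuant_pos hu)).trans (continuant_mul_le_append u v)

lemma continuant_le_append_left (u : List ℕ) {v : List ℕ} (hv : ∀ b ∈ v, 0 < b) :
    continuant u ≤ continuant (u ++ v) :=
  (Nat.le_mul_of_pos_right _ (continuant_pos hv)).trans (continuant_mul_le_append u v)

lemma two_pow_le_continuant : ∀ {l : List ℕ}, (∀ b ∈ l, 0 < b) →
    2 ^ (l.length / 2) ≤ continuant l
  | [], _ => by simp [continuant]
  | [b], h => by simpa [continuant] using Nat.succ_le_of_lt (h b (by simp))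
  | b :: c :: l, h => by
    obtain ⟨hb, hcl⟩ := List.forall_mem_cons.1 h
    obtain ⟨-, hl⟩ := List.forall_mem_cons.1 hcl
    have ih := two_pow_le_continuant hl
    have hlen : (b :: c :: l).length / 2 = l.length / 2 + 1 := by
      simp only [List.length_cons]; lia
    have hl_le : continuant l ≤ continuant (c :: l) := tailContinuant_le hcl
    have hcl_le : continuant (c :: l) ≤ b * continuant (c :: l) := Nat.le_mul_of_pos_left _ hb
    rw [hlen, pow_succ, continuant]
    lia

/-- Euler's identity for continuants. -/
lemma continuant_mul_sub_continuant_mul (b c : ℕ) (w z : List ℕ) :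
    (continuant (b :: w) : ℤ) * continuant (w ++ c :: z)
      - continuant (b :: (w ++ c :: z)) * continuant w = (-1) ^ (w.length + 1) * continuant z := by
  induction w generalizing b with
  | nil => simp [continuant]
  | cons d w ih =>
    rw [List.length_cons, List.cons_append, continuant_cons b (d :: w),
      continuant_cons b (d :: (w ++ c :: z)), tailContinuant, tailContinuant]
    push_cast
    linear_combination (-1) * ih d

lemma tailContinuant_eq_of_eq_continuant {l l' : List ℕ} (h : ∀ b ∈ l, 0 < b)
    (h' : ∀ b ∈ l', 0 < b) (hK : continuant l = continuant l')
    (hmax : tailContinuant l = continuant l) (hpar : l.length % 2 = l'.length % 2) :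
    tailContinuant l = tailContinuant l' := by
  obtain rfl := eq_singleton_one_of_tailContinuant_eq h hmax
  have hle := tailContinuant_le h'
  have hne : tailContinuant l' ≠ 0 := fun h0 => by
    simp [eq_nil_of_tailContinuant_eq_zero h' h0] at hpar
  have hK1 : continuant [1] = 1 := rfl
  lia

/-- The tail continuant may take both values `0` (for `[]`) and `K` (for `[1]`) in the class `0`
modulo `K`; the parity of the length tells them apart. -/
lemma tailContinuant_eq_of_modEq {l l' : List ℕ} (h : ∀ b ∈ l, 0 < b) (h' : ∀ b ∈ l', 0 < b)
    (hK : continuant l = continuant l')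
    (hmod : tailContinuant l ≡ tailContinuant l' [MOD continuant l])
    (hpar : l.length % 2 = l'.length % 2) : tailContinuant l = tailContinuant l' := by
  rcases (tailContinuant_le h).eq_or_lt with heq | hlt
  · exact tailContinuant_eq_of_eq_continuant h h' hK heq hpar
  rcases (tailContinuant_le h').eq_or_lt with heq' | hlt'
  · exact (tailContinuant_eq_of_eq_continuant h' h hK.symm heq' hpar.symm).symm
  · exact hmod.eq_of_lt_of_lt hlt (hK ▸ hlt')

lemma eq_of_continuant_eq_of_modEq : ∀ {l l' : List ℕ}, (∀ b ∈ l, 0 < b) → (∀ b ∈ l', 0 < b) →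
    continuant l = continuant l' → tailContinuant l ≡ tailContinuant l' [MOD continuant l] →
    l.length % 2 = l'.length % 2 → l = l' := by
  intro l
  induction l with
  | nil =>
    intro l' h h' hK hmod hpar
    exact (eq_nil_of_tailContinuant_eq_zero h'
      (tailContinuant_eq_of_modEq h h' hK hmod hpar).symm).symm
  | cons b l ih =>
    intro l' h h' hK hmod hpar
    have htail := tailContinuant_eq_of_modEq h h' hK hmod hpar
    cases l' with
    | nil => exact eq_nil_of_tailContinuant_eq_zero h htail
    | cons b' l' =>
      obtain ⟨hb, hl⟩ := List.forall_mem_cons.1 h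
      obtain ⟨hb', hl'⟩ := List.forall_mem_cons.1 h'
      simp only [tailContinuant] at htail
      rw [continuant_cons, continuant_cons, ← htail] at hK
      have hmod' : tailContinuant l ≡ tailContinuant l' [MOD continuant l] := by
        have := congrArg (· % continuant l) hK
        simpa [Nat.ModEq] using this
      obtain rfl := ih hl hl' htail hmod' (by simp only [List.length_cons] at hpar; lia)
      rw [Nat.eq_of_mul_eq_mul_right (continuant_pos hl) (Nat.add_right_cancel hK)]

lemma IsCanonical.of_append_right {u v : List ℕ} (h : IsCanonical (u ++ v)) : IsCanonical v := by
  refine ⟨fun b hb => h.1 b (List.mem_append_right _ hb), fun hlast => h.2 ?_⟩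
  simp [List.getLast?_append, hlast]

lemma IsCanonical.append {u v : List ℕ} (hu : ∀ b ∈ u, 0 < b) (hv : IsCanonical v)
    (hne : v ≠ []) : IsCanonical (u ++ v) :=
  ⟨List.forall_mem_append.2 ⟨hu, hv.1⟩, by rw [List.getLast?_append_of_ne_nil _ hne]; exact hv.2⟩

lemma cfList_zero_right (a : ℕ) : cfList a 0 = [] := by
  rw [cfList, dif_pos rfl]

lemma cfList_of_pos (a : ℕ) {q : ℕ} (hq : 0 < q) : cfList a q = (a / q) :: cfList q (a % q) := by
  rw [cfList, dif_neg hq.ne']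

lemma coprime_mod_of_coprime {x x' : ℕ} (h : x.Coprime x') : x'.Coprime (x % x') := by
  rw [Nat.coprime_comm, Nat.Coprime, ← Nat.gcd_rec]
  exact h.symm

lemma continuant_cfList {a q : ℕ} (hc : q.Coprime a) :
    continuant (cfList q a) = q ∧ tailContinuant (cfList q a) = a := by
  induction a using Nat.strong_induction_on generalizing q with
  | _ a ih =>
    rcases Nat.eq_zero_or_pos a with rfl | ha
    · simpa [cfList_zero_right, continuant, tailContinuant, eq_comm] using hc
    · obtain ⟨hK, hK'⟩ := ih (q % a) (Nat.mod_lt q ha) (coprime_mod_of_coprime hc)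
      rw [cfList_of_pos q ha, continuant_cons, hK, hK', tailContinuant, hK]
      exact ⟨Nat.div_add_mod' q a, rfl⟩

lemma isCanonical_cfList {a q : ℕ} (haq : a < q) (hc : q.Coprime a) :
    IsCanonical (cfList q a) := by
  induction a using Nat.strong_induction_on generalizing q with
  | _ a ih =>
    rcases Nat.eq_zero_or_pos a with rfl | ha
    · simp [cfList_zero_right, IsCanonical]
    · rw [cfList_of_pos q ha]
      have htail := ih (q % a) (Nat.mod_lt q ha) (Nat.mod_lt q ha) (coprime_mod_of_coprime hc)
      have hdiv : 0 < q / a := Nat.div_pos haq.le ha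
      by_cases hnil : cfList a (q % a) = []
      · have ha1 : a = 1 := by
          simpa [hnil, continuant, eq_comm] using (continuant_cfList (coprime_mod_of_coprime hc)).1
        subst ha1
        simp only [Nat.div_one] at hdiv
        simp only [Nat.div_one, hnil, IsCanonical, List.mem_singleton, forall_eq,
          List.getLast?_singleton, ne_eq, Option.some.injEq]
        lia
      · exact IsCanonical.append (u := [q / a]) (by simpa using hdiv) htail hnil

lemma cfList_continuant_tailContinuant : ∀ {l : List ℕ}, IsCanonical l →
    cfList (continuant l) (tailContinuant l) = l
  | [], _ => by simp [tailContinuant, cfList_zero_right]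
  | b :: l, h => by
    have hl : IsCanonical l := IsCanonical.of_append_right (u := [b]) h
    have hlt := hl.tailContinuant_lt
    have hpos := continuant_pos hl.1
    have hdiv : (b * continuant l + tailContinuant l) / continuant l = b := by
      rw [mul_comm, Nat.mul_add_div hpos, Nat.div_eq_of_lt hlt, add_zero]
    have hmod : (b * continuant l + tailContinuant l) % continuant l = tailContinuant l := by
      rw [mul_comm, Nat.mul_add_mod, Nat.mod_eq_of_lt hlt]
    rw [continuant_cons, tailContinuant, cfList_of_pos _ hpos, hdiv, hmod,
      cfList_continuant_tailContinuant hl]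

lemma IsCanonical.eq_of_continuant_eq {l l' : List ℕ} (h : IsCanonical l) (h' : IsCanonical l')
    (hK : continuant l = continuant l') (hK' : tailContinuant l = tailContinuant l') : l = l' := by
  rw [← cfList_continuant_tailContinuant h, ← cfList_continuant_tailContinuant h', hK, hK']

lemma exists_list_of_parity {x x' par : ℕ} (hpos : 0 < x') (hlt : x' < x) (hc : x.Coprime x')
    (hpar : par < 2) : ∃ l : List ℕ, (∀ b ∈ l, 0 < b) ∧ continuant l = x ∧
      tailContinuant l = x' ∧ l.length % 2 = par := by
  induction x' using Nat.strong_induction_on generalizing x par with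
  | _ x' ih =>
    rcases (Nat.succ_le_of_lt hpos).eq_or_lt with rfl | h1
    · interval_cases par
      · refine ⟨[x - 1, 1], by simp; lia, ?_, rfl, by simp⟩
        simp [continuant]; lia
      · exact ⟨[x], by simp; lia, rfl, rfl, by simp⟩
    · have hc' := coprime_mod_of_coprime hc
      have hmod : 0 < x % x' := Nat.pos_of_ne_zero fun h0 => by simp [h0] at hc'; lia
      have hmodlt := Nat.mod_lt x hpos
      obtain ⟨l, hl, hK, hK', hlen⟩ := ih (x % x') hmodlt hmod hmodlt hc' (par := 1 - par) (by lia)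
      refine ⟨(x / x') :: l, List.forall_mem_cons.2 ⟨Nat.div_pos hlt.le hpos, hl⟩, ?_, hK, ?_⟩
      · rw [continuant_cons, hK, hK', Nat.div_add_mod']
      · rw [List.length_cons]; lia

/-! ### Positions in the expansions with a given denominator -/

/-- The numerators `a` of the reduced fractions `a / q` in `[0, 1)`. -/
def reducedResidues (q : ℕ) : Finset ℕ := {a ∈ range q | q.Coprime a}

/-- The pairs `(a, i)` where `a / q` is reduced and `i` indexes a partial quotient of `q / a`;
counting from the expansion of `q / a` removes the leading quotient `0` of `a / q`. -/
def positions (q : ℕ) : Finset (Σ _ : ℕ, ℕ) :=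
  (reducedResidues q).sigma fun a => range (cfList q a).length

/-- The `i`-th partial quotient of `q / a`, counted from `0`. -/
def partialQuotient (q a i : ℕ) : ℕ := (cfList q a).getD i 0

/-- The partial quotients of `q / a` before position `i`, read backwards from that position. -/
def leftQuotients (q a i : ℕ) : List ℕ := ((cfList q a).take i).reverse

/-- The partial quotients of `q / a` after position `i`. -/
def rightQuotients (q a i : ℕ) : List ℕ := (cfList q a).drop (i + 1)

/-- The continuant of the partial quotients before position `i`. -/
def leftContinuant (q a i : ℕ) : ℕ := continuant (leftQuotients q a i)

/-- The continuant of the partial quotients after position `i`. -/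
def rightContinuant (q a i : ℕ) : ℕ := continuant (rightQuotients q a i)

/-- The continuants before and after a position, with the parity of the position; these determine
it. -/
def positionData (q : ℕ) (p : Σ _ : ℕ, ℕ) : (ℕ × ℕ) × ℕ :=
  ((leftContinuant q p.1 p.2, rightContinuant q p.1 p.2), p.2 % 2)

section Positions

variable {q a i j : ℕ}

lemma mem_reducedResidues : a ∈ reducedResidues q ↔ a < q ∧ q.Coprime a := by
  simp [reducedResidues]

lemma mem_positions {p : Σ _ : ℕ, ℕ} :
    p ∈ positions q ↔ p.1 ∈ reducedResidues q ∧ p.2 < (cfList q p.1).length := by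
  simp [positions]

lemma isCanonical_of_mem (ha : a ∈ reducedResidues q) : IsCanonical (cfList q a) :=
  have h := mem_reducedResidues.1 ha
  isCanonical_cfList h.1 h.2

lemma continuant_of_mem (ha : a ∈ reducedResidues q) : continuant (cfList q a) = q :=
  (continuant_cfList (mem_reducedResidues.1 ha).2).1

lemma cfList_eq_append (hi : i < (cfList q a).length) :
    cfList q a =
      (leftQuotients q a i).reverse ++ partialQuotient q a i :: rightQuotients q a i := by
  rw [leftQuotients, partialQuotient, rightQuotients, List.reverse_reverse,
    List.getD_eq_getElem _ _ hi, List.getElem_cons_drop, List.take_append_drop]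

lemma length_leftQuotients (hi : i < (cfList q a).length) : (leftQuotients q a i).length = i := by
  rw [leftQuotients, List.length_reverse, List.length_take, min_eq_left hi.le]

lemma leftQuotients_pos (ha : a ∈ reducedResidues q) : ∀ b ∈ leftQuotients q a i, 0 < b :=
  fun b hb => (isCanonical_of_mem ha).1 b (List.mem_of_mem_take (List.mem_reverse.1 hb))

lemma isCanonical_cons_rightQuotients (ha : a ∈ reducedResidues q)
    (hi : i < (cfList q a).length) :
    IsCanonical (partialQuotient q a i :: rightQuotients q a i) := by
  have h := isCanonical_of_mem ha
  rw [cfList_eq_append hi] at h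
  exact h.of_append_right

lemma isCanonical_rightQuotients (ha : a ∈ reducedResidues q) :
    IsCanonical (rightQuotients q a i) := by
  have h := isCanonical_of_mem ha
  rw [← List.take_append_drop (i + 1) (cfList q a)] at h
  exact h.of_append_right

lemma partialQuotient_pos (ha : a ∈ reducedResidues q) (hi : i < (cfList q a).length) :
    0 < partialQuotient q a i :=
  (isCanonical_cons_rightQuotients ha hi).1 _ List.mem_cons_self

lemma leftContinuant_pos (ha : a ∈ reducedResidues q) : 0 < leftContinuant q a i :=
  continuant_pos (leftQuotients_pos ha)

lemma rightContinuant_pos (ha : a ∈ reducedResidues q) : 0 < rightContinuant q a i :=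
  continuant_pos (isCanonical_rightQuotients ha).1

lemma tailContinuant_leftQuotients_le (ha : a ∈ reducedResidues q) :
    tailContinuant (leftQuotients q a i) ≤ leftContinuant q a i :=
  tailContinuant_le (leftQuotients_pos ha)

lemma tailContinuant_rightQuotients_lt (ha : a ∈ reducedResidues q) :
    tailContinuant (rightQuotients q a i) < rightContinuant q a i :=
  (isCanonical_rightQuotients ha).tailContinuant_lt

lemma eq_partialQuotient_mul_add (ha : a ∈ reducedResidues q) (hi : i < (cfList q a).length) :
    q = partialQuotient q a i * (leftContinuant q a i * rightContinuant q a i)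
      + tailContinuant (leftQuotients q a i) * rightContinuant q a i
      + tailContinuant (rightQuotients q a i) * leftContinuant q a i := by
  have h := continuant_of_mem ha
  rw [cfList_eq_append hi, continuant_reverse_append, continuant_cons, tailContinuant_cons] at h
  conv_lhs => rw [← h]
  rw [leftContinuant, rightContinuant]
  ring

lemma partialQuotient_mul_le (ha : a ∈ reducedResidues q) (hi : i < (cfList q a).length) :
    partialQuotient q a i * (leftContinuant q a i * rightContinuant q a i) ≤ q := by
  have h := eq_partialQuotient_mul_add ha hi
  lia

lemma le_partialQuotient_add_two_mul (ha : a ∈ reducedResidues q)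
    (hi : i < (cfList q a).length) :
    q ≤ (partialQuotient q a i + 2) * (leftContinuant q a i * rightContinuant q a i) := by
  have h := eq_partialQuotient_mul_add ha hi
  nlinarith [Nat.mul_le_mul_right (rightContinuant q a i)
      (tailContinuant_leftQuotients_le (i := i) ha),
    Nat.mul_le_mul_right (leftContinuant q a i)
      (tailContinuant_rightQuotients_lt (i := i) ha).le]

lemma leftContinuant_mul_rightContinuant_lt (ha : a ∈ reducedResidues q)
    (hi : i < (cfList q a).length) : leftContinuant q a i * rightContinuant q a i < q := by
  have hq := eq_partialQuotient_mul_add ha hi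
  have hx := leftContinuant_pos (i := i) ha
  have hcan := isCanonical_cons_rightQuotients ha hi
  rcases Nat.eq_zero_or_pos (tailContinuant (rightQuotients q a i)) with h0 | h0
  · have hnil := eq_nil_of_tailContinuant_eq_zero (isCanonical_rightQuotients ha).1 h0
    have hb : 1 < partialQuotient q a i := by
      refine lt_of_le_of_ne (partialQuotient_pos ha hi) fun h1 => hcan.2 ?_
      rw [hnil, ← h1, List.getLast?_singleton]
    nlinarith [Nat.mul_pos hx (rightContinuant_pos (i := i) ha)]
  · nlinarith [Nat.mul_pos h0 hx,
      Nat.mul_le_mul_right (leftContinuant q a i * rightContinuant q a i)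
        (partialQuotient_pos ha hi)]

lemma coprime_leftContinuant_rightContinuant (hq : q.Prime) (ha : a ∈ reducedResidues q)
    (hi : i < (cfList q a).length) :
    (leftContinuant q a i).Coprime (rightContinuant q a i) := by
  set x := leftContinuant q a i with hx
  set y := rightContinuant q a i with hy
  have hdvd : x.gcd y ∣ q := by
    rw [eq_partialQuotient_mul_add ha hi, ← hx, ← hy]
    have hgx := Nat.gcd_dvd_left x y
    have hgy := Nat.gcd_dvd_right x y
    exact ((hgx.mul_right y |>.mul_left _).add (hgy.mul_left _)).add (hgx.mul_left _)
  refine ((Nat.dvd_prime hq).1 hdvd).resolve_right fun hgcd => ?_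
  have hle : x.gcd y ≤ x * y := (Nat.gcd_le_left y (leftContinuant_pos ha)).trans
    (Nat.le_mul_of_pos_right _ (rightContinuant_pos ha))
  exact (hle.trans_lt (leftContinuant_mul_rightContinuant_lt ha hi)).ne hgcd

lemma modEq_of_mul_add_eq_mul_add {m n s t u v : ℕ} (hc : m.Coprime n)
    (h : m * s + u * n = m * t + v * n) : u ≡ v [MOD m] := by
  refine Nat.ModEq.cancel_right_of_coprime hc ?_
  rw [Nat.ModEq, ← Nat.mul_add_mod m s, h, Nat.mul_add_mod]

/- The continuant of the whole list, reduced modulo those of the two ends, determines their tail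
continuants. -/
lemma eq_of_continuant_reverse_append_cons {u v u' v' : List ℕ} {b b' : ℕ} (hu : ∀ b ∈ u, 0 < b)
    (hu' : ∀ b ∈ u', 0 < b) (hv : IsCanonical v) (hv' : IsCanonical v')
    (hK : continuant (u.reverse ++ b :: v) = continuant (u'.reverse ++ b' :: v'))
    (hx : continuant u = continuant u') (hy : continuant v = continuant v')
    (hc : (continuant u).Coprime (continuant v)) (hpar : u.length % 2 = u'.length % 2) :
    u = u' ∧ b = b' ∧ v = v' := by
  simp only [continuant_reverse_append, continuant_cons, tailContinuant_cons] at hK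
  rw [← hx, ← hy] at hK
  obtain rfl : u = u' := eq_of_continuant_eq_of_modEq hu hu' hx
    (modEq_of_mul_add_eq_mul_add (s := b * continuant v + tailContinuant v)
      (t := b' * continuant v + tailContinuant v') hc hK) hpar
  obtain rfl : v = v' := by
    refine hv.eq_of_continuant_eq hv' hy (Nat.ModEq.eq_of_lt_of_lt (modEq_of_mul_add_eq_mul_add
      (s := b * continuant u + tailContinuant u) (t := b' * continuant u + tailContinuant u)
      hc.symm (by linarith)) hv.tailContinuant_lt (hy ▸ hv'.tailContinuant_lt))
  refine ⟨rfl, ?_, rfl⟩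
  exact Nat.eq_of_mul_eq_mul_right (Nat.mul_pos (continuant_pos hu) (continuant_pos hv.1))
    (by linarith)

lemma position_ext (hq : q.Prime) {a' i' : ℕ} (ha : a ∈ reducedResidues q)
    (hi : i < (cfList q a).length) (ha' : a' ∈ reducedResidues q)
    (hi' : i' < (cfList q a').length) (hx : leftContinuant q a i = leftContinuant q a' i')
    (hy : rightContinuant q a i = rightContinuant q a' i') (hpar : i % 2 = i' % 2) :
    a = a' ∧ i = i' := by
  have hlen := length_leftQuotients hi
  have hlen' := length_leftQuotients hi'
  have hK : continuant (cfList q a) = continuant (cfList q a') := by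
    rw [continuant_of_mem ha, continuant_of_mem ha']
  rw [cfList_eq_append hi, cfList_eq_append hi'] at hK
  obtain ⟨hu, hb, hv⟩ := eq_of_continuant_reverse_append_cons (leftQuotients_pos ha)
    (leftQuotients_pos ha') (isCanonical_rightQuotients ha) (isCanonical_rightQuotients ha') hK hx
    hy (coprime_leftContinuant_rightContinuant hq ha hi) (by rw [hlen, hlen', hpar])
  have hlist : cfList q a = cfList q a' := by
    rw [cfList_eq_append hi, cfList_eq_append hi', hu, hb, hv]
  refine ⟨?_, by rw [← hlen, ← hlen', hu]⟩
  rw [← (continuant_cfList (mem_reducedResidues.1 ha).2).2, hlist,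
    (continuant_cfList (mem_reducedResidues.1 ha').2).2]

lemma injOn_positionData (hq : q.Prime) : Set.InjOn (positionData q) (positions q) := by
  rintro ⟨a, i⟩ hp ⟨a', i'⟩ hp' h
  obtain ⟨ha, hi⟩ := mem_positions.1 hp
  obtain ⟨ha', hi'⟩ := mem_positions.1 hp'
  simp only [positionData, Prod.mk.injEq] at h
  obtain ⟨rfl, rfl⟩ := position_ext hq ha hi ha' hi' h.1.1 h.1.2 h.2
  rfl

lemma exists_coprime_mul_modEq {m n : ℕ} (hm : 1 < m) (hc : m.Coprime n) (hqm : q.Coprime m) :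
    ∃ r, 0 < r ∧ r < m ∧ m.Coprime r ∧ r * n ≡ q [MOD m] := by
  obtain ⟨t, -, ht⟩ := Nat.exists_mul_mod_eq_one_of_coprime hc.symm hm
  have hmod : (q * t) % m * n ≡ q [MOD m] :=
    calc (q * t) % m * n ≡ q * t * n [MOD m] := (Nat.mod_modEq _ _).mul_right n
      _ = q * (n * t) := by ring
      _ ≡ q * 1 [MOD m] := Nat.ModEq.mul_left q (by rw [Nat.ModEq, ht, Nat.mod_eq_of_lt hm])
      _ = q := mul_one q
  have hcop : m.Coprime ((q * t) % m) := by
    have h : m.Coprime ((q * t) % m * n) := by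
      rw [Nat.coprime_comm, Nat.Coprime, hmod.gcd_eq]
      exact hqm
    exact h.coprime_mul_right_right
  refine ⟨(q * t) % m, Nat.pos_of_ne_zero fun h0 => ?_, Nat.mod_lt _ (by lia), hcop, hmod⟩
  rw [h0, Nat.coprime_zero_right] at hcop
  lia

lemma exists_list_modEq_of_parity {x y par : ℕ} (hx : 0 < x) (hc : x.Coprime y)
    (hqx : q.Coprime x) (hpar : par < 2) : ∃ u : List ℕ, (∀ b ∈ u, 0 < b) ∧ continuant u = x ∧
      u.length % 2 = par ∧ tailContinuant u * y ≡ q [MOD x] := by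
  rcases Nat.lt_or_ge 1 x with h | h
  · obtain ⟨r, hr0, hrx, hcr, hmod⟩ := exists_coprime_mul_modEq h hc hqx
    obtain ⟨u, hu, hux, hur, hlen⟩ := exists_list_of_parity hr0 hrx hcr hpar
    exact ⟨u, hu, hux, hlen, hur ▸ hmod⟩
  · obtain rfl : x = 1 := by lia
    interval_cases par
    · exact ⟨[], by simp, by simp [continuant], by simp, Nat.modEq_one⟩
    · exact ⟨[1], by simp, by simp [continuant], by simp, Nat.modEq_one⟩

lemma exists_isCanonical_modEq {x y : ℕ} (hx : 0 < x) (hc : x.Coprime y) (hqx : q.Coprime x) :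
    ∃ v : List ℕ, IsCanonical v ∧ continuant v = x ∧ tailContinuant v * y ≡ q [MOD x] := by
  rcases Nat.lt_or_ge 1 x with h | h
  · obtain ⟨r, -, hrx, hcr, hmod⟩ := exists_coprime_mul_modEq h hc hqx
    exact ⟨cfList x r, isCanonical_cfList hrx hcr, (continuant_cfList hcr).1,
      (continuant_cfList hcr).2.symm ▸ hmod⟩
  · obtain rfl : x = 1 := by lia
    exact ⟨[], by simp [IsCanonical], by simp [continuant], Nat.modEq_one⟩

lemma exists_eq_mul_add {x y r s : ℕ} (hx : 0 < x) (hy : 0 < y) (hc : x.Coprime y)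
    (hxy : 4 * (x * y) ≤ q) (hr : r ≤ x) (hs : s ≤ y) (hrq : r * y ≡ q [MOD x])
    (hsq : s * x ≡ q [MOD y]) : ∃ b, 1 < b ∧ q = b * (x * y) + r * y + s * x := by
  have hry := Nat.mul_le_mul_right y hr
  have hsx := Nat.mul_le_mul_right x hs
  rw [mul_comm y x] at hsx
  have hmodx : r * y + s * x ≡ q [MOD x] := by
    simpa [Nat.ModEq] using hrq
  have hmody : r * y + s * x ≡ q [MOD y] := by
    simpa [Nat.ModEq] using hsq
  obtain ⟨b, hb⟩ := (Nat.modEq_iff_dvd' (by lia)).1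
    ((Nat.modEq_and_modEq_iff_modEq_mul hc).1 ⟨hmodx, hmody⟩)
  have hxypos := Nat.mul_pos hx hy
  refine ⟨b, ?_, by rw [mul_comm b]; lia⟩
  by_contra! hb1
  have := Nat.mul_le_mul_left (x * y) hb1
  lia

lemma exists_position {x y par : ℕ} (hx : 0 < x) (hy : 0 < y) (hc : x.Coprime y)
    (hqx : q.Coprime x) (hqy : q.Coprime y) (hxy : 4 * (x * y) ≤ q) (hpar : par < 2) :
    ∃ a ∈ reducedResidues q, ∃ i < (cfList q a).length,
      leftContinuant q a i = x ∧ rightContinuant q a i = y ∧ i % 2 = par := by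
  obtain ⟨u, hu, hux, hlen, humod⟩ := exists_list_modEq_of_parity hx hc hqx hpar
  obtain ⟨v, hv, hvy, hvmod⟩ := exists_isCanonical_modEq hy hc.symm hqy
  obtain ⟨b, hb1, hb⟩ := exists_eq_mul_add hx hy hc hxy (hux ▸ tailContinuant_le hu)
    (hvy ▸ tailContinuant_le hv.1) humod hvmod
  have hbv : IsCanonical (b :: v) := by
    refine ⟨List.forall_mem_cons.2 ⟨by lia, hv.1⟩, ?_⟩
    cases v with
    | nil => simpa using hb1.ne'
    | cons c v => simpa using hv.2
  have hl : IsCanonical (u.reverse ++ b :: v) := .append (by simpa using hu) hbv (by simp)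
  have hq : continuant (u.reverse ++ b :: v) = q := by
    rw [continuant_reverse_append, continuant_cons, tailContinuant_cons, hux, hvy, hb]
    ring
  have hcf := cfList_continuant_tailContinuant hl
  rw [hq] at hcf
  refine ⟨tailContinuant (u.reverse ++ b :: v), mem_reducedResidues.2 ⟨?_, ?_⟩, u.length, ?_,
    ?_, ?_, hlen⟩
  · exact hq ▸ hl.tailContinuant_lt
  · exact hq ▸ coprime_continuant_tailContinuant _
  · simp [hcf]
  · simp [leftContinuant, leftQuotients, hcf, hux]
  · simp [rightContinuant, rightQuotients, hcf, hvy, List.drop_append, List.drop_eq_nil_of_le]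

end Positions

/-! ### Pairs of positions in one expansion -/

/-- The triples `(a, (i, j))` with `i < j` where `a / q` is reduced and `i`, `j` are positions in
the expansion of `q / a`. -/
def positionPairs (q : ℕ) : Finset (Σ _ : ℕ, ℕ × ℕ) :=
  (reducedResidues q).sigma fun a =>
    {p ∈ range (cfList q a).length ×ˢ range (cfList q a).length | p.1 < p.2}

/-- The partial quotients of `q / a` strictly between positions `i` and `j`. -/
def middleQuotients (q a i j : ℕ) : List ℕ := ((cfList q a).drop (i + 1)).take (j - (i + 1))

section PositionPairs

variable {q a i j : ℕ}

lemma mem_positionPairs {t : Σ _ : ℕ, ℕ × ℕ} : t ∈ positionPairs q ↔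
    t.1 ∈ reducedResidues q ∧ t.2.1 < t.2.2 ∧ t.2.2 < (cfList q t.1).length := by
  simp only [positionPairs, mem_sigma, mem_filter, mem_product, mem_range]
  exact ⟨fun h => ⟨h.1, h.2.2, h.2.1.2⟩, fun h => ⟨h.1, ⟨h.2.1.trans h.2.2, h.2.2⟩, h.2.1⟩⟩

lemma middleQuotients_pos (ha : a ∈ reducedResidues q) : ∀ b ∈ middleQuotients q a i j, 0 < b :=
  fun b hb => (isCanonical_of_mem ha).1 b (List.mem_of_mem_drop (List.mem_of_mem_take hb))

lemma length_middleQuotients (hj : j < (cfList q a).length) :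
    (middleQuotients q a i j).length = j - (i + 1) := by
  rw [middleQuotients, List.length_take, List.length_drop, min_eq_left (by lia)]

lemma rightQuotients_eq_append (hij : i < j) (hj : j < (cfList q a).length) :
    rightQuotients q a i =
      middleQuotients q a i j ++ partialQuotient q a j :: rightQuotients q a j := by
  rw [rightQuotients, middleQuotients, partialQuotient, rightQuotients,
    List.getD_eq_getElem _ _ hj, List.getElem_cons_drop]
  conv_lhs => rw [← List.take_append_drop (j - (i + 1)) ((cfList q a).drop (i + 1))]
  rw [List.drop_drop, Nat.add_sub_cancel' hij]

lemma reverse_leftQuotients_eq_append (hij : i < j) (hj : j < (cfList q a).length) :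
    (leftQuotients q a j).reverse =
      (leftQuotients q a i).reverse ++ partialQuotient q a i :: middleQuotients q a i j := by
  have h := cfList_eq_append (hij.trans hj)
  rw [rightQuotients_eq_append hij hj, ← List.cons_append, ← List.append_assoc] at h
  refine (List.append_inj ((cfList_eq_append hj).symm.trans h) ?_).1
  rw [List.length_append, List.length_reverse, List.length_reverse, List.length_cons,
    length_leftQuotients hj, length_leftQuotients (hij.trans hj), length_middleQuotients hj]
  lia

lemma positionPair_ext {t t' : Σ _ : ℕ, ℕ × ℕ} (ht : t ∈ positionPairs q)
    (ht' : t' ∈ positionPairs q)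
    (hleft : leftQuotients q t.1 t.2.1 = leftQuotients q t'.1 t'.2.1)
    (hb : partialQuotient q t.1 t.2.1 = partialQuotient q t'.1 t'.2.1)
    (hmid : middleQuotients q t.1 t.2.1 t.2.2 = middleQuotients q t'.1 t'.2.1 t'.2.2)
    (hc : partialQuotient q t.1 t.2.2 = partialQuotient q t'.1 t'.2.2)
    (hright : rightQuotients q t.1 t.2.2 = rightQuotients q t'.1 t'.2.2) : t = t' := by
  obtain ⟨ha, hij, hj⟩ := mem_positionPairs.1 ht
  obtain ⟨ha', hij', hj'⟩ := mem_positionPairs.1 ht'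
  have hi : t.2.1 = t'.2.1 := by
    rw [← length_leftQuotients (hij.trans hj), ← length_leftQuotients (hij'.trans hj'), hleft]
  have hlen := congrArg List.length hmid
  rw [length_middleQuotients hj, length_middleQuotients hj'] at hlen
  refine Sigma.ext ?_ (heq_of_eq (Prod.ext hi (by lia)))
  have hlist : cfList q t.1 = cfList q t'.1 := by
    rw [cfList_eq_append (hij.trans hj), cfList_eq_append (hij'.trans hj'), hleft, hb,
      rightQuotients_eq_append hij hj, rightQuotients_eq_append hij' hj', hmid, hc, hright]
  rw [← (continuant_cfList (mem_reducedResidues.1 ha).2).2, hlist,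
    (continuant_cfList (mem_reducedResidues.1 ha').2).2]

lemma leftContinuant_mul_rightContinuant (ha : a ∈ reducedResidues q) (hij : i < j)
    (hj : j < (cfList q a).length) :
    (leftContinuant q a j * rightContinuant q a i : ℤ) =
      q * continuant (middleQuotients q a i j)
        + (-1) ^ (j - i) * (leftContinuant q a i * rightContinuant q a j) := by
  have heuler := continuant_mul_sub_continuant_mul (partialQuotient q a i) (partialQuotient q a j)
    (middleQuotients q a i j) (rightQuotients q a j)
  rw [← rightQuotients_eq_append hij hj, length_middleQuotients hj,
    show j - (i + 1) + 1 = j - i by lia] at heuler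
  have hq := continuant_of_mem ha
  rw [cfList_eq_append (hij.trans hj), continuant_reverse_append, tailContinuant_cons] at hq
  have hxj : leftContinuant q a j = continuant (leftQuotients q a i) *
      continuant (partialQuotient q a i :: middleQuotients q a i j)
      + tailContinuant (leftQuotients q a i) * continuant (middleQuotients q a i j) := by
    rw [leftContinuant, ← continuant_reverse, reverse_leftQuotients_eq_append hij hj,
      continuant_reverse_append, tailContinuant_cons]
  have hq' : (q : ℤ) = continuant (leftQuotients q a i) *
      continuant (partialQuotient q a i :: rightQuotients q a i)
      + tailContinuant (leftQuotients q a i) * continuant (rightQuotients q a i) := by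
    exact_mod_cast hq.symm
  rw [hxj, leftContinuant, rightContinuant, rightContinuant, hq']
  push_cast
  linear_combination (continuant (leftQuotients q a i) : ℤ) * heuler

lemma leftContinuant_le_leftContinuant (ha : a ∈ reducedResidues q) (hij : i < j)
    (hj : j < (cfList q a).length) : leftContinuant q a i ≤ leftContinuant q a j := by
  rw [leftContinuant, leftContinuant, ← continuant_reverse (leftQuotients q a j),
    reverse_leftQuotients_eq_append hij hj, ← continuant_reverse (leftQuotients q a i)]
  exact continuant_le_append_left _ (List.forall_mem_cons.2
    ⟨partialQuotient_pos ha (hij.trans hj), middleQuotients_pos ha⟩)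

lemma rightContinuant_le_rightContinuant (ha : a ∈ reducedResidues q) (hij : i < j)
    (hj : j < (cfList q a).length) : rightContinuant q a j ≤ rightContinuant q a i := by
  rw [rightContinuant, rightContinuant, rightQuotients_eq_append hij hj, List.append_cons]
  refine continuant_le_append_right (List.forall_mem_append.2 ⟨middleQuotients_pos ha, ?_⟩) _
  simpa using partialQuotient_pos ha hj

lemma continuant_sq_le_or_continuant_sq_le (u v : List ℕ) {w : List ℕ} (hw : ∀ b ∈ w, 0 < b) :
    continuant u ^ 2 ≤ continuant (u ++ w ++ v) ∨ continuant v ^ 2 ≤ continuant (u ++ w ++ v) := by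
  have h := (Nat.mul_le_mul_right _ (continuant_le_append_left u hw)).trans
    (continuant_mul_le_append (u ++ w) v)
  by_contra! hlt
  nlinarith [Nat.mul_lt_mul'' hlt.1 hlt.2, Nat.mul_le_mul h h]

lemma continuant_left_sq_le_or_continuant_right_sq_le (ha : a ∈ reducedResidues q) (hij : i < j)
    (hj : j < (cfList q a).length) :
    continuant (partialQuotient q a i :: leftQuotients q a i) ^ 2 ≤ q ∨
      continuant (partialQuotient q a j :: rightQuotients q a j) ^ 2 ≤ q := by
  have h := continuant_sq_le_or_continuant_sq_le
    (partialQuotient q a i :: leftQuotients q a i).reverse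
    (partialQuotient q a j :: rightQuotients q a j) (middleQuotients_pos (i := i) (j := j) ha)
  rw [continuant_reverse, List.append_assoc, ← rightQuotients_eq_append hij hj, List.reverse_cons,
    List.append_assoc, List.singleton_append, ← cfList_eq_append (hij.trans hj),
    continuant_of_mem ha] at h
  exact h

end PositionPairs

/-! ### Pairs of positions on one side of the middle -/

/-- A majorant, up to a constant factor, of the summand of `fpm` at a partial quotient `b`. -/
noncomputable def weight (b : ℕ) : ℝ := √b * (1 + log b)

lemma weight_nonneg (b : ℕ) : 0 ≤ weight b := by
  have := log_natCast_nonneg b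
  unfold weight
  positivity

lemma one_add_log_le {t : ℝ} (ht : 0 < t) : 1 + log t ≤ 4 * t ^ (1 / 4 : ℝ) := by
  have h := log_le_sub_one_of_pos (rpow_pos_of_pos ht (1 / 4 : ℝ))
  rw [log_rpow ht] at h
  linarith

lemma weight_le_rpow {b : ℕ} (hb : 0 < b) : weight b ≤ 4 * (b : ℝ) ^ (3 / 4 : ℝ) := by
  have hb' : (0 : ℝ) < b := by exact_mod_cast hb
  calc √b * (1 + log b) ≤ √b * (4 * (b : ℝ) ^ (1 / 4 : ℝ)) :=
        mul_le_mul_of_nonneg_left (one_add_log_le hb') (sqrt_nonneg _)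
    _ = 4 * ((b : ℝ) ^ (1 / 2 : ℝ) * (b : ℝ) ^ (1 / 4 : ℝ)) := by rw [sqrt_eq_rpow]; ring
    _ = 4 * (b : ℝ) ^ (3 / 4 : ℝ) := by rw [← rpow_add hb']; norm_num

lemma exists_sum_weight_div_sq_le : ∃ C : ℝ, 0 < C ∧ ∀ S : Finset ℕ, (∀ b ∈ S, 0 < b) →
    ∑ b ∈ S, weight b / (b : ℝ) ^ 2 ≤ C := by
  have hs : Summable fun n : ℕ => 4 * (n : ℝ) ^ (-(5 / 4) : ℝ) :=
    (summable_nat_rpow.2 (by norm_num)).mul_left 4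
  have hnonneg : ∀ n : ℕ, 0 ≤ 4 * (n : ℝ) ^ (-(5 / 4) : ℝ) := fun n => by positivity
  have htsum : 0 ≤ ∑' n : ℕ, 4 * (n : ℝ) ^ (-(5 / 4) : ℝ) := tsum_nonneg hnonneg
  refine ⟨∑' n : ℕ, 4 * (n : ℝ) ^ (-(5 / 4) : ℝ) + 1, by linarith, fun S hS => ?_⟩
  have hterm : ∀ b ∈ S, weight b / (b : ℝ) ^ 2 ≤ 4 * (b : ℝ) ^ (-(5 / 4) : ℝ) := by
    intro b hb
    have hb' : (0 : ℝ) < b := by exact_mod_cast hS b hb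
    rw [div_le_iff₀ (by positivity), mul_assoc, ← rpow_natCast, ← rpow_add hb']
    refine (weight_le_rpow (hS b hb)).trans_eq ?_
    norm_num
  linarith [sum_le_sum hterm, hs.sum_le_tsum S fun n _ => hnonneg n]

lemma sum_one_div_le (N : ℕ) : ∑ x ∈ Icc 1 N, 1 / (x : ℝ) ≤ 1 + log N := by
  have h := harmonic_le_one_add_log N
  rw [harmonic_eq_sum_Icc] at h
  push_cast at h
  simpa only [one_div] using h

lemma card_continuant_eq_le {S : Finset (List ℕ)} {x : ℕ} (hS : ∀ l ∈ S, ∀ b ∈ l, 0 < b)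
    (hx : ∀ l ∈ S, continuant l = x) : #S ≤ 2 * (x + 1) := by
  have h := card_le_card_of_injOn (s := S) (t := range (x + 1) ×ˢ range 2)
    (fun l => (tailContinuant l, l.length % 2)) (fun l hl => ?_) fun l hl l' hl' heq => ?_
  · rwa [card_product, card_range, card_range, mul_comm] at h
  · exact mem_product.2 ⟨mem_range.2 (Nat.lt_succ_of_le (hx l hl ▸ tailContinuant_le (hS l hl))),
      mem_range.2 (Nat.mod_lt _ two_pos)⟩
  · obtain ⟨htail, hpar⟩ := Prod.mk.inj heq
    exact eq_of_continuant_eq_of_modEq (hS l hl) (hS l' hl') ((hx l hl).trans (hx l' hl').symm)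
      (congrArg (· % continuant l) htail) hpar

lemma sum_one_div_continuant_sq_le {N : ℕ} {S : Finset (List ℕ)} (hS : ∀ l ∈ S, ∀ b ∈ l, 0 < b)
    (hN : ∀ l ∈ S, continuant l ≤ N) :
    ∑ l ∈ S, 1 / (continuant l : ℝ) ^ 2 ≤ 4 * (1 + log N) := by
  have hmaps : ∀ l ∈ S, continuant l ∈ Icc 1 N := fun l hl =>
    mem_Icc.2 ⟨continuant_pos (hS l hl), hN l hl⟩
  have hfiber : ∀ x ∈ Icc 1 N,
      ∑ l ∈ S with continuant l = x, 1 / (continuant l : ℝ) ^ 2 ≤ 4 * (1 / (x : ℝ)) := by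
    intro x hx
    have hx1 : (1 : ℝ) ≤ x := by exact_mod_cast (mem_Icc.1 hx).1
    have hcard : (#{l ∈ S | continuant l = x} : ℝ) ≤ 2 * (x + 1) := by
      exact_mod_cast card_continuant_eq_le (fun l hl => hS l (mem_filter.1 hl).1)
        fun l hl => (mem_filter.1 hl).2
    calc ∑ l ∈ S with continuant l = x, 1 / (continuant l : ℝ) ^ 2
        = #{l ∈ S | continuant l = x} * (1 / (x : ℝ) ^ 2) := by
          rw [sum_congr rfl fun l hl => by rw [(mem_filter.1 hl).2], sum_const, nsmul_eq_mul]
      _ ≤ 2 * (x + x) * (1 / (x : ℝ) ^ 2) := by gcongr; linarith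
      _ = 4 * (1 / (x : ℝ)) := by field_simp; ring
  calc ∑ l ∈ S, 1 / (continuant l : ℝ) ^ 2
      = ∑ x ∈ Icc 1 N, ∑ l ∈ S with continuant l = x, 1 / (continuant l : ℝ) ^ 2 :=
        (sum_fiberwise_of_maps_to hmaps _).symm
    _ ≤ ∑ x ∈ Icc 1 N, 4 * (1 / (x : ℝ)) := sum_le_sum hfiber
    _ ≤ 4 * (1 + log N) := by rw [← mul_sum]; linarith [sum_one_div_le N]

lemma eq_of_continuant_mul_add_eq {q Y Y' : ℕ} {u u' : List ℕ} (hY : 0 < Y) (hc : Y.Coprime Y')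
    (hu : ∀ b ∈ u, 0 < b) (hu' : ∀ b ∈ u', 0 < b)
    (hq : continuant u * Y + tailContinuant u * Y' = q)
    (hq' : continuant u' * Y + tailContinuant u' * Y' = q)
    (hdiv : tailContinuant u / Y = tailContinuant u' / Y)
    (hpar : u.length % 2 = u'.length % 2) : u = u' := by
  have hmod : tailContinuant u ≡ tailContinuant u' [MOD Y] :=
    modEq_of_mul_add_eq_mul_add hc (s := continuant u) (t := continuant u') (by linarith)
  have htail : tailContinuant u = tailContinuant u' := by
    rw [← Nat.div_add_mod (tailContinuant u) Y, hdiv, hmod, Nat.div_add_mod]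
  refine eq_of_continuant_eq_of_modEq hu hu' (Nat.eq_of_mul_eq_mul_right hY ?_)
    (congrArg (· % continuant u) htail) hpar
  rw [htail] at hq
  lia

lemma card_continuant_mul_add_eq_le {q Y Y' : ℕ} (hY : 0 < Y) (hYq : Y ^ 2 ≤ q)
    (hc : Y.Coprime Y') {U : Finset (List ℕ)} (hU : ∀ u ∈ U, ∀ b ∈ u, 0 < b)
    (hq : ∀ u ∈ U, continuant u * Y + tailContinuant u * Y' = q) :
    (#U : ℝ) ≤ 4 * q / (Y : ℝ) ^ 2 := by
  have hcard := card_le_card_of_injOn (s := U) (t := range (q / Y ^ 2 + 1) ×ˢ range 2)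
    (fun u => (tailContinuant u / Y, u.length % 2)) (fun u hu => mem_product.2 ⟨?_, ?_⟩)
    fun u hu u' hu' heq => eq_of_continuant_mul_add_eq hY hc (hU u hu) (hU u' hu') (hq u hu)
      (hq u' hu') (Prod.mk.inj heq).1 (Prod.mk.inj heq).2
  · have hY0 : (0 : ℝ) < (Y : ℝ) ^ 2 := by positivity
    have hone : 1 ≤ q / (Y : ℝ) ^ 2 := by rw [one_le_div hY0]; exact_mod_cast hYq
    have hfloor : ((q / Y ^ 2 : ℕ) : ℝ) ≤ q / (Y : ℝ) ^ 2 := by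
      exact_mod_cast Nat.cast_div_le (α := ℝ) (m := q) (n := Y ^ 2)
    rw [card_product, card_range, card_range] at hcard
    calc (#U : ℝ) ≤ ((q / Y ^ 2 : ℕ) + 1) * 2 := by exact_mod_cast hcard
      _ ≤ 4 * q / (Y : ℝ) ^ 2 := by rw [mul_div_assoc]; linarith
  · rw [mem_range, Nat.lt_succ_iff, pow_two, ← Nat.div_div_eq_div_mul]
    refine Nat.div_le_div_right ((Nat.le_div_iff_mul_le hY).2 ?_)
    nlinarith [tailContinuant_le (hU u hu), hq u hu]
  · exact mem_range.2 (Nat.mod_lt _ two_pos)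

/-- The list `b, w, c, z` with two distinguished entries `b` and `c`, given by `(b, w, c, z)`. -/
def markedList (t : ℕ × List ℕ × ℕ × List ℕ) : List ℕ := t.1 :: (t.2.1 ++ t.2.2.1 :: t.2.2.2)

lemma forall_mem_markedList {t : ℕ × List ℕ × ℕ × List ℕ} {p : ℕ → Prop} :
    (∀ b ∈ markedList t, p b) ↔
      p t.1 ∧ (∀ b ∈ t.2.1, p b) ∧ p t.2.2.1 ∧ ∀ b ∈ t.2.2.2, p b := by
  simp only [markedList, List.forall_mem_cons, List.forall_mem_append]

lemma mul_le_continuant_markedList (t : ℕ × List ℕ × ℕ × List ℕ) :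
    t.1 * continuant t.2.1 * (t.2.2.1 * continuant t.2.2.2) ≤ continuant (markedList t) := by
  refine le_trans (Nat.mul_le_mul ?_ ?_)
    (continuant_mul_le_append (t.1 :: t.2.1) (t.2.2.1 :: t.2.2.2))
  all_goals rw [continuant_cons]; exact Nat.le_add_right _ _

lemma continuant_le_continuant_markedList {t : ℕ × List ℕ × ℕ × List ℕ}
    (ht : ∀ b ∈ markedList t, 0 < b) : continuant t.2.1 ≤ continuant (markedList t) ∧
      continuant t.2.2.2 ≤ continuant (markedList t) := by
  obtain ⟨hb, hw, hc, hz⟩ := forall_mem_markedList.1 ht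
  have hmul := mul_le_continuant_markedList t
  have hbw := Nat.mul_pos hb (continuant_pos hw)
  have hcz := Nat.mul_pos hc (continuant_pos hz)
  exact ⟨by nlinarith, by nlinarith⟩

lemma sum_le_prod_sum_image {P : Finset (ℕ × List ℕ × ℕ × List ℕ)} {f : ℕ → ℝ} {g : List ℕ → ℝ}
    (hf : ∀ b, 0 ≤ f b) (hg : ∀ l, 0 ≤ g l) :
    ∑ t ∈ P, f t.1 * (g t.2.1 * (f t.2.2.1 * g t.2.2.2)) ≤
      (∑ b ∈ P.image (·.1), f b) * ((∑ w ∈ P.image (·.2.1), g w) *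
        ((∑ c ∈ P.image (·.2.2.1), f c) * ∑ z ∈ P.image (·.2.2.2), g z)) := by
  rw [sum_mul_sum (P.image (·.2.2.1)), ← sum_product', sum_mul_sum (P.image (·.2.1)),
    ← sum_product', sum_mul_sum (P.image (·.1)), ← sum_product']
  refine sum_le_sum_of_subset_of_nonneg (fun t ht => ?_) fun t _ _ =>
    mul_nonneg (hf _) (mul_nonneg (hg _) (mul_nonneg (hf _) (hg _)))
  simp only [mem_product]
  exact ⟨mem_image_of_mem _ ht, mem_image_of_mem (·.2.1) ht, mem_image_of_mem (·.2.2.1) ht,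
    mem_image_of_mem (·.2.2.2) ht⟩

lemma weight_div_continuant_markedList_sq_le {t : ℕ × List ℕ × ℕ × List ℕ}
    (ht : ∀ b ∈ markedList t, 0 < b) :
    weight t.1 * weight t.2.2.1 / (continuant (markedList t) : ℝ) ^ 2 ≤
      weight t.1 / (t.1 : ℝ) ^ 2 * (1 / (continuant t.2.1 : ℝ) ^ 2 *
        (weight t.2.2.1 / (t.2.2.1 : ℝ) ^ 2 * (1 / (continuant t.2.2.2 : ℝ) ^ 2))) := by
  obtain ⟨hb, hw, hc, hz⟩ := forall_mem_markedList.1 ht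
  have hw' : (0 : ℝ) < continuant t.2.1 := by exact_mod_cast continuant_pos hw
  have hz' : (0 : ℝ) < continuant t.2.2.2 := by exact_mod_cast continuant_pos hz
  have hK : (t.1 * continuant t.2.1 * (t.2.2.1 * continuant t.2.2.2) : ℝ) ≤
      continuant (markedList t) := by exact_mod_cast mul_le_continuant_markedList t
  calc weight t.1 * weight t.2.2.1 / (continuant (markedList t) : ℝ) ^ 2
      ≤ weight t.1 * weight t.2.2.1 /
          (t.1 * continuant t.2.1 * (t.2.2.1 * continuant t.2.2.2) : ℝ) ^ 2 := by
        have := mul_nonneg (weight_nonneg t.1) (weight_nonneg t.2.2.1)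
        gcongr
    _ = _ := by field_simp

lemma exists_sum_weight_div_continuant_sq_le : ∃ C : ℝ, 0 < C ∧
    ∀ (N : ℕ) (P : Finset (ℕ × List ℕ × ℕ × List ℕ)), (∀ t ∈ P, ∀ b ∈ markedList t, 0 < b) →
      (∀ t ∈ P, continuant (markedList t) ≤ N) →
      ∑ t ∈ P, weight t.1 * weight t.2.2.1 / (continuant (markedList t) : ℝ) ^ 2 ≤
        C * (1 + log N) ^ 2 := by
  obtain ⟨C, hC, hsum⟩ := exists_sum_weight_div_sq_le
  refine ⟨16 * C ^ 2, by positivity, fun N P hpos hN => ?_⟩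
  have hf : ∀ b : ℕ, 0 ≤ weight b / (b : ℝ) ^ 2 := fun b =>
    div_nonneg (weight_nonneg b) (by positivity)
  have hg : ∀ l : List ℕ, 0 ≤ 1 / (continuant l : ℝ) ^ 2 := fun l => by positivity
  have hpart := fun t ht => forall_mem_markedList.1 (hpos t ht)
  have hle := fun t ht => continuant_le_continuant_markedList (hpos t ht)
  have hsum_b := hsum (P.image (·.1)) (forall_mem_image.2 fun t ht => (hpart t ht).1)
  have hsum_l := sum_one_div_continuant_sq_le (S := P.image (·.2.1)) (N := N)
    (forall_mem_image.2 fun t ht => (hpart t ht).2.1)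
    (forall_mem_image.2 fun t ht => (hle t ht).1.trans (hN t ht))
  have hsum_c := hsum (P.image (·.2.2.1)) (forall_mem_image.2 fun t ht => (hpart t ht).2.2.1)
  have hsum_z := sum_one_div_continuant_sq_le (S := P.image (·.2.2.2)) (N := N)
    (forall_mem_image.2 fun t ht => (hpart t ht).2.2.2)
    (forall_mem_image.2 fun t ht => (hle t ht).2.trans (hN t ht))
  calc _ ≤ _ := sum_le_sum fun t ht => weight_div_continuant_markedList_sq_le (hpos t ht)
    _ ≤ _ := sum_le_prod_sum_image hf hg
    _ ≤ C * (4 * (1 + log N) * (C * (4 * (1 + log N)))) :=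
        mul_le_mul hsum_b (mul_le_mul hsum_l
          (mul_le_mul hsum_c hsum_z (sum_nonneg fun l _ => hg l) hC.le)
          (mul_nonneg (sum_nonneg fun b _ => hf b) (sum_nonneg fun l _ => hg l)) (by positivity))
          (mul_nonneg (sum_nonneg fun l _ => hg l)
            (mul_nonneg (sum_nonneg fun b _ => hf b) (sum_nonneg fun l _ => hg l))) hC.le
    _ = 16 * C ^ 2 * (1 + log N) ^ 2 := by ring

/-- Once the marked list `s` is fixed, the complementary list `u` is counted by
`card_continuant_mul_add_eq_le`. -/
lemma exists_sum_weight_mul_weight_le : ∃ C : ℝ, 0 < C ∧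
    ∀ (q : ℕ) (A : Finset ((ℕ × List ℕ × ℕ × List ℕ) × List ℕ)),
      (∀ t ∈ A, (∀ b ∈ markedList t.1, 0 < b) ∧ (∀ b ∈ t.2, 0 < b) ∧
        continuant (markedList t.1) ^ 2 ≤ q ∧ continuant t.2 * continuant (markedList t.1)
          + tailContinuant t.2 * tailContinuant (markedList t.1) = q) →
      ∑ t ∈ A, weight t.1.1 * weight t.1.2.2.1 ≤ C * q * (1 + log q) ^ 2 := by
  obtain ⟨C, hC, hsum⟩ := exists_sum_weight_div_continuant_sq_le
  refine ⟨4 * C, by positivity, fun q A hA => ?_⟩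
  have hP : ∀ s ∈ A.image Prod.fst, (∀ b ∈ markedList s, 0 < b) ∧
      continuant (markedList s) ^ 2 ≤ q := by
    simpa only [forall_mem_image] using fun t ht => ⟨(hA t ht).1, (hA t ht).2.2.1⟩
  have hcard : ∀ s ∈ A.image Prod.fst,
      (#{t ∈ A | t.1 = s} : ℝ) ≤ 4 * q / (continuant (markedList s) : ℝ) ^ 2 := by
    intro s hs
    have himage : #(image Prod.snd {t ∈ A | t.1 = s}) = #{t ∈ A | t.1 = s} :=
      card_image_of_injOn fun t ht t' ht' heq =>
        Prod.ext ((mem_filter.1 ht).2.trans (mem_filter.1 ht').2.symm) heq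
    rw [← himage]
    refine card_continuant_mul_add_eq_le (continuant_pos (hP s hs).1) (hP s hs).2
      (coprime_continuant_tailContinuant _) ?_ ?_
    all_goals
      simp only [forall_mem_image, mem_filter]
      rintro t ⟨ht, rfl⟩
    · exact (hA t ht).2.1
    · exact (hA t ht).2.2.2
  calc ∑ t ∈ A, weight t.1.1 * weight t.1.2.2.1
      = ∑ s ∈ A.image Prod.fst, #{t ∈ A | t.1 = s} * (weight s.1 * weight s.2.2.1) := by
        simp only [sum_comp (fun s : ℕ × List ℕ × ℕ × List ℕ => weight s.1 * weight s.2.2.1),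
          nsmul_eq_mul]
    _ ≤ ∑ s ∈ A.image Prod.fst, 4 * q / (continuant (markedList s) : ℝ) ^ 2
          * (weight s.1 * weight s.2.2.1) := sum_le_sum fun s hs =>
        mul_le_mul_of_nonneg_right (hcard s hs) (mul_nonneg (weight_nonneg _) (weight_nonneg _))
    _ = 4 * q * ∑ s ∈ A.image Prod.fst,
          weight s.1 * weight s.2.2.1 / (continuant (markedList s) : ℝ) ^ 2 := by
        rw [mul_sum]
        exact sum_congr rfl fun s _ => by ring
    _ ≤ 4 * q * (C * (1 + log q) ^ 2) := by
        refine mul_le_mul_of_nonneg_left (hsum q _ (fun s hs => (hP s hs).1) fun s hs => ?_)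
          (by positivity)
        exact (Nat.le_self_pow two_ne_zero _).trans (hP s hs).2
    _ = 4 * C * q * (1 + log q) ^ 2 := by ring

lemma cons_rightQuotients_eq_markedList {q a i j : ℕ} (hij : i < j)
    (hj : j < (cfList q a).length) :
    partialQuotient q a i :: rightQuotients q a i = markedList (partialQuotient q a i,
      middleQuotients q a i j, partialQuotient q a j, rightQuotients q a j) := by
  rw [markedList, ← rightQuotients_eq_append hij hj]

lemma cons_leftQuotients_eq_markedList {q a i j : ℕ} (hij : i < j)
    (hj : j < (cfList q a).length) :
    partialQuotient q a j :: leftQuotients q a j = markedList (partialQuotient q a j,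
      (middleQuotients q a i j).reverse, partialQuotient q a i, leftQuotients q a i) := by
  rw [markedList, ← List.reverse_reverse (leftQuotients q a j),
    reverse_leftQuotients_eq_append hij hj, List.reverse_append, List.reverse_cons,
    List.reverse_reverse, List.append_assoc, List.singleton_append]

lemma exists_sum_right_pairs_le : ∃ C : ℝ, 0 < C ∧ ∀ q : ℕ,
    ∑ t ∈ positionPairs q with
        continuant (partialQuotient q t.1 t.2.1 :: rightQuotients q t.1 t.2.1) ^ 2 ≤ q,
      weight (partialQuotient q t.1 t.2.1) * weight (partialQuotient q t.1 t.2.2)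
        ≤ C * q * (1 + log q) ^ 2 := by
  obtain ⟨C, hC, hsum⟩ := exists_sum_weight_mul_weight_le
  refine ⟨C, hC, fun q => ?_⟩
  have h := hsum q (image (fun t : Σ _ : ℕ, ℕ × ℕ => ((partialQuotient q t.1 t.2.1,
      middleQuotients q t.1 t.2.1 t.2.2, partialQuotient q t.1 t.2.2,
      rightQuotients q t.1 t.2.2), leftQuotients q t.1 t.2.1))
    {t ∈ positionPairs q |
      continuant (partialQuotient q t.1 t.2.1 :: rightQuotients q t.1 t.2.1) ^ 2 ≤ q})
    (forall_mem_image.2 fun t ht => ?_)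
  · rwa [sum_image fun t ht t' ht' heq => ?_] at h
    simp only [Prod.mk.injEq] at heq
    obtain ⟨⟨hb, hmid, hc, hright⟩, hleft⟩ := heq
    exact positionPair_ext (mem_filter.1 ht).1 (mem_filter.1 ht').1 hleft hb hmid hc hright
  · obtain ⟨ht, hle⟩ := mem_filter.1 ht
    obtain ⟨ha, hij, hj⟩ := mem_positionPairs.1 ht
    rw [← cons_rightQuotients_eq_markedList hij hj]
    refine ⟨(isCanonical_cons_rightQuotients ha (hij.trans hj)).1, leftQuotients_pos ha, hle, ?_⟩
    rw [← continuant_reverse_append, ← cfList_eq_append (hij.trans hj), continuant_of_mem ha]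

lemma exists_sum_left_pairs_le : ∃ C : ℝ, 0 < C ∧ ∀ q : ℕ,
    ∑ t ∈ positionPairs q with
        continuant (partialQuotient q t.1 t.2.2 :: leftQuotients q t.1 t.2.2) ^ 2 ≤ q,
      weight (partialQuotient q t.1 t.2.1) * weight (partialQuotient q t.1 t.2.2)
        ≤ C * q * (1 + log q) ^ 2 := by
  obtain ⟨C, hC, hsum⟩ := exists_sum_weight_mul_weight_le
  refine ⟨C, hC, fun q => ?_⟩
  have h := hsum q (image (fun t : Σ _ : ℕ, ℕ × ℕ => ((partialQuotient q t.1 t.2.2,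
      (middleQuotients q t.1 t.2.1 t.2.2).reverse, partialQuotient q t.1 t.2.1,
      leftQuotients q t.1 t.2.1), rightQuotients q t.1 t.2.2))
    {t ∈ positionPairs q |
      continuant (partialQuotient q t.1 t.2.2 :: leftQuotients q t.1 t.2.2) ^ 2 ≤ q})
    (forall_mem_image.2 fun t ht => ?_)
  · rw [sum_image fun t ht t' ht' heq => ?_] at h
    · exact (sum_congr rfl fun t _ => mul_comm _ _).trans_le h
    · simp only [Prod.mk.injEq, List.reverse_inj] at heq
      obtain ⟨⟨hc, hmid, hb, hleft⟩, hright⟩ := heq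
      exact positionPair_ext (mem_filter.1 ht).1 (mem_filter.1 ht').1 hleft hb hmid hc hright
  · obtain ⟨ht, hle⟩ := mem_filter.1 ht
    obtain ⟨ha, hij, hj⟩ := mem_positionPairs.1 ht
    rw [← cons_leftQuotients_eq_markedList hij hj]
    refine ⟨List.forall_mem_cons.2 ⟨partialQuotient_pos ha hj, leftQuotients_pos ha⟩,
      (isCanonical_rightQuotients ha).1, hle, ?_⟩
    have hq := continuant_of_mem ha
    rw [cfList_eq_append hj, List.append_cons, ← List.reverse_cons,
      continuant_reverse_append] at hq
    linarith

/-! ### Sums over positions with small or large partial quotients -/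

lemma sum_positions_le {q : ℕ} (hq : q.Prime) {S : Finset (Σ _ : ℕ, ℕ)} (hS : S ⊆ positions q)
    {W : Finset (ℕ × ℕ)} {F : ℕ × ℕ → ℝ} (hF : ∀ w ∈ W, 0 ≤ F w)
    (hW : ∀ p ∈ S, (leftContinuant q p.1 p.2, rightContinuant q p.1 p.2) ∈ W) :
    ∑ p ∈ S, F (leftContinuant q p.1 p.2, rightContinuant q p.1 p.2) ≤ 2 * ∑ w ∈ W, F w := by
  calc ∑ p ∈ S, F (leftContinuant q p.1 p.2, rightContinuant q p.1 p.2)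
      = ∑ z ∈ S.image (positionData q), F z.1 :=
        (sum_image (f := fun z => F z.1) ((injOn_positionData hq).mono hS)).symm
    _ ≤ ∑ z ∈ W ×ˢ range 2, F z.1 :=
        sum_le_sum_of_subset_of_nonneg
          (image_subset_iff.2 fun p hp =>
            mem_product.2 ⟨hW p hp, mem_range.2 (Nat.mod_lt _ two_pos)⟩)
          fun z hz _ => hF _ (mem_product.1 hz).1
    _ = 2 * ∑ w ∈ W, F w := by
        rw [sum_product, mul_sum]
        simp only [sum_const, card_range, nsmul_eq_mul, Nat.cast_ofNat]

lemma one_div_add_one_le_log_sub_log {n : ℕ} (hn : 0 < n) :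
    1 / ((n : ℝ) + 1) ≤ log (n + 1) - log n := by
  have h := one_sub_inv_le_log_of_pos (x := ((n : ℝ) + 1) / n) (by positivity)
  rw [log_div (by positivity) (by positivity)] at h
  refine le_of_eq_of_le ?_ h
  field_simp
  ring

lemma sum_Icc_one_div_le {m n : ℕ} (hm : 0 < m) (hmn : m ≤ n) :
    ∑ y ∈ Icc m n, 1 / (y : ℝ) ≤ 1 + (log n - log m) := by
  induction n, hmn using Nat.le_induction with
  | base =>
    have hm' : (1 : ℝ) ≤ m := by exact_mod_cast hm
    rw [Icc_self, sum_singleton, sub_self, add_zero]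
    exact (div_le_one (by positivity)).2 hm'
  | succ n hmn ih =>
    rw [sum_Icc_succ_top (by lia)]
    have h := one_div_add_one_le_log_sub_log (hm.trans_le hmn)
    push_cast
    linarith

lemma sum_one_div_le_of_forall_le_mul {S : Finset ℕ} (hS : ∀ y ∈ S, 0 < y) {r : ℝ} (hr : 1 ≤ r)
    (h : ∀ y ∈ S, ∀ z ∈ S, (z : ℝ) ≤ r * y) : ∑ y ∈ S, 1 / (y : ℝ) ≤ 1 + log r := by
  rcases S.eq_empty_or_nonempty with rfl | hne
  · rw [sum_empty]
    linarith [log_nonneg hr]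
  have hmin := S.min'_mem hne
  have hmax := S.max'_mem hne
  have hmin_pos : (0 : ℝ) < S.min' hne := by exact_mod_cast hS _ hmin
  have hmax_pos : (0 : ℝ) < S.max' hne := by exact_mod_cast hS _ hmax
  have hlog := log_le_log hmax_pos (h _ hmin _ hmax)
  rw [log_mul (by positivity) (by positivity)] at hlog
  calc ∑ y ∈ S, 1 / (y : ℝ)
      ≤ ∑ y ∈ Icc (S.min' hne) (S.max' hne), 1 / (y : ℝ) :=
        sum_le_sum_of_subset_of_nonneg
          (fun y hy => mem_Icc.2 ⟨S.min'_le y hy, S.le_max' y hy⟩) fun _ _ _ => by positivity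
    _ ≤ 1 + (log (S.max' hne) - log (S.min' hne)) :=
        sum_Icc_one_div_le (hS _ hmin) (S.min'_le _ hmax)
    _ ≤ 1 + log r := by linarith

lemma sum_one_div_mul_le (N : ℕ) :
    ∑ w ∈ Icc 1 N ×ˢ Icc 1 N, 1 / ((w.1 : ℝ) * w.2) ≤ (1 + log N) ^ 2 := by
  have hnonneg : 0 ≤ ∑ x ∈ Icc 1 N, 1 / (x : ℝ) := sum_nonneg fun _ _ => by positivity
  simp only [sum_product, ← one_div_mul_one_div, ← sum_mul_sum, ← pow_two]
  exact pow_le_pow_left₀ hnonneg (sum_one_div_le N) 2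

lemma sum_one_div_mul_of_mul_le_of_le_mul (N : ℕ) {r Z : ℝ} (hr : 1 ≤ r) :
    ∑ w ∈ Icc 1 N ×ˢ Icc 1 N with (w.1 : ℝ) * w.2 ≤ Z ∧ Z ≤ r * (w.1 * w.2),
      1 / ((w.1 : ℝ) * w.2) ≤ (1 + log N) * (1 + log r) := by
  have hinner : ∀ x ∈ Icc 1 N, ∑ y ∈ Icc 1 N with (x : ℝ) * (y : ℕ) ≤ Z ∧ Z ≤ r * (x * (y : ℕ)),
      1 / (y : ℝ) ≤ 1 + log r := by
    intro x hx
    have hx' : (0 : ℝ) < x := by exact_mod_cast (mem_Icc.1 hx).1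
    refine sum_one_div_le_of_forall_le_mul (fun y hy => (mem_Icc.1 (mem_filter.1 hy).1).1) hr
      fun y hy z hz => le_of_mul_le_mul_left ?_ hx'
    linarith [(mem_filter.1 hy).2.2, (mem_filter.1 hz).2.1]
  calc ∑ w ∈ Icc 1 N ×ˢ Icc 1 N with (w.1 : ℝ) * w.2 ≤ Z ∧ Z ≤ r * (w.1 * w.2),
        1 / ((w.1 : ℝ) * w.2)
      = ∑ x ∈ Icc 1 N, 1 / (x : ℝ) *
          ∑ y ∈ Icc 1 N with (x : ℝ) * (y : ℕ) ≤ Z ∧ Z ≤ r * (x * (y : ℕ)), 1 / (y : ℝ) := by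
        simp only [sum_filter, sum_product, mul_sum, mul_ite, mul_zero, one_div_mul_one_div]
    _ ≤ ∑ x ∈ Icc 1 N, 1 / (x : ℝ) * (1 + log r) := by
        gcongr with x hx
        exact hinner x hx
    _ ≤ (1 + log N) * (1 + log r) := by
        rw [← sum_mul]
        have := log_nonneg hr
        gcongr
        exact sum_one_div_le N

section

variable {q a i : ℕ} {T : ℝ}

lemma leftContinuant_rightContinuant_mem_Icc (ha : a ∈ reducedResidues q)
    (hi : i < (cfList q a).length) :
    (leftContinuant q a i, rightContinuant q a i) ∈ Icc 1 q ×ˢ Icc 1 q := by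
  have hx := leftContinuant_pos (i := i) ha
  have hy := rightContinuant_pos (i := i) ha
  have hxy := leftContinuant_mul_rightContinuant_lt ha hi
  exact mem_product.2 ⟨mem_Icc.2 ⟨hx, by nlinarith⟩, mem_Icc.2 ⟨hy, by nlinarith⟩⟩

lemma partialQuotient_le_mul_one_div (ha : a ∈ reducedResidues q)
    (hi : i < (cfList q a).length) : (partialQuotient q a i : ℝ) ≤
      q * (1 / ((leftContinuant q a i : ℝ) * rightContinuant q a i)) := by
  have hx : (0 : ℝ) < leftContinuant q a i := by exact_mod_cast leftContinuant_pos ha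
  have hy : (0 : ℝ) < rightContinuant q a i := by exact_mod_cast rightContinuant_pos ha
  rw [mul_one_div, le_div_iff₀ (by positivity)]
  exact_mod_cast partialQuotient_mul_le ha hi

lemma weight_le_of_pow_le {b : ℕ} (hT : 1 ≤ T) (hb : T ^ 8 ≤ b) : weight b ≤ 4 * (b / T ^ 2) := by
  have hT0 : 0 < T := by linarith
  have hb0 : (0 : ℝ) < b := (pow_pos hT0 8).trans_le hb
  have hroot : T ^ 2 ≤ (b : ℝ) ^ (1 / 4 : ℝ) := by
    refine le_of_eq_of_le ?_ (rpow_le_rpow (by positivity) hb (by norm_num : (0 : ℝ) ≤ 1 / 4))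
    rw [← rpow_natCast T 8, ← rpow_mul hT0.le, ← rpow_natCast T 2]
    norm_num
  refine (weight_le_rpow (by exact_mod_cast hb0)).trans ?_
  gcongr
  rw [le_div_iff₀ (by positivity)]
  calc (b : ℝ) ^ (3 / 4 : ℝ) * T ^ 2 ≤ (b : ℝ) ^ (3 / 4 : ℝ) * (b : ℝ) ^ (1 / 4 : ℝ) := by gcongr
    _ = b := by rw [← rpow_add hb0]; norm_num

lemma sum_weight_large_le (hq : q.Prime) (hT : 1 ≤ T) :
    ∑ p ∈ positions q with T ^ 8 < partialQuotient q p.1 p.2, weight (partialQuotient q p.1 p.2)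
      ≤ 8 * q * (1 + log q) ^ 2 / T ^ 2 := by
  calc ∑ p ∈ positions q with T ^ 8 < partialQuotient q p.1 p.2,
        weight (partialQuotient q p.1 p.2)
      ≤ ∑ p ∈ positions q with T ^ 8 < partialQuotient q p.1 p.2, 4 * q / T ^ 2 *
          (1 / ((leftContinuant q p.1 p.2 : ℝ) * rightContinuant q p.1 p.2)) := by
        refine sum_le_sum fun p hp => ?_
        obtain ⟨hp, hb⟩ := mem_filter.1 hp
        obtain ⟨ha, hi⟩ := mem_positions.1 hp
        have hbq := partialQuotient_le_mul_one_div ha hi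
        calc _ ≤ 4 * ((partialQuotient q p.1 p.2 : ℝ) / T ^ 2) := weight_le_of_pow_le hT hb.le
          _ ≤ 4 * (q * (1 / ((leftContinuant q p.1 p.2 : ℝ) * rightContinuant q p.1 p.2))
                / T ^ 2) := by gcongr
          _ = _ := by ring
    _ ≤ 4 * q / T ^ 2 * (2 * (1 + log q) ^ 2) := by
        rw [← mul_sum]
        gcongr
        refine (sum_positions_le hq (filter_subset _ _) (W := Icc 1 q ×ˢ Icc 1 q)
          (F := fun w => 1 / ((w.1 : ℝ) * w.2)) (fun _ _ => by positivity) fun p hp => ?_).trans ?_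
        · obtain ⟨ha, hi⟩ := mem_positions.1 (mem_filter.1 hp).1
          exact leftContinuant_rightContinuant_mem_Icc ha hi
        · gcongr
          exact sum_one_div_mul_le q
    _ = 8 * q * (1 + log q) ^ 2 / T ^ 2 := by ring

lemma sum_one_div_leftContinuant_mul_rightContinuant_small_le (hq : q.Prime) (hT : 1 ≤ T) :
    ∑ p ∈ positions q with (partialQuotient q p.1 p.2 : ℝ) ≤ T,
      1 / ((leftContinuant q p.1 p.2 : ℝ) * rightContinuant q p.1 p.2)
        ≤ 2 * ((1 + log q) * (1 + log (T + 2))) := by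
  refine (sum_positions_le hq (filter_subset _ _)
    (W := {w ∈ Icc 1 q ×ˢ Icc 1 q | (w.1 : ℝ) * w.2 ≤ q ∧ (q : ℝ) ≤ (T + 2) * (w.1 * w.2)})
    (F := fun w => 1 / ((w.1 : ℝ) * w.2)) (fun _ _ => by positivity) fun p hp => ?_).trans ?_
  · obtain ⟨hp, hb⟩ := mem_filter.1 hp
    obtain ⟨ha, hi⟩ := mem_positions.1 hp
    refine mem_filter.2 ⟨leftContinuant_rightContinuant_mem_Icc ha hi, ?_, ?_⟩
    · exact_mod_cast (leftContinuant_mul_rightContinuant_lt ha hi).le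
    · have h : (q : ℝ) ≤ (partialQuotient q p.1 p.2 + 2) *
          (leftContinuant q p.1 p.2 * rightContinuant q p.1 p.2) := by
        exact_mod_cast le_partialQuotient_add_two_mul ha hi
      exact h.trans (by gcongr)
  · gcongr
    exact sum_one_div_mul_of_mul_le_of_le_mul q (by linarith)

lemma one_add_log_add_two_le (hT : 1 ≤ T) : 1 + log (T + 2) ≤ 3 * (1 + log T) := by
  have h : log (T + 2) ≤ log (3 * T) := log_le_log (by linarith) (by linarith)
  rw [log_mul (by norm_num) (by linarith)] at h
  linarith [log_le_sub_one_of_pos (x := 3) (by norm_num), log_nonneg hT]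

lemma sum_weight_sq_small_le (hq : q.Prime) (hT : 1 ≤ T) :
    ∑ p ∈ positions q with (partialQuotient q p.1 p.2 : ℝ) ≤ T,
      weight (partialQuotient q p.1 p.2) ^ 2 ≤ 6 * q * ((1 + log q) * (1 + log T) ^ 3) := by
  have hlogT := log_nonneg hT
  calc ∑ p ∈ positions q with (partialQuotient q p.1 p.2 : ℝ) ≤ T,
        weight (partialQuotient q p.1 p.2) ^ 2
      ≤ ∑ p ∈ positions q with (partialQuotient q p.1 p.2 : ℝ) ≤ T, q * (1 + log T) ^ 2 *
          (1 / ((leftContinuant q p.1 p.2 : ℝ) * rightContinuant q p.1 p.2)) := by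
        refine sum_le_sum fun p hp => ?_
        obtain ⟨hp, hb⟩ := mem_filter.1 hp
        obtain ⟨ha, hi⟩ := mem_positions.1 hp
        have hb0 : (0 : ℝ) < partialQuotient q p.1 p.2 := by
          exact_mod_cast partialQuotient_pos ha hi
        calc weight (partialQuotient q p.1 p.2) ^ 2
            = partialQuotient q p.1 p.2 * (1 + log (partialQuotient q p.1 p.2)) ^ 2 := by
              rw [weight, mul_pow, sq_sqrt hb0.le]
          _ ≤ q * (1 / ((leftContinuant q p.1 p.2 : ℝ) * rightContinuant q p.1 p.2)) *
                (1 + log T) ^ 2 := by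
              gcongr
              exact partialQuotient_le_mul_one_div ha hi
          _ = _ := by ring
    _ ≤ q * (1 + log T) ^ 2 * (2 * ((1 + log q) * (3 * (1 + log T)))) := by
        rw [← mul_sum]
        gcongr
        refine (sum_one_div_leftContinuant_mul_rightContinuant_small_le hq hT).trans ?_
        gcongr
        exact one_add_log_add_two_le hT
    _ = 6 * q * ((1 + log q) * (1 + log T) ^ 3) := by ring

lemma length_cfList_le (ha : a ∈ reducedResidues q) :
    ((cfList q a).length : ℝ) ≤ 4 * (1 + log q) := by
  have hpow := two_pow_le_continuant (isCanonical_of_mem ha).1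
  rw [continuant_of_mem ha] at hpow
  have hlog := log_le_log (by positivity) (show (2 : ℝ) ^ ((cfList q a).length / 2) ≤ q by
    exact_mod_cast hpow)
  rw [log_pow] at hlog
  have hhalf : ((cfList q a).length : ℝ) ≤ 2 * ((cfList q a).length / 2 : ℕ) + 1 := by
    exact_mod_cast (by lia : (cfList q a).length ≤ 2 * ((cfList q a).length / 2) + 1)
  have hlog2 : (((cfList q a).length / 2 : ℕ) : ℝ) * 0.5 ≤ log q :=
    (mul_le_mul_of_nonneg_left (by linarith [log_two_gt_d9]) (Nat.cast_nonneg _)).trans hlog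
  linarith [log_natCast_nonneg q]

end

/-! ### Pairs involving small partial quotients -/

section PairSums

variable {ι : Type*} [LinearOrder ι]

lemma sq_sum_eq_sum_sq_add {R : Type*} [CommRing R] (I : Finset ι) (w : ι → R) :
    (∑ i ∈ I, w i) ^ 2 =
      ∑ i ∈ I, w i ^ 2 + 2 * ∑ p ∈ I ×ˢ I with p.1 < p.2, w p.1 * w p.2 := by
  have hsplit : ∀ i j, w i * w j = (if i < j then w i * w j else 0) +
      (if j < i then w j * w i else 0) + if i = j then w i ^ 2 else 0 := by
    intro i j
    rcases lt_trichotomy i j with h | rfl | h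
    · simp [h, h.ne, h.not_gt]
    · simp [pow_two]
    · simp [h, h.ne', h.not_gt, mul_comm]
  have hdiag : ∑ i ∈ I, ∑ j ∈ I, (if i = j then w i ^ 2 else 0) = ∑ i ∈ I, w i ^ 2 :=
    sum_congr rfl fun i hi => by rw [sum_ite_eq, if_pos hi]
  rw [pow_two, sum_mul_sum, sum_congr rfl fun i _ => sum_congr rfl fun j _ => hsplit i j]
  simp only [sum_add_distrib, hdiag, sum_filter, sum_product]
  rw [sum_comm (f := fun i j => if j < i then w j * w i else 0)]
  ring

variable {I : Finset ι} {w : ι → ℝ} {P Q : ι → Prop} [DecidablePred P] [DecidablePred Q]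

/-- Cauchy–Schwarz on the three parts `P`, `¬P ∧ Q`, `¬P ∧ ¬Q` of `I`; the last one contains at most
one index. -/
lemma sum_pairs_le_of_forall_or (hw : ∀ i, 0 ≤ w i) (h : ∀ i ∈ I, ∀ j ∈ I, i < j → P i ∨ Q j) :
    ∑ p ∈ I ×ˢ I with p.1 < p.2, w p.1 * w p.2 ≤ ∑ i ∈ I, w i ^ 2 +
      3 * (∑ p ∈ I ×ˢ I with p.1 < p.2 ∧ P p.2, w p.1 * w p.2 +
        ∑ p ∈ I ×ˢ I with p.1 < p.2 ∧ Q p.1, w p.1 * w p.2) := by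
  have hmono : ∀ A B : Finset (ι × ι), A ⊆ B →
      ∑ p ∈ A, w p.1 * w p.2 ≤ ∑ p ∈ B, w p.1 * w p.2 := fun A B hAB =>
    sum_le_sum_of_subset_of_nonneg hAB fun p _ _ => mul_nonneg (hw _) (hw _)
  have hP := hmono {p ∈ {i ∈ I | P i} ×ˢ {i ∈ I | P i} | p.1 < p.2}
    {p ∈ I ×ˢ I | p.1 < p.2 ∧ P p.2} fun p hp => by
      simp only [mem_filter, mem_product] at hp ⊢; tauto
  have hQ := hmono {p ∈ {i ∈ I | ¬P i ∧ Q i} ×ˢ {i ∈ I | ¬P i ∧ Q i} | p.1 < p.2}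
    {p ∈ I ×ˢ I | p.1 < p.2 ∧ Q p.1} fun p hp => by
      simp only [mem_filter, mem_product] at hp ⊢; tauto
  have hnone : ({p ∈ {i ∈ I | ¬P i ∧ ¬Q i} ×ˢ {i ∈ I | ¬P i ∧ ¬Q i} | p.1 < p.2} : Finset (ι × ι))
      = ∅ := filter_eq_empty_iff.2 fun p hp hlt => by
    simp only [mem_filter, mem_product] at hp
    have := h p.1 hp.1.1 p.2 hp.2.1 hlt
    tauto
  have hpartition : ∀ f : ι → ℝ, ∑ i ∈ I, f i = ∑ i ∈ I with P i, f i +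
      ∑ i ∈ I with ¬P i ∧ Q i, f i + ∑ i ∈ I with ¬P i ∧ ¬Q i, f i := fun f => by
    rw [← sum_filter_add_sum_filter_not I P, ← sum_filter_add_sum_filter_not {i ∈ I | ¬P i} Q,
      filter_filter, filter_filter, add_assoc]
  have hI := sq_sum_eq_sum_sq_add I w
  have hIP := sq_sum_eq_sum_sq_add {i ∈ I | P i} w
  have hIQ := sq_sum_eq_sum_sq_add {i ∈ I | ¬P i ∧ Q i} w
  have hIN := sq_sum_eq_sum_sq_add {i ∈ I | ¬P i ∧ ¬Q i} w
  rw [hnone, sum_empty, mul_zero, add_zero] at hIN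
  rw [hpartition w] at hI
  have hsq := hpartition fun i => w i ^ 2
  have hthree := fun x y z : ℝ => show (x + y + z) ^ 2 ≤ 3 * (x ^ 2 + y ^ 2 + z ^ 2) by
    nlinarith [sq_nonneg (x - y), sq_nonneg (y - z), sq_nonneg (x - z)]
  have hcs := hthree (∑ i ∈ I with P i, w i) (∑ i ∈ I with ¬P i ∧ Q i, w i)
    (∑ i ∈ I with ¬P i ∧ ¬Q i, w i)
  linarith

lemma sum_pairs_le_two_mul_sum_mul_sum (hw : ∀ i, 0 ≤ w i) :
    ∑ p ∈ I ×ˢ I with p.1 < p.2 ∧ (P p.1 ∧ Q p.2 ∨ P p.2 ∧ Q p.1), w p.1 * w p.2 ≤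
      2 * ((∑ i ∈ I with P i, w i) * ∑ i ∈ I with Q i, w i) := by
  have hPQ := sum_mul_sum {i ∈ I | P i} {i ∈ I | Q i} w w
  have hQP := sum_mul_sum {i ∈ I | Q i} {i ∈ I | P i} w w
  rw [← sum_product'] at hPQ hQP
  have hunion : ({p ∈ I ×ˢ I | p.1 < p.2 ∧ (P p.1 ∧ Q p.2 ∨ P p.2 ∧ Q p.1)} : Finset (ι × ι)) ⊆
      {i ∈ I | P i} ×ˢ {i ∈ I | Q i} ∪ {i ∈ I | Q i} ×ˢ {i ∈ I | P i} := fun p hp => by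
    simp only [mem_filter, mem_union, mem_product] at hp ⊢
    tauto
  have hnonneg : ∀ p : ι × ι, 0 ≤ w p.1 * w p.2 := fun p => mul_nonneg (hw _) (hw _)
  have hle := sum_le_sum_of_subset_of_nonneg hunion fun p _ _ => hnonneg p
  have hadd := sum_union_inter (s₁ := {i ∈ I | P i} ×ˢ {i ∈ I | Q i})
    (s₂ := {i ∈ I | Q i} ×ˢ {i ∈ I | P i}) (f := fun p => w p.1 * w p.2)
  have hinter : 0 ≤ ∑ p ∈ {i ∈ I | P i} ×ˢ {i ∈ I | Q i} ∩ {i ∈ I | Q i} ×ˢ {i ∈ I | P i},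
      w p.1 * w p.2 := sum_nonneg fun p _ => hnonneg p
  rw [← hPQ, ← hQP, mul_comm (∑ i ∈ I with Q i, w i)] at hadd
  linarith

end PairSums

lemma sum_pairs_small_le (q : ℕ) (T : ℝ) :
    ∑ t ∈ positionPairs q with
        (partialQuotient q t.1 t.2.1 : ℝ) ≤ T ∧ (partialQuotient q t.1 t.2.2 : ℝ) ≤ T,
      weight (partialQuotient q t.1 t.2.1) * weight (partialQuotient q t.1 t.2.2) ≤
    ∑ p ∈ positions q with (partialQuotient q p.1 p.2 : ℝ) ≤ T,
        weight (partialQuotient q p.1 p.2) ^ 2 +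
      3 * (∑ t ∈ positionPairs q with
          continuant (partialQuotient q t.1 t.2.2 :: leftQuotients q t.1 t.2.2) ^ 2 ≤ q,
        weight (partialQuotient q t.1 t.2.1) * weight (partialQuotient q t.1 t.2.2) +
      ∑ t ∈ positionPairs q with
          continuant (partialQuotient q t.1 t.2.1 :: rightQuotients q t.1 t.2.1) ^ 2 ≤ q,
        weight (partialQuotient q t.1 t.2.1) * weight (partialQuotient q t.1 t.2.2)) := by
  let I : ℕ → Finset ℕ := fun a =>
    {i ∈ range (cfList q a).length | (partialQuotient q a i : ℝ) ≤ T}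
  let w : ℕ → ℕ → ℝ := fun a i => weight (partialQuotient q a i)
  have hpairs := fun a (ha : a ∈ reducedResidues q) =>
    sum_pairs_le_of_forall_or (I := I a) (w := w a)
      (P := fun i => continuant (partialQuotient q a i :: leftQuotients q a i) ^ 2 ≤ q)
      (Q := fun i => continuant (partialQuotient q a i :: rightQuotients q a i) ^ 2 ≤ q)
      (fun i => weight_nonneg _) fun i _ j hj hij =>
        continuant_left_sq_le_or_continuant_right_sq_le ha hij (mem_range.1 (mem_filter.1 hj).1)
  have htotal := sum_le_sum hpairs
  simp only [sum_add_distrib, ← mul_sum, sum_sigma'] at htotal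
  have hmono : ∀ A B : Finset (Σ _ : ℕ, ℕ × ℕ), A ⊆ B →
      ∑ t ∈ A, w t.1 t.2.1 * w t.1 t.2.2 ≤ ∑ t ∈ B, w t.1 t.2.1 * w t.1 t.2.2 := fun A B hAB =>
    sum_le_sum_of_subset_of_nonneg hAB fun t _ _ => mul_nonneg (weight_nonneg _) (weight_nonneg _)
  refine (hmono _ _ fun t ht => ?_).trans (htotal.trans (add_le_add (sum_le_sum_of_subset_of_nonneg
    (fun p hp => ?_) fun p _ _ => sq_nonneg _) (mul_le_mul_of_nonneg_left
      (add_le_add (hmono _ _ fun t ht => ?_) (hmono _ _ fun t ht => ?_)) zero_le_three)))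
  · simp only [positionPairs, mem_filter, mem_sigma, mem_product, I] at ht ⊢; tauto
  · simp only [positions, mem_filter, mem_sigma, I] at hp ⊢; tauto
  all_goals simp only [positionPairs, mem_filter, mem_sigma, mem_product, I] at ht ⊢; tauto

lemma exists_sum_pairs_small_le : ∃ C : ℝ, 0 < C ∧ ∀ q : ℕ, q.Prime → ∀ T : ℝ, 1 ≤ T →
    ∑ t ∈ positionPairs q with
        (partialQuotient q t.1 t.2.1 : ℝ) ≤ T ∧ (partialQuotient q t.1 t.2.2 : ℝ) ≤ T,
      weight (partialQuotient q t.1 t.2.1) * weight (partialQuotient q t.1 t.2.2)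
        ≤ C * q * ((1 + log q) ^ 2 + (1 + log q) * (1 + log T) ^ 3) := by
  obtain ⟨C, hC, hleft⟩ := exists_sum_left_pairs_le
  obtain ⟨C', hC', hright⟩ := exists_sum_right_pairs_le
  refine ⟨6 + 3 * (C + C'), by positivity, fun q hq T hT => ?_⟩
  have hlogT := log_nonneg hT
  have hsq : 0 ≤ (q : ℝ) * (1 + log q) ^ 2 := by positivity
  have hprod : 0 ≤ 3 * (C + C') * (q * ((1 + log q) * (1 + log T) ^ 3)) := by positivity
  linarith [sum_pairs_small_le q T, hleft q, hright q, sum_weight_sq_small_le hq hT]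

lemma sum_weight_small_le {q a : ℕ} {T : ℝ} (ha : a ∈ reducedResidues q) (hT : 1 ≤ T) :
    ∑ i ∈ range (cfList q a).length with (partialQuotient q a i : ℝ) ≤ T,
      weight (partialQuotient q a i) ≤ 16 * T * (1 + log q) := by
  calc _ ≤ #{i ∈ range (cfList q a).length | (partialQuotient q a i : ℝ) ≤ T} • (4 * T) := by
        refine sum_le_card_nsmul _ _ _ fun i hi => ?_
        obtain ⟨hi, hb⟩ := mem_filter.1 hi
        have hb1 : (1 : ℝ) ≤ partialQuotient q a i := by
          exact_mod_cast partialQuotient_pos ha (mem_range.1 hi)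
        calc weight (partialQuotient q a i) ≤ 4 * (partialQuotient q a i : ℝ) ^ (3 / 4 : ℝ) :=
              weight_le_rpow (partialQuotient_pos ha (mem_range.1 hi))
          _ ≤ 4 * T := by
              gcongr
              exact (rpow_le_self_of_one_le hb1 (by norm_num)).trans hb
    _ ≤ (cfList q a).length * (4 * T) := by
        rw [nsmul_eq_mul]
        gcongr
        exact (card_filter_le _ _).trans_eq (card_range _)
    _ ≤ 4 * (1 + log q) * (4 * T) := by
        gcongr
        exact length_cfList_le ha
    _ = 16 * T * (1 + log q) := by ring

lemma sum_pairs_large_small_le {q : ℕ} {T : ℝ} (hq : q.Prime) (hT : 1 ≤ T) :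
    ∑ t ∈ positionPairs q with
        T ^ 8 < (partialQuotient q t.1 t.2.1 : ℝ) ∧ (partialQuotient q t.1 t.2.2 : ℝ) ≤ T ∨
        T ^ 8 < (partialQuotient q t.1 t.2.2 : ℝ) ∧ (partialQuotient q t.1 t.2.1 : ℝ) ≤ T,
      weight (partialQuotient q t.1 t.2.1) * weight (partialQuotient q t.1 t.2.2)
        ≤ 256 * q * (1 + log q) ^ 3 / T := by
  have hlarge := sum_weight_large_le hq hT
  simp only [positions, sum_filter, sum_sigma] at hlarge
  simp only [positionPairs, sum_filter, sum_sigma]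
  simp only [← sum_filter, filter_filter] at hlarge ⊢
  calc _ ≤ ∑ a ∈ reducedResidues q, 2 * ((∑ i ∈ range (cfList q a).length with
          T ^ 8 < (partialQuotient q a i : ℝ), weight (partialQuotient q a i)) *
            (16 * T * (1 + log q))) := by
        refine sum_le_sum fun a ha => (sum_pairs_le_two_mul_sum_mul_sum
          (P := fun i => T ^ 8 < (partialQuotient q a i : ℝ))
          (Q := fun i => (partialQuotient q a i : ℝ) ≤ T) fun i => weight_nonneg _).trans ?_
        have hnonneg := sum_nonneg (s := {i ∈ range (cfList q a).length |
          T ^ 8 < (partialQuotient q a i : ℝ)}) fun i _ => weight_nonneg (partialQuotient q a i)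
        gcongr
        exact sum_weight_small_le ha hT
    _ ≤ 2 * ((8 * q * (1 + log q) ^ 2 / T ^ 2) * (16 * T * (1 + log q))) := by
        rw [← mul_sum, ← sum_mul]
        gcongr
    _ = 256 * q * (1 + log q) ^ 3 / T := by
        field_simp
        ring

/-! ### Divisor sums -/

lemma card_divisors_mul_le (a b : ℕ) : #(a * b).divisors ≤ #a.divisors * #b.divisors := by
  rw [Nat.divisors_mul]
  exact card_mul_le

lemma exists_dvd_le_and_lt_prime_mul {R : ℝ} (hR : 1 ≤ R) {N : ℕ} (hNR : R < N) :
    ∃ p e : ℕ, p.Prime ∧ p * e ∣ N ∧ (e : ℝ) ≤ R ∧ R < ((p * e : ℕ) : ℝ) := by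
  classical
  have hex : ∃ D, D ∣ N ∧ R < (D : ℝ) := ⟨N, dvd_rfl, hNR⟩
  obtain ⟨hdvd, hlt⟩ := Nat.find_spec hex
  have hne_one : Nat.find hex ≠ 1 := fun h => by
    rw [h, Nat.cast_one] at hlt
    exact hlt.not_ge hR
  obtain ⟨p, hp, e, he⟩ := Nat.exists_prime_and_dvd hne_one
  have he_pos : 0 < e := Nat.pos_of_ne_zero fun h => by
    rw [he, h, mul_zero, Nat.cast_zero] at hlt
    linarith
  have he_lt : e < Nat.find hex := he ▸ (Nat.lt_mul_iff_one_lt_left he_pos).2 hp.one_lt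
  refine ⟨p, e, hp, he ▸ hdvd, not_lt.1 fun h => Nat.find_min hex he_lt ⟨?_, h⟩, he ▸ hlt⟩
  exact (Dvd.intro_left p he.symm).trans hdvd

/-- Landreau's inequality. Peeling off a minimal divisor exceeding `R` costs a factor `R` in size
and leaves, up to one prime, a divisor at most `R`. -/
lemma exists_dvd_card_divisors_le_pow {R : ℝ} (hR : 1 ≤ R) (k : ℕ) {N : ℕ} (hN : 0 < N)
    (hNR : (N : ℝ) ≤ R ^ k) :
    ∃ e, e ∣ N ∧ (e : ℝ) ≤ R ∧ #N.divisors ≤ (2 * #e.divisors) ^ k := by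
  induction k generalizing N with
  | zero =>
    have hN_one : N = 1 := by
      have : N ≤ 1 := by exact_mod_cast (pow_zero R ▸ hNR)
      lia
    exact ⟨1, one_dvd N, by simpa using hR, by simp [hN_one]⟩
  | succ k ih =>
    rcases le_or_gt (N : ℝ) R with hle | hlt
    · exact ⟨N, dvd_rfl, hle,
        (Nat.le_mul_of_pos_left _ two_pos).trans (Nat.le_self_pow k.succ_ne_zero _)⟩
    obtain ⟨p, e, hp, ⟨M, rfl⟩, heR, hpe⟩ := exists_dvd_le_and_lt_prime_mul hR hlt
    have hM : (M : ℝ) ≤ R ^ k := by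
      have hmul : R * M ≤ R * R ^ k := calc
        R * M ≤ (p * e : ℕ) * M := by gcongr
        _ ≤ R * R ^ k := by rw [← pow_succ']; exact_mod_cast hNR
      exact le_of_mul_le_mul_left hmul (by linarith)
    obtain ⟨e', he'M, he'R, hdiv⟩ := ih (Nat.pos_of_mul_pos_left hN) hM
    have hcard : #(p * e * M).divisors ≤ 2 * #e.divisors * (2 * #e'.divisors) ^ k := calc
      #(p * e * M).divisors ≤ #p.divisors * #e.divisors * #M.divisors :=
        (card_divisors_mul_le _ _).trans (Nat.mul_le_mul_right _ (card_divisors_mul_le _ _))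
      _ ≤ 2 * #e.divisors * (2 * #e'.divisors) ^ k := by
        rw [hp.divisors, card_pair hp.one_lt.ne]
        gcongr
    rcases le_total #e.divisors #e'.divisors with hle | hle
    · refine ⟨e', he'M.mul_left _, he'R, hcard.trans ?_⟩
      rw [pow_succ']
      gcongr
    · refine ⟨e, (Dvd.intro_left p rfl).mul_right M, heR, hcard.trans ?_⟩
      rw [pow_succ']
      gcongr

lemma sum_sum_divisorsAntidiagonal_le (M : ℕ) {f : ℕ × ℕ → ℝ} (hf : ∀ p, 0 ≤ f p) :
    ∑ n ∈ Icc 1 M, ∑ p ∈ n.divisorsAntidiagonal, f p ≤ ∑ p ∈ Icc 1 M ×ˢ Icc 1 M, f p := by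
  have hmaps : ∀ p ∈ {p ∈ Icc 1 M ×ˢ Icc 1 M | p.1 * p.2 ∈ Icc 1 M}, p.1 * p.2 ∈ Icc 1 M :=
    fun p hp => (mem_filter.1 hp).2
  calc ∑ n ∈ Icc 1 M, ∑ p ∈ n.divisorsAntidiagonal, f p
      = ∑ n ∈ Icc 1 M, ∑ p ∈ {p ∈ Icc 1 M ×ˢ Icc 1 M | p.1 * p.2 ∈ Icc 1 M} with p.1 * p.2 = n,
          f p := by
        refine sum_congr rfl fun n hn => sum_congr ?_ fun _ _ => rfl
        ext ⟨x, y⟩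
        simp only [Nat.mem_divisorsAntidiagonal, mem_filter, mem_product, mem_Icc] at hn ⊢
        constructor
        · rintro ⟨rfl, hne⟩
          obtain ⟨hx, hy⟩ := mul_ne_zero_iff.1 hne
          have hxM := (Nat.le_mul_of_pos_right x (by lia : 0 < y)).trans hn.2
          have hyM := (Nat.le_mul_of_pos_left y (by lia : 0 < x)).trans hn.2
          exact ⟨⟨by lia, hn⟩, rfl⟩
        · rintro ⟨-, rfl⟩
          exact ⟨rfl, by lia⟩
    _ = ∑ p ∈ {p ∈ Icc 1 M ×ˢ Icc 1 M | p.1 * p.2 ∈ Icc 1 M}, f p :=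
        sum_fiberwise_of_maps_to hmaps f
    _ ≤ ∑ p ∈ Icc 1 M ×ˢ Icc 1 M, f p :=
        sum_le_sum_of_subset_of_nonneg (filter_subset _ _) fun p _ _ => hf p

lemma sum_card_divisors_pow_succ_div_le_sq (M j : ℕ) :
    ∑ n ∈ Icc 1 M, (#n.divisors : ℝ) ^ (j + 1) / n ≤
      (∑ n ∈ Icc 1 M, (#n.divisors : ℝ) ^ j / n) ^ 2 := by
  calc ∑ n ∈ Icc 1 M, (#n.divisors : ℝ) ^ (j + 1) / n
      = ∑ n ∈ Icc 1 M, ∑ p ∈ n.divisorsAntidiagonal,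
          (#(p.1 * p.2).divisors : ℝ) ^ j / ((p.1 * p.2 : ℕ) : ℝ) := by
        refine sum_congr rfl fun n _ => ?_
        have hconst : ∀ p ∈ n.divisorsAntidiagonal,
            (#(p.1 * p.2).divisors : ℝ) ^ j / ((p.1 * p.2 : ℕ) : ℝ) = (#n.divisors : ℝ) ^ j / n :=
          fun p hp => by rw [(Nat.mem_divisorsAntidiagonal.1 hp).1]
        rw [sum_congr rfl hconst,
          Nat.sum_divisorsAntidiagonal fun _ _ => (#n.divisors : ℝ) ^ j / n, sum_const,
          nsmul_eq_mul]
        ring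
    _ ≤ ∑ p ∈ Icc 1 M ×ˢ Icc 1 M, (#(p.1 * p.2).divisors : ℝ) ^ j / ((p.1 * p.2 : ℕ) : ℝ) :=
        sum_sum_divisorsAntidiagonal_le M fun p => by positivity
    _ ≤ ∑ p ∈ Icc 1 M ×ˢ Icc 1 M,
          (#p.1.divisors : ℝ) ^ j / p.1 * ((#p.2.divisors : ℝ) ^ j / p.2) := by
        refine sum_le_sum fun p _ => ?_
        rw [div_mul_div_comm, ← mul_pow, Nat.cast_mul]
        gcongr
        exact_mod_cast card_divisors_mul_le p.1 p.2
    _ = (∑ n ∈ Icc 1 M, (#n.divisors : ℝ) ^ j / n) ^ 2 := by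
        rw [sq, sum_mul_sum, sum_product]

lemma sum_card_divisors_pow_div_le (M j : ℕ) :
    ∑ n ∈ Icc 1 M, (#n.divisors : ℝ) ^ j / n ≤ (1 + log M) ^ 2 ^ j := by
  induction j with
  | zero => simpa using sum_one_div_le M
  | succ j ih =>
    refine (sum_card_divisors_pow_succ_div_le_sq M j).trans ?_
    rw [pow_succ 2 j, pow_mul]
    gcongr

lemma sum_one_div_sqrt_le (K : ℕ) : ∑ k ∈ Icc 1 K, 1 / √(k : ℝ) ≤ 2 * √K := by
  induction K with
  | zero => simp
  | succ n ih =>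
    have hpos : 0 < √((n + 1 : ℕ) : ℝ) := sqrt_pos.2 (by positivity)
    have hstep : 1 / √((n + 1 : ℕ) : ℝ) ≤ 2 * (√((n + 1 : ℕ) : ℝ) - √n) := by
      rw [div_le_iff₀ hpos]
      have hsq : √((n + 1 : ℕ) : ℝ) ^ 2 = n + 1 := by rw [sq_sqrt (by positivity)]; push_cast; ring
      nlinarith [sq_sqrt (Nat.cast_nonneg (α := ℝ) n), sq_nonneg (√((n + 1 : ℕ) : ℝ) - √n)]
    rw [sum_Icc_succ_top (by lia)]
    linarith

lemma div_pos_and_div_le_floor {e n : ℕ} {H : ℝ} (he : 0 < e) (hn : (n : ℝ) ≤ H) (hen : e ≤ n) :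
    n / e ∈ Icc 1 ⌊H / e⌋₊ := by
  refine mem_Icc.2 ⟨Nat.div_pos hen he, Nat.le_floor ?_⟩
  rw [le_div_iff₀ (by exact_mod_cast he)]
  exact le_trans (by exact_mod_cast Nat.div_mul_le_self n e) hn

lemma sum_one_div_sqrt_le_of_modEq_of_le {e : ℕ} (he : 0 < e) {H : ℝ} (hH : 0 ≤ H) {S : Finset ℕ}
    (hS : ∀ n ∈ S, e ≤ n ∧ (n : ℝ) ≤ H) (hmod : ∀ n ∈ S, ∀ n' ∈ S, n ≡ n' [MOD e]) :
    ∑ n ∈ S, 1 / √(n : ℝ) ≤ 2 * √H / e := by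
  have he' : (0 : ℝ) < e := by exact_mod_cast he
  have hinj : Set.InjOn (fun n => n / e) (S : Set ℕ) := fun n hn n' hn' h => by
    have hmod' : n % e = n' % e := hmod n hn n' hn'
    have hdiv : n / e = n' / e := h
    rw [← Nat.div_add_mod n e, ← Nat.div_add_mod n' e, hdiv, hmod']
  calc ∑ n ∈ S, 1 / √(n : ℝ) ≤ ∑ n ∈ S, 1 / √e * (1 / √((n / e : ℕ) : ℝ)) := by
        refine sum_le_sum fun n hn => ?_
        have hpos : (0 : ℝ) < (n / e : ℕ) := by exact_mod_cast Nat.div_pos (hS n hn).1 he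
        rw [one_div_mul_one_div, ← sqrt_mul he'.le]
        gcongr
        exact_mod_cast Nat.mul_div_le n e
    _ = 1 / √e * ∑ k ∈ S.image fun n => n / e, 1 / √(k : ℝ) := by
        rw [← mul_sum, sum_image hinj]
    _ ≤ 1 / √e * ∑ k ∈ Icc 1 ⌊H / e⌋₊, 1 / √(k : ℝ) := by
        gcongr
        exact image_subset_iff.2 fun n hn => div_pos_and_div_le_floor he (hS n hn).2 (hS n hn).1
    _ ≤ 1 / √e * (2 * √(H / e)) := by
        gcongr
        refine (sum_one_div_sqrt_le _).trans ?_
        gcongr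
        exact Nat.floor_le (by positivity)
    _ = 2 * √H / (√e * √e) := by
        rw [sqrt_div hH]
        field_simp
    _ = 2 * √H / e := by rw [mul_self_sqrt he'.le]

lemma sum_one_div_sqrt_le_of_modEq {e : ℕ} (he : 0 < e) {H : ℝ} (hH : 0 ≤ H) {S : Finset ℕ}
    (hS : ∀ n ∈ S, 0 < n ∧ (n : ℝ) ≤ H) (hmod : ∀ n ∈ S, ∀ n' ∈ S, n ≡ n' [MOD e]) :
    ∑ n ∈ S, 1 / √(n : ℝ) ≤ 1 + 2 * √H / e := by
  have hsmall : ∑ n ∈ S with n < e, 1 / √(n : ℝ) ≤ 1 := by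
    have hcard : #{n ∈ S | n < e} ≤ 1 := card_le_one.2 fun n hn n' hn' => by
      obtain ⟨hnS, hne⟩ := mem_filter.1 hn
      obtain ⟨hnS', hne'⟩ := mem_filter.1 hn'
      exact (hmod n hnS n' hnS').eq_of_lt_of_lt hne hne'
    refine (sum_le_card_nsmul _ _ 1 fun n hn => ?_).trans ?_
    · have hn_one : (1 : ℝ) ≤ n := by exact_mod_cast (hS n (mem_filter.1 hn).1).1
      exact div_le_one_of_le₀ (one_le_sqrt.2 hn_one) (sqrt_nonneg _)
    · simpa using hcard
  have hlarge : ∑ n ∈ S with ¬n < e, 1 / √(n : ℝ) ≤ 2 * √H / e :=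
    sum_one_div_sqrt_le_of_modEq_of_le he hH
      (fun n hn => ⟨not_lt.1 (mem_filter.1 hn).2, (hS n (mem_filter.1 hn).1).2⟩)
      fun n hn n' hn' => hmod n (mem_filter.1 hn).1 n' (mem_filter.1 hn').1
  rw [← sum_filter_add_sum_filter_not S fun n => n < e]
  exact add_le_add hsmall hlarge

lemma le_sqrt_div_of_pow_four_le {e m Z : ℝ} (hm : 0 < m) (heZ : e ^ 4 ≤ Z)
    (hmZ : m ^ 2 ≤ Z) : e ≤ √(Z / m) := by
  have hZ : 0 ≤ Z := (by positivity : 0 ≤ m ^ 2).trans hmZ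
  refine le_sqrt_of_sq_le ((le_div_iff₀ hm).2 (le_of_sq_le_sq ?_ hZ))
  calc (e ^ 2 * m) ^ 2 = e ^ 4 * m ^ 2 := by ring
    _ ≤ Z * Z := by gcongr
    _ = Z ^ 2 := by ring

lemma sum_one_div_sqrt_mul_le_of_modEq {e m : ℕ} (he : 0 < e) (hm : 0 < m) {Z : ℝ}
    (heZ : (e : ℝ) ^ 4 ≤ Z) {S : Finset ℕ} (hS : ∀ n ∈ S, m ≤ n ∧ (m * n : ℝ) ≤ Z)
    (hmod : ∀ n ∈ S, ∀ n' ∈ S, n ≡ n' [MOD e]) :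
    ∑ n ∈ S, 1 / √(m * n : ℝ) ≤ 3 * √Z / e * (1 / m) := by
  have he' : (0 : ℝ) < e := by exact_mod_cast he
  have hm' : (0 : ℝ) < m := by exact_mod_cast hm
  have hZ : 0 ≤ Z := (by positivity : (0 : ℝ) ≤ (e : ℝ) ^ 4).trans heZ
  rcases S.eq_empty_or_nonempty with rfl | ⟨n, hn⟩
  · rw [sum_empty]
    positivity
  have hmZ : (m : ℝ) ^ 2 ≤ Z := calc
    (m : ℝ) ^ 2 = m * m := sq _
    _ ≤ m * n := by gcongr; exact (hS n hn).1
    _ ≤ Z := (hS n hn).2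
  have hone : 1 ≤ √(Z / m) / e :=
    (one_le_div he').2 (le_sqrt_div_of_pow_four_le hm' heZ hmZ)
  calc ∑ n ∈ S, 1 / √(m * n : ℝ) = 1 / √m * ∑ n ∈ S, 1 / √(n : ℝ) := by
        simp only [mul_sum, sqrt_mul hm'.le, one_div_mul_one_div]
    _ ≤ 1 / √m * (1 + 2 * √(Z / m) / e) := by
        gcongr
        refine sum_one_div_sqrt_le_of_modEq he (by positivity) (fun k hk => ⟨?_, ?_⟩) hmod
        · exact hm.trans_le (hS k hk).1
        · exact (le_div_iff₀' hm').2 (hS k hk).2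
    _ ≤ 1 / √m * (√(Z / m) / e + 2 * √(Z / m) / e) := by gcongr
    _ = 3 * √Z / e * (1 / (√m * √m)) := by
        rw [sqrt_div hZ]
        field_simp
        ring
    _ = 3 * √Z / e * (1 / m) := by rw [mul_self_sqrt hm'.le]

/-- The lattice points `(m, n)` with `1 ≤ m, n ≤ B` lying on or below the hyperbola `m n = Z`. -/
noncomputable def hyperbolicRegion (B : ℕ) (Z : ℝ) : Finset (ℕ × ℕ) :=
  {w ∈ Icc 1 B ×ˢ Icc 1 B | (w.1 * w.2 : ℝ) ≤ Z}

lemma mem_hyperbolicRegion {B : ℕ} {Z : ℝ} {w : ℕ × ℕ} :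
    w ∈ hyperbolicRegion B Z ↔
      (0 < w.1 ∧ w.1 ≤ B) ∧ (0 < w.2 ∧ w.2 ≤ B) ∧ (w.1 * w.2 : ℝ) ≤ Z := by
  rw [hyperbolicRegion, mem_filter, mem_product, mem_Icc, mem_Icc, and_assoc]
  rfl

lemma sum_one_div_sqrt_le_of_fst_le_snd {e B : ℕ} (he : 0 < e) {Z : ℝ} (heZ : (e : ℝ) ^ 4 ≤ Z)
    {W : Finset (ℕ × ℕ)} (hW : W ⊆ hyperbolicRegion B Z) (hle : ∀ w ∈ W, w.1 ≤ w.2)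
    (hmod : ∀ w ∈ W, ∀ w' ∈ W, w.1 = w'.1 → w.2 ≡ w'.2 [MOD e]) :
    ∑ w ∈ W, 1 / √(w.1 * w.2 : ℝ) ≤ 3 * √Z / e * (1 + log B) := by
  have hmaps : ∀ w ∈ W, w.1 ∈ Icc 1 B := fun w hw =>
    mem_Icc.2 (mem_hyperbolicRegion.1 (hW hw)).1
  calc ∑ w ∈ W, 1 / √(w.1 * w.2 : ℝ)
      = ∑ m ∈ Icc 1 B, ∑ w ∈ W with w.1 = m, 1 / √(w.1 * w.2 : ℝ) :=
        (sum_fiberwise_of_maps_to hmaps _).symm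
    _ ≤ ∑ m ∈ Icc 1 B, 3 * √Z / e * (1 / (m : ℝ)) := by
        refine sum_le_sum fun m hm => ?_
        have hinj : Set.InjOn Prod.snd (({w ∈ W | w.1 = m} : Finset (ℕ × ℕ)) : Set (ℕ × ℕ)) :=
          fun w hw w' hw' h =>
            Prod.ext ((mem_filter.1 hw).2.trans (mem_filter.1 hw').2.symm) h
        calc ∑ w ∈ W with w.1 = m, 1 / √(w.1 * w.2 : ℝ)
            = ∑ n ∈ {w ∈ W | w.1 = m}.image Prod.snd, 1 / √(m * n : ℝ) := by
              rw [sum_image hinj]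
              exact sum_congr rfl fun w hw => by rw [(mem_filter.1 hw).2]
          _ ≤ 3 * √Z / e * (1 / (m : ℝ)) := by
              refine sum_one_div_sqrt_mul_le_of_modEq he (mem_Icc.1 hm).1 heZ ?_ ?_
              · simp only [mem_image, mem_filter]
                rintro _ ⟨w, ⟨hw, rfl⟩, rfl⟩
                exact ⟨hle w hw, (mem_hyperbolicRegion.1 (hW hw)).2.2⟩
              · simp only [mem_image, mem_filter]
                rintro _ ⟨w, ⟨hw, hwm⟩, rfl⟩ _ ⟨w', ⟨hw', hwm'⟩, rfl⟩
                exact hmod w hw w' hw' (hwm.trans hwm'.symm)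
    _ ≤ 3 * √Z / e * (1 + log B) := by
        rw [← mul_sum]
        gcongr
        exact sum_one_div_le B

lemma sum_one_div_sqrt_le_of_snd_le_fst {e B : ℕ} (he : 0 < e) {Z : ℝ} (heZ : (e : ℝ) ^ 4 ≤ Z)
    {W : Finset (ℕ × ℕ)} (hW : W ⊆ hyperbolicRegion B Z) (hle : ∀ w ∈ W, w.2 ≤ w.1)
    (hmod : ∀ w ∈ W, ∀ w' ∈ W, w.2 = w'.2 → w.1 ≡ w'.1 [MOD e]) :
    ∑ w ∈ W, 1 / √(w.1 * w.2 : ℝ) ≤ 3 * √Z / e * (1 + log B) := by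
  have hswap : ∀ w ∈ W.image Prod.swap, w.swap ∈ W := fun w hw => by
    obtain ⟨w', hw', rfl⟩ := mem_image.1 hw
    exact hw'
  have hsum : ∑ w ∈ W.image Prod.swap, 1 / √(w.1 * w.2 : ℝ) ≤ 3 * √Z / e * (1 + log B) :=
    sum_one_div_sqrt_le_of_fst_le_snd he heZ
      (fun w hw => by
        obtain ⟨h₁, h₂, h₃⟩ := mem_hyperbolicRegion.1 (hW (hswap w hw))
        exact mem_hyperbolicRegion.2 ⟨h₂, h₁, by rwa [mul_comm]⟩)
      (fun w hw => hle _ (hswap w hw))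
      fun w hw w' hw' => hmod _ (hswap w hw) _ (hswap w' hw')
  rw [sum_image Prod.swap_injective.injOn] at hsum
  simpa only [Prod.fst_swap, Prod.snd_swap, mul_comm] using hsum

lemma sum_one_div_sqrt_le_of_forall_modEq {e B : ℕ} (he : 0 < e) {Z : ℝ} (heZ : (e : ℝ) ^ 4 ≤ Z)
    {W : Finset (ℕ × ℕ)} (hW : W ⊆ hyperbolicRegion B Z)
    (hsnd : ∀ w ∈ W, ∀ w' ∈ W, w.1 = w'.1 → w.2 ≡ w'.2 [MOD e])
    (hfst : ∀ w ∈ W, ∀ w' ∈ W, w.2 = w'.2 → w.1 ≡ w'.1 [MOD e]) :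
    ∑ w ∈ W, 1 / √(w.1 * w.2 : ℝ) ≤ 6 * √Z / e * (1 + log B) := by
  rw [← sum_filter_add_sum_filter_not W fun w => w.1 ≤ w.2]
  calc _ ≤ 3 * √Z / e * (1 + log B) + 3 * √Z / e * (1 + log B) := by
        refine add_le_add
          (sum_one_div_sqrt_le_of_fst_le_snd he heZ ((filter_subset _ _).trans hW) ?_ ?_)
          (sum_one_div_sqrt_le_of_snd_le_fst he heZ ((filter_subset _ _).trans hW) ?_ ?_)
        · exact fun w hw => (mem_filter.1 hw).2
        · exact fun w hw w' hw' => hsnd w (mem_filter.1 hw).1 w' (mem_filter.1 hw').1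
        · exact fun w hw => (not_le.1 (mem_filter.1 hw).2).le
        · exact fun w hw w' hw' => hfst w (mem_filter.1 hw).1 w' (mem_filter.1 hw').1
    _ = 6 * √Z / e * (1 + log B) := by ring

lemma sum_card_divisors_sq_div_sqrt_le_sum {k q : ℕ} {Z R : ℝ} (hR : 1 ≤ R) (hRq : R ≤ q)
    {N : ℕ × ℕ → ℕ} (hN : ∀ w ∈ hyperbolicRegion q Z, 0 < N w ∧ (N w : ℝ) ≤ R ^ k) :
    ∑ w ∈ hyperbolicRegion q Z, (#(N w).divisors : ℝ) ^ 2 / √(w.1 * w.2 : ℝ) ≤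
      ∑ e ∈ {e ∈ Icc 1 q | ((e : ℕ) : ℝ) ≤ R}, 2 ^ (k * 2) * (#e.divisors : ℝ) ^ (k * 2) *
        ∑ w ∈ hyperbolicRegion q Z with e ∣ N w, 1 / √(w.1 * w.2 : ℝ) := by
  have hterm : ∀ w ∈ hyperbolicRegion q Z, (#(N w).divisors : ℝ) ^ 2 / √(w.1 * w.2 : ℝ) ≤
      ∑ e ∈ {e ∈ Icc 1 q | ((e : ℕ) : ℝ) ≤ R}, 2 ^ (k * 2) * (#e.divisors : ℝ) ^ (k * 2) *
        if e ∣ N w then 1 / √(w.1 * w.2 : ℝ) else 0 := fun w hw => by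
    obtain ⟨hpos, hle⟩ := hN w hw
    obtain ⟨e, hdvd, heR, hcard⟩ := exists_dvd_card_divisors_le_pow hR k hpos hle
    have hcard' : (#(N w).divisors : ℝ) ≤ (2 * #e.divisors) ^ k := by exact_mod_cast hcard
    have heq : e ≤ q := by exact_mod_cast heR.trans hRq
    have hmem : e ∈ {e ∈ Icc 1 q | ((e : ℕ) : ℝ) ≤ R} :=
      mem_filter.2 ⟨mem_Icc.2 ⟨Nat.pos_of_dvd_of_pos hdvd hpos, heq⟩, heR⟩
    refine le_trans ?_ (single_le_sum (fun e _ => ?_) hmem)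
    · rw [if_pos hdvd, mul_one_div, ← mul_pow, pow_mul]
      gcongr
    · split_ifs <;> positivity
  refine (sum_le_sum hterm).trans_eq ?_
  rw [sum_comm]
  simp only [← mul_sum, sum_filter]

lemma sum_card_divisors_sq_div_sqrt_le {k q : ℕ} {Z R : ℝ} (hR : 1 ≤ R) (hRZ : R ^ 4 ≤ Z)
    (hRq : R ≤ q) {N : ℕ × ℕ → ℕ}
    (hN : ∀ w ∈ hyperbolicRegion q Z, 0 < N w ∧ (N w : ℝ) ≤ R ^ k)
    (hsnd : ∀ e : ℕ, (e : ℝ) ≤ R → ∀ w ∈ hyperbolicRegion q Z, ∀ w' ∈ hyperbolicRegion q Z,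
      e ∣ N w → e ∣ N w' → w.1 = w'.1 → w.2 ≡ w'.2 [MOD e])
    (hfst : ∀ e : ℕ, (e : ℝ) ≤ R → ∀ w ∈ hyperbolicRegion q Z, ∀ w' ∈ hyperbolicRegion q Z,
      e ∣ N w → e ∣ N w' → w.2 = w'.2 → w.1 ≡ w'.1 [MOD e]) :
    ∑ w ∈ hyperbolicRegion q Z, (#(N w).divisors : ℝ) ^ 2 / √(w.1 * w.2 : ℝ) ≤
      6 * 2 ^ (k * 2) * √Z * (1 + log q) ^ (2 ^ (k * 2) + 1) := by
  refine (sum_card_divisors_sq_div_sqrt_le_sum hR hRq hN).trans ?_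
  calc _ ≤ ∑ e ∈ {e ∈ Icc 1 q | ((e : ℕ) : ℝ) ≤ R}, 2 ^ (k * 2) * (#e.divisors : ℝ) ^ (k * 2) *
          (6 * √Z / e * (1 + log q)) := by
        refine sum_le_sum fun e he => ?_
        obtain ⟨heq, heR⟩ := mem_filter.1 he
        gcongr
        refine sum_one_div_sqrt_le_of_forall_modEq (mem_Icc.1 heq).1
          ((pow_le_pow_left₀ (by positivity) heR 4).trans hRZ) (filter_subset _ _) ?_ ?_
        · intro w hw w' hw'
          exact hsnd e heR w (mem_filter.1 hw).1 w' (mem_filter.1 hw').1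
            (mem_filter.1 hw).2 (mem_filter.1 hw').2
        · intro w hw w' hw'
          exact hfst e heR w (mem_filter.1 hw).1 w' (mem_filter.1 hw').1
            (mem_filter.1 hw).2 (mem_filter.1 hw').2
    _ ≤ ∑ e ∈ Icc 1 q, 2 ^ (k * 2) * (#e.divisors : ℝ) ^ (k * 2) *
          (6 * √Z / e * (1 + log q)) :=
        sum_le_sum_of_subset_of_nonneg (filter_subset _ _) fun _ _ _ => by positivity
    _ = 6 * 2 ^ (k * 2) * √Z * (1 + log q) *
          ∑ e ∈ Icc 1 q, (#e.divisors : ℝ) ^ (k * 2) / e := by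
        rw [mul_sum]
        exact sum_congr rfl fun e _ => by ring
    _ ≤ 6 * 2 ^ (k * 2) * √Z * (1 + log q) * (1 + log q) ^ 2 ^ (k * 2) := by
        gcongr
        exact sum_card_divisors_pow_div_le q (k * 2)
    _ = 6 * 2 ^ (k * 2) * √Z * (1 + log q) ^ (2 ^ (k * 2) + 1) := by
        rw [pow_succ]
        ring

lemma one_div_sqrt_le_of_le {x Z : ℝ} (hx : 0 < x) (hxZ : x ≤ Z) : 1 / √x ≤ √Z / x := by
  rw [div_le_div_iff₀ (sqrt_pos.2 hx) hx, one_mul]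
  calc x = √x * √x := (mul_self_sqrt hx.le).symm
    _ ≤ √Z * √x := by gcongr

lemma sum_card_divisors_snd_sq_div_sqrt_le (q : ℕ) (Z : ℝ) :
    ∑ w ∈ hyperbolicRegion q Z, (#w.2.divisors : ℝ) ^ 2 / √(w.1 * w.2 : ℝ) ≤
      √Z * (1 + log q) ^ 5 := by
  calc ∑ w ∈ hyperbolicRegion q Z, (#w.2.divisors : ℝ) ^ 2 / √(w.1 * w.2 : ℝ)
      ≤ ∑ w ∈ hyperbolicRegion q Z, √Z * (1 / (w.1 : ℝ) * ((#w.2.divisors : ℝ) ^ 2 / w.2)) := by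
        refine sum_le_sum fun w hw => ?_
        obtain ⟨⟨hm, -⟩, ⟨hn, -⟩, hle⟩ := mem_hyperbolicRegion.1 hw
        calc (#w.2.divisors : ℝ) ^ 2 / √(w.1 * w.2 : ℝ)
            = 1 / √(w.1 * w.2 : ℝ) * (#w.2.divisors : ℝ) ^ 2 := by ring
          _ ≤ √Z / (w.1 * w.2) * (#w.2.divisors : ℝ) ^ 2 :=
              mul_le_mul_of_nonneg_right (one_div_sqrt_le_of_le (by positivity) hle) (by positivity)
          _ = √Z * (1 / (w.1 : ℝ) * ((#w.2.divisors : ℝ) ^ 2 / w.2)) := by field_simp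
    _ ≤ ∑ w ∈ Icc 1 q ×ˢ Icc 1 q, √Z * (1 / (w.1 : ℝ) * ((#w.2.divisors : ℝ) ^ 2 / w.2)) :=
        sum_le_sum_of_subset_of_nonneg (filter_subset _ _) fun _ _ _ => by positivity
    _ = √Z * ((∑ m ∈ Icc 1 q, 1 / (m : ℝ)) * ∑ n ∈ Icc 1 q, (#n.divisors : ℝ) ^ 2 / n) := by
        rw [← mul_sum, sum_product, sum_mul_sum]
    _ ≤ √Z * ((1 + log q) * (1 + log q) ^ 2 ^ 2) := by
        gcongr
        · exact sum_one_div_le q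
        · exact sum_card_divisors_pow_div_le q 2
    _ = √Z * (1 + log q) ^ 5 := by ring

/-! ### Two large partial quotients -/

/-- For a pair of positions `i < j`, the point `(K, x_i y_j)`, where `K` is the continuant of the
partial quotients strictly between `i` and `j`. -/
def crossPoint (q : ℕ) (t : Σ _ : ℕ, ℕ × ℕ) : ℕ × ℕ :=
  (continuant (middleQuotients q t.1 t.2.1 t.2.2),
    leftContinuant q t.1 t.2.1 * rightContinuant q t.1 t.2.2)

/-- For a pair of positions `i < j`, the product `x_j y_i`. -/
def overlapProduct (q : ℕ) (t : Σ _ : ℕ, ℕ × ℕ) : ℕ :=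
  leftContinuant q t.1 t.2.2 * rightContinuant q t.1 t.2.1

/-- The form `|q m + ε n|` at `(m, n)`; at `crossPoint q t`, for a suitable sign `ε`, it takes the
value `overlapProduct q t`. -/
def crossForm (q : ℕ) (ε : ℤˣ) (w : ℕ × ℕ) : ℕ := (q * w.1 + ε * w.2 : ℤ).natAbs

section CrossPoint

variable {q : ℕ} {t : Σ _ : ℕ, ℕ × ℕ}

lemma overlapProduct_eq_crossForm (ht : t ∈ positionPairs q) :
    overlapProduct q t = crossForm q ((-1) ^ (t.2.2 - t.2.1)) (crossPoint q t) := by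
  obtain ⟨ha, hij, hj⟩ := mem_positionPairs.1 ht
  have hdet := leftContinuant_mul_rightContinuant ha hij hj
  rw [overlapProduct, crossForm, crossPoint, ← Int.natAbs_natCast (_ * _)]
  push_cast
  rw [hdet]

lemma crossPoint_fst_pos (ht : t ∈ positionPairs q) : 0 < (crossPoint q t).1 :=
  continuant_pos (middleQuotients_pos (mem_positionPairs.1 ht).1)

lemma crossPoint_snd_pos (ht : t ∈ positionPairs q) : 0 < (crossPoint q t).2 :=
  Nat.mul_pos (leftContinuant_pos (mem_positionPairs.1 ht).1)
    (rightContinuant_pos (mem_positionPairs.1 ht).1)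

lemma overlapProduct_pos (ht : t ∈ positionPairs q) : 0 < overlapProduct q t :=
  Nat.mul_pos (leftContinuant_pos (mem_positionPairs.1 ht).1)
    (rightContinuant_pos (mem_positionPairs.1 ht).1)

lemma mul_crossPoint_fst_le (ht : t ∈ positionPairs q) :
    q * (crossPoint q t).1 ≤ 2 * overlapProduct q t := by
  obtain ⟨ha, hij, hj⟩ := mem_positionPairs.1 ht
  have hle : (crossPoint q t).2 ≤ overlapProduct q t :=
    Nat.mul_le_mul (leftContinuant_le_leftContinuant ha hij hj)
      (rightContinuant_le_rightContinuant ha hij hj)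
  have hform := overlapProduct_eq_crossForm ht
  rw [crossForm] at hform
  rcases Int.units_eq_one_or ((-1) ^ (t.2.2 - t.2.1)) with hε | hε <;>
    rw [hε] at hform <;> push_cast at hform <;> zify at hle ⊢ <;> lia

lemma partialQuotient_mul_partialQuotient_mul_crossPoint_le (ht : t ∈ positionPairs q) :
    partialQuotient q t.1 t.2.1 * partialQuotient q t.1 t.2.2 *
      ((crossPoint q t).1 * (crossPoint q t).2) ≤ 2 * q := by
  obtain ⟨ha, hij, hj⟩ := mem_positionPairs.1 ht
  set b := partialQuotient q t.1 t.2.1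
  set c := partialQuotient q t.1 t.2.2
  have hq : 0 < q := (Nat.zero_le _).trans_lt (mem_reducedResidues.1 ha).1
  refine Nat.le_of_mul_le_mul_right ?_ hq
  calc b * c * ((crossPoint q t).1 * (crossPoint q t).2) * q
      = b * c * (crossPoint q t).2 * (q * (crossPoint q t).1) := by ring
    _ ≤ b * c * (crossPoint q t).2 * (2 * overlapProduct q t) :=
        Nat.mul_le_mul_left _ (mul_crossPoint_fst_le ht)
    _ = 2 * ((b * (leftContinuant q t.1 t.2.1 * rightContinuant q t.1 t.2.1)) *
          (c * (leftContinuant q t.1 t.2.2 * rightContinuant q t.1 t.2.2))) := by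
        rw [crossPoint, overlapProduct]
        ring
    _ ≤ 2 * (q * q) := Nat.mul_le_mul_left _
        (Nat.mul_le_mul (partialQuotient_mul_le ha (hij.trans hj)) (partialQuotient_mul_le ha hj))
    _ = 2 * q * q := by ring

lemma partialQuotient_le {a i : ℕ} (ha : a ∈ reducedResidues q) (hi : i < (cfList q a).length) :
    partialQuotient q a i ≤ q :=
  (Nat.le_mul_of_pos_right _ (Nat.mul_pos (leftContinuant_pos ha) (rightContinuant_pos ha))).trans
    (partialQuotient_mul_le ha hi)

lemma one_add_log_partialQuotient_le {a i : ℕ} (ha : a ∈ reducedResidues q)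
    (hi : i < (cfList q a).length) : 1 + log (partialQuotient q a i) ≤ 1 + log q := by
  have hpos := partialQuotient_pos ha hi
  gcongr
  exact partialQuotient_le ha hi

lemma weight_mul_weight_le_div_sqrt_crossPoint (ht : t ∈ positionPairs q) :
    weight (partialQuotient q t.1 t.2.1) * weight (partialQuotient q t.1 t.2.2) ≤
      (1 + log q) ^ 2 * √(2 * q) * (1 / √((crossPoint q t).1 * (crossPoint q t).2 : ℝ)) := by
  obtain ⟨ha, hij, hj⟩ := mem_positionPairs.1 ht
  have hb := one_add_log_partialQuotient_le ha (hij.trans hj)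
  have hc := one_add_log_partialQuotient_le ha hj
  have hle := partialQuotient_mul_partialQuotient_mul_crossPoint_le ht
  have hlogc := log_natCast_nonneg (partialQuotient q t.1 t.2.2)
  have hpos : (0 : ℝ) < (crossPoint q t).1 * (crossPoint q t).2 := by
    exact_mod_cast Nat.mul_pos (crossPoint_fst_pos ht) (crossPoint_snd_pos ht)
  rw [weight, weight]
  set b := partialQuotient q t.1 t.2.1
  set c := partialQuotient q t.1 t.2.2
  have hsqrt : √(b : ℝ) * √c ≤ √(2 * q) * (1 / √((crossPoint q t).1 * (crossPoint q t).2 : ℝ)) := by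
    rw [mul_one_div, ← sqrt_div (by positivity), ← sqrt_mul (by positivity)]
    refine sqrt_le_sqrt ((le_div_iff₀ hpos).2 ?_)
    exact_mod_cast hle
  calc √(b : ℝ) * (1 + log b) * (√(c : ℝ) * (1 + log c))
      = √(b : ℝ) * √c * ((1 + log b) * (1 + log c)) := by ring
    _ ≤ √(2 * q) * (1 / √((crossPoint q t).1 * (crossPoint q t).2 : ℝ)) *
          ((1 + log q) * (1 + log q)) := by gcongr
    _ = _ := by ring

lemma crossPoint_mem_hyperbolicRegion {T : ℝ} (ht : t ∈ positionPairs q) (hT : 2 ≤ T)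
    (hb : T < partialQuotient q t.1 t.2.1) (hc : T < partialQuotient q t.1 t.2.2) :
    crossPoint q t ∈ hyperbolicRegion q (2 * q / T ^ 2) := by
  have hm := crossPoint_fst_pos ht
  have hn := crossPoint_snd_pos ht
  have hle : (partialQuotient q t.1 t.2.1 * partialQuotient q t.1 t.2.2 *
      ((crossPoint q t).1 * (crossPoint q t).2) : ℝ) ≤ 2 * q := by
    exact_mod_cast partialQuotient_mul_partialQuotient_mul_crossPoint_le ht
  have hZ : T ^ 2 * ((crossPoint q t).1 * (crossPoint q t).2) ≤ 2 * (q : ℝ) := by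
    rw [sq]
    refine le_trans ?_ hle
    gcongr
  have hmn : (crossPoint q t).1 * (crossPoint q t).2 ≤ q := by
    have hT_sq : 2 * ((crossPoint q t).1 * (crossPoint q t).2 : ℝ) ≤
        T ^ 2 * ((crossPoint q t).1 * (crossPoint q t).2) := by
      gcongr
      nlinarith
    have : ((crossPoint q t).1 * (crossPoint q t).2 : ℝ) ≤ q := by linarith
    exact_mod_cast this
  exact mem_hyperbolicRegion.2 ⟨⟨hm, (Nat.le_mul_of_pos_right _ hn).trans hmn⟩,
    ⟨hn, (Nat.le_mul_of_pos_left _ hm).trans hmn⟩, (le_div_iff₀' (by positivity)).2 hZ⟩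

lemma positionPair_ext_of_continuants (hq : q.Prime) {t' : Σ _ : ℕ, ℕ × ℕ}
    (ht : t ∈ positionPairs q) (ht' : t' ∈ positionPairs q)
    (hcross : (crossPoint q t).2 = (crossPoint q t').2)
    (hoverlap : overlapProduct q t = overlapProduct q t')
    (hxi : leftContinuant q t.1 t.2.1 = leftContinuant q t'.1 t'.2.1)
    (hxj : leftContinuant q t.1 t.2.2 = leftContinuant q t'.1 t'.2.2)
    (hi : t.2.1 % 2 = t'.2.1 % 2) (hj : t.2.2 % 2 = t'.2.2 % 2) : t = t' := by
  obtain ⟨ha, hij, hjlt⟩ := mem_positionPairs.1 ht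
  obtain ⟨ha', hij', hjlt'⟩ := mem_positionPairs.1 ht'
  have hyj : rightContinuant q t.1 t.2.2 = rightContinuant q t'.1 t'.2.2 := by
    rw [crossPoint, crossPoint, hxi] at hcross
    exact Nat.eq_of_mul_eq_mul_left (leftContinuant_pos ha') hcross
  have hyi : rightContinuant q t.1 t.2.1 = rightContinuant q t'.1 t'.2.1 := by
    rw [overlapProduct, overlapProduct, hxj] at hoverlap
    exact Nat.eq_of_mul_eq_mul_left (leftContinuant_pos ha') hoverlap
  obtain ⟨haa, hii⟩ :=
    position_ext hq ha (hij.trans hjlt) ha' (hij'.trans hjlt') hxi hyi hi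
  obtain ⟨-, hjj⟩ := position_ext hq ha hjlt ha' hjlt' hxj hyj hj
  obtain ⟨a, i, j⟩ := t
  obtain ⟨a', i', j'⟩ := t'
  obtain rfl : a = a' := haa
  obtain rfl : i = i' := hii
  obtain rfl : j = j' := hjj
  rfl

/-- The point `(m, n)` and the sign determine `x_i y_j = n` and `x_j y_i = |q m + ε n|`, so a pair
is pinned down by the divisors `x_i`, `x_j` of these numbers and the parities of `i`, `j`. -/
lemma card_filter_crossPoint_eq_le (hq : q.Prime) {A : Finset (Σ _ : ℕ, ℕ × ℕ)} {ε : ℤˣ}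
    (hA : A ⊆ positionPairs q) (hε : ∀ t ∈ A, (-1) ^ (t.2.2 - t.2.1) = ε) (w : ℕ × ℕ) :
    #{t ∈ A | crossPoint q t = w} ≤ 4 * (#w.2.divisors * #(crossForm q ε w).divisors) := by
  have hform : ∀ t ∈ A, crossPoint q t = w → overlapProduct q t = crossForm q ε w :=
    fun t ht hw => by rw [overlapProduct_eq_crossForm (hA ht), hε t ht, hw]
  have hcard := card_le_card_of_injOn (s := {t ∈ A | crossPoint q t = w})
    (t := (range 2 ×ˢ range 2) ×ˢ (w.2.divisors ×ˢ (crossForm q ε w).divisors))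
    (fun t => ((t.2.1 % 2, t.2.2 % 2), (leftContinuant q t.1 t.2.1, leftContinuant q t.1 t.2.2)))
    ?_ ?_
  · simpa only [card_product, card_range] using hcard
  · intro t ht
    obtain ⟨htA, rfl⟩ := mem_filter.1 ht
    rw [← hform t htA rfl]
    simp only [coe_product, Set.mem_prod, mem_coe, Nat.mem_divisors, mem_range]
    exact ⟨⟨Nat.mod_lt _ two_pos, Nat.mod_lt _ two_pos⟩,
      ⟨Dvd.intro _ rfl, (crossPoint_snd_pos (hA htA)).ne'⟩,
      Dvd.intro _ rfl, (overlapProduct_pos (hA htA)).ne'⟩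
  · intro t ht t' ht' heq
    obtain ⟨htA, hw⟩ := mem_filter.1 ht
    obtain ⟨htA', hw'⟩ := mem_filter.1 ht'
    simp only [Prod.mk.injEq] at heq
    exact positionPair_ext_of_continuants hq (hA htA) (hA htA') (by rw [hw, hw'])
      ((hform t htA hw).trans (hform t' htA' hw').symm) heq.2.1 heq.2.2 heq.1.1 heq.1.2

lemma sum_one_div_sqrt_crossPoint_le (hq : q.Prime) {A : Finset (Σ _ : ℕ, ℕ × ℕ)} {ε : ℤˣ}
    (hA : A ⊆ positionPairs q) (hε : ∀ t ∈ A, (-1) ^ (t.2.2 - t.2.1) = ε)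
    {W : Finset (ℕ × ℕ)} (hW : ∀ t ∈ A, crossPoint q t ∈ W) :
    ∑ t ∈ A, 1 / √((crossPoint q t).1 * (crossPoint q t).2 : ℝ) ≤
      4 * ∑ w ∈ W, (#w.2.divisors * #(crossForm q ε w).divisors : ℝ) / √(w.1 * w.2 : ℝ) := by
  rw [← sum_fiberwise_of_maps_to hW, mul_sum]
  refine sum_le_sum fun w _ => ?_
  have hcard : (#{t ∈ A | crossPoint q t = w} : ℝ) ≤
      4 * (#w.2.divisors * #(crossForm q ε w).divisors) := by
    exact_mod_cast card_filter_crossPoint_eq_le hq hA hε w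
  calc ∑ t ∈ A with crossPoint q t = w, 1 / √((crossPoint q t).1 * (crossPoint q t).2 : ℝ)
      = #{t ∈ A | crossPoint q t = w} * (1 / √(w.1 * w.2 : ℝ)) := by
        rw [← nsmul_eq_mul, ← sum_const]
        exact sum_congr rfl fun t ht => by rw [(mem_filter.1 ht).2]
    _ ≤ 4 * (#w.2.divisors * #(crossForm q ε w).divisors) * (1 / √(w.1 * w.2 : ℝ)) := by gcongr
    _ = 4 * ((#w.2.divisors * #(crossForm q ε w).divisors : ℝ) / √(w.1 * w.2 : ℝ)) := by ring

end CrossPoint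

lemma dvd_crossForm_iff {q e : ℕ} {ε : ℤˣ} {w : ℕ × ℕ} :
    e ∣ crossForm q ε w ↔ (e : ℤ) ∣ q * w.1 + ε * w.2 := Int.natCast_dvd.symm

lemma snd_modEq_of_dvd_crossForm {q e : ℕ} {ε : ℤˣ} {w w' : ℕ × ℕ} (hw : e ∣ crossForm q ε w)
    (hw' : e ∣ crossForm q ε w') (heq : w.1 = w'.1) : w.2 ≡ w'.2 [MOD e] := by
  have hdvd := dvd_sub (dvd_crossForm_iff.1 hw') (dvd_crossForm_iff.1 hw)
  rw [heq, add_sub_add_left_eq_sub, ← mul_sub, Units.dvd_mul_left] at hdvd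
  exact Nat.modEq_iff_dvd.2 hdvd

lemma fst_modEq_of_dvd_crossForm {q e : ℕ} {ε : ℤˣ} {w w' : ℕ × ℕ} (he : e.Coprime q)
    (hw : e ∣ crossForm q ε w) (hw' : e ∣ crossForm q ε w') (heq : w.2 = w'.2) :
    w.1 ≡ w'.1 [MOD e] := by
  have hdvd := dvd_sub (dvd_crossForm_iff.1 hw') (dvd_crossForm_iff.1 hw)
  rw [heq, add_sub_add_right_eq_sub, ← mul_sub] at hdvd
  exact Nat.modEq_iff_dvd.2 ((Nat.isCoprime_iff_coprime.2 he).dvd_of_dvd_mul_left hdvd)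

lemma crossForm_pos_and_le {q : ℕ} {Z : ℝ} (hZ : 2 * Z ≤ q) (ε : ℤˣ) {w : ℕ × ℕ}
    (hw : w ∈ hyperbolicRegion q Z) : 0 < crossForm q ε w ∧ crossForm q ε w ≤ q ^ 2 := by
  obtain ⟨⟨hm, -⟩, ⟨hn, -⟩, hle⟩ := mem_hyperbolicRegion.1 hw
  have hmn : 2 * (w.1 * w.2) ≤ q := by
    have : 2 * (w.1 * w.2 : ℝ) ≤ q := by linarith
    exact_mod_cast this
  have hm_le : 2 * w.1 ≤ q := by nlinarith
  have hn_le : 2 * w.2 ≤ q := by nlinarith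
  have hqm : q ≤ q * w.1 := Nat.le_mul_of_pos_right q hm
  have hqm' : 2 * (q * w.1) ≤ q ^ 2 := by nlinarith
  rw [crossForm, ← Nat.cast_mul]
  rcases Int.units_eq_one_or ε with rfl | rfl <;> simp only [Units.val_one, Units.val_neg] <;>
    lia

lemma sum_card_divisors_crossForm_sq_le {k q : ℕ} (hq : q.Prime) (ε : ℤˣ) {Z R : ℝ} (hR : 1 ≤ R)
    (hRq : R < q) (hqR : (q : ℝ) ^ 2 ≤ R ^ k) (hRZ : R ^ 4 ≤ Z) (hZ : 2 * Z ≤ q) :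
    ∑ w ∈ hyperbolicRegion q Z, (#(crossForm q ε w).divisors : ℝ) ^ 2 / √(w.1 * w.2 : ℝ) ≤
      6 * 2 ^ (k * 2) * √Z * (1 + log q) ^ (2 ^ (k * 2) + 1) := by
  refine sum_card_divisors_sq_div_sqrt_le hR hRZ hRq.le (fun w hw => ?_)
    (fun e _ w _ w' _ => snd_modEq_of_dvd_crossForm) fun e he w hw w' _ hdvd =>
      fst_modEq_of_dvd_crossForm ?_ hdvd
  · obtain ⟨hpos, hle⟩ := crossForm_pos_and_le hZ ε hw
    exact ⟨hpos, le_trans (by exact_mod_cast hle) hqR⟩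
  · have hpos : 0 < e := Nat.pos_of_dvd_of_pos hdvd (crossForm_pos_and_le hZ ε hw).1
    have hlt : e < q := by exact_mod_cast he.trans_lt hRq
    exact (Nat.coprime_of_lt_prime hpos.ne' hlt hq).symm

lemma exists_sum_card_divisors_crossForm_sq_le : ∃ (C : ℝ) (E : ℕ), 0 < C ∧ ∀ q : ℕ, q.Prime →
    ∀ (ε : ℤˣ) (Z : ℝ), √q ≤ Z → 2 * Z ≤ q →
      ∑ w ∈ hyperbolicRegion q Z, (#(crossForm q ε w).divisors : ℝ) ^ 2 / √(w.1 * w.2 : ℝ) ≤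
        C * √Z * (1 + log q) ^ E := by
  obtain ⟨k, hk⟩ : ∃ k : ℕ, k = 16 := ⟨16, rfl⟩
  refine ⟨6 * 2 ^ (k * 2), 2 ^ (k * 2) + 1, by positivity, fun q hq ε Z hqZ hZ => ?_⟩
  have hq_one : (1 : ℝ) < q := by exact_mod_cast hq.one_lt
  have hpow : ∀ n : ℕ, ((q : ℝ) ^ (1 / 8 : ℝ)) ^ n = (q : ℝ) ^ (n / 8 : ℝ) := fun n => by
    rw [← rpow_natCast, ← rpow_mul (by positivity)]
    ring_nf
  refine sum_card_divisors_crossForm_sq_le (R := (q : ℝ) ^ (1 / 8 : ℝ)) hq ε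
    (one_le_rpow hq_one.le (by norm_num)) ?_ ?_ ?_ hZ
  · exact rpow_lt_self_of_one_lt hq_one (by norm_num)
  · rw [hpow, hk, ← rpow_natCast]
    norm_num
  · rw [hpow]
    refine le_of_eq_of_le ?_ hqZ
    rw [sqrt_eq_rpow]
    norm_num

lemma sum_mul_div_le_sum_sq_add_sum_sq {ι : Type*} (W : Finset ι) (u v : ι → ℝ) {s : ι → ℝ}
    (hs : ∀ w ∈ W, 0 ≤ s w) :
    ∑ w ∈ W, u w * v w / s w ≤ (∑ w ∈ W, u w ^ 2 / s w + ∑ w ∈ W, v w ^ 2 / s w) / 2 := by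
  rw [← sum_add_distrib, sum_div]
  refine sum_le_sum fun w hw => ?_
  rw [← add_div, div_right_comm]
  have := hs w hw
  gcongr
  linarith [two_mul_le_add_sq (u w) (v w)]

lemma sqrt_le_two_mul_div_sq_and_le {x T : ℝ} (hT : 2 ≤ T) (hTx : T ^ 4 ≤ x) :
    √x ≤ 2 * x / T ^ 2 ∧ 2 * (2 * x / T ^ 2) ≤ x := by
  have hT_pos : 0 < T ^ 2 := by positivity
  have hx : 0 ≤ x := le_trans (by positivity) hTx
  have hsqrt : T ^ 2 ≤ √x := le_sqrt_of_sq_le (by rwa [← pow_mul])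
  constructor
  · rw [le_div_iff₀ hT_pos]
    nlinarith [sq_sqrt hx, sqrt_nonneg x]
  · rw [← mul_div_assoc, div_le_iff₀ hT_pos]
    have hT_sq : 2 ^ 2 ≤ T ^ 2 := by gcongr
    nlinarith

lemma exists_sum_pairs_large_of_sign_le : ∃ (C : ℝ) (E : ℕ), 0 < C ∧ ∀ q : ℕ, q.Prime →
    ∀ (ε : ℤˣ) (T : ℝ), 2 ≤ T → T ^ 4 ≤ q → ∀ A ⊆ positionPairs q,
      (∀ t ∈ A, (-1) ^ (t.2.2 - t.2.1) = ε) →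
      (∀ t ∈ A, T < partialQuotient q t.1 t.2.1 ∧ T < partialQuotient q t.1 t.2.2) →
      ∑ t ∈ A, weight (partialQuotient q t.1 t.2.1) * weight (partialQuotient q t.1 t.2.2) ≤
        C * q * (1 + log q) ^ E / T := by
  obtain ⟨C, E, hC, hform⟩ := exists_sum_card_divisors_crossForm_sq_le
  refine ⟨4 * (1 + C), E + 7, by positivity, fun q hq ε T hT hTq A hA hε hlarge => ?_⟩
  have hlog := log_natCast_nonneg q
  set Z : ℝ := 2 * q / T ^ 2 with hZdef
  obtain ⟨hqZ, hZ⟩ : √q ≤ Z ∧ 2 * Z ≤ q := sqrt_le_two_mul_div_sq_and_le hT hTq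
  have hsqrt : √(2 * q) * √Z = 2 * q / T := by
    rw [hZdef, sqrt_div (by positivity), sqrt_sq (by positivity), ← mul_div_assoc,
      mul_self_sqrt (by positivity)]
  have hdiv := sum_mul_div_le_sum_sq_add_sum_sq (hyperbolicRegion q Z)
    (fun w => (#w.2.divisors : ℝ)) (fun w => (#(crossForm q ε w).divisors : ℝ))
    (s := fun w => √(w.1 * w.2 : ℝ)) fun w _ => sqrt_nonneg _
  have hsum := sum_one_div_sqrt_crossPoint_le hq hA hε fun t ht =>
    crossPoint_mem_hyperbolicRegion (hA ht) hT (hlarge t ht).1 (hlarge t ht).2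
  calc ∑ t ∈ A, weight (partialQuotient q t.1 t.2.1) * weight (partialQuotient q t.1 t.2.2)
      ≤ ∑ t ∈ A, (1 + log q) ^ 2 * √(2 * q) *
          (1 / √((crossPoint q t).1 * (crossPoint q t).2 : ℝ)) :=
        sum_le_sum fun t ht => weight_mul_weight_le_div_sqrt_crossPoint (hA ht)
    _ ≤ (1 + log q) ^ 2 * √(2 * q) *
          (4 * ((√Z * (1 + log q) ^ 5 + C * √Z * (1 + log q) ^ E) / 2)) := by
        rw [← mul_sum]
        gcongr
        refine hsum.trans (mul_le_mul_of_nonneg_left (hdiv.trans ?_) (by norm_num))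
        gcongr
        · exact sum_card_divisors_snd_sq_div_sqrt_le q Z
        · exact hform q hq ε Z hqZ hZ
    _ = 2 * q / T * (2 * (1 + log q) ^ 7 + 2 * C * (1 + log q) ^ (E + 2)) := by
        rw [← hsqrt]
        ring
    _ ≤ 2 * q / T * (2 * (1 + log q) ^ (E + 7) + 2 * C * (1 + log q) ^ (E + 7)) := by
        gcongr <;> linarith
    _ = 4 * (1 + C) * q * (1 + log q) ^ (E + 7) / T := by ring

lemma exists_sum_pairs_large_le : ∃ (C : ℝ) (E : ℕ), 0 < C ∧ ∀ q : ℕ, q.Prime → ∀ T : ℝ, 2 ≤ T →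
    T ^ 4 ≤ q → ∑ t ∈ positionPairs q with
        T < (partialQuotient q t.1 t.2.1 : ℝ) ∧ T < (partialQuotient q t.1 t.2.2 : ℝ),
      weight (partialQuotient q t.1 t.2.1) * weight (partialQuotient q t.1 t.2.2) ≤
        C * q * (1 + log q) ^ E / T := by
  obtain ⟨C, E, hC, hsign⟩ := exists_sum_pairs_large_of_sign_le
  refine ⟨2 * C, E, by positivity, fun q hq T hT hTq => ?_⟩
  rw [← sum_fiberwise _ fun t => (-1 : ℤˣ) ^ (t.2.2 - t.2.1)]
  refine (sum_le_card_nsmul univ _ (C * q * (1 + log q) ^ E / T) fun ε _ => ?_).trans_eq ?_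
  · refine hsign q hq ε T hT hTq _ ((filter_subset _ _).trans (filter_subset _ _)) ?_ ?_
    · exact fun t ht => (mem_filter.1 ht).2
    · exact fun t ht => (mem_filter.1 (mem_filter.1 ht).1).2
  · rw [card_univ, Fintype.card_units_int, nsmul_eq_mul]
    push_cast
    ring

lemma exists_one_add_pow_three_pow_le_exp (E : ℕ) :
    ∃ C : ℝ, 0 < C ∧ ∀ y : ℝ, 0 ≤ y → (1 + y ^ 3) ^ E ≤ C * exp y := by
  refine ⟨(3 * E).factorial * exp 1, by positivity, fun y hy => ?_⟩
  calc (1 + y ^ 3) ^ E ≤ ((1 + y) ^ 3) ^ E := by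
        gcongr
        nlinarith [pow_nonneg hy 2]
    _ = (1 + y) ^ (3 * E) := by rw [← pow_mul]
    _ ≤ (3 * E).factorial * exp (1 + y) :=
        (div_le_iff₀' (by positivity)).1 (pow_div_factorial_le_exp (1 + y) (by positivity) (3 * E))
    _ = (3 * E).factorial * exp 1 * exp y := by rw [exp_add, mul_assoc]

lemma sum_positionPairs_le_small_add_large_add_mixed (q : ℕ) {T : ℝ} (hT : 1 ≤ T) :
    ∑ t ∈ positionPairs q,
        weight (partialQuotient q t.1 t.2.1) * weight (partialQuotient q t.1 t.2.2) ≤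
      ∑ t ∈ positionPairs q with (partialQuotient q t.1 t.2.1 : ℝ) ≤ T ^ 8 ∧
          (partialQuotient q t.1 t.2.2 : ℝ) ≤ T ^ 8,
        weight (partialQuotient q t.1 t.2.1) * weight (partialQuotient q t.1 t.2.2) +
      ∑ t ∈ positionPairs q with T < (partialQuotient q t.1 t.2.1 : ℝ) ∧
          T < (partialQuotient q t.1 t.2.2 : ℝ),
        weight (partialQuotient q t.1 t.2.1) * weight (partialQuotient q t.1 t.2.2) +
      ∑ t ∈ positionPairs q with
          T ^ 8 < (partialQuotient q t.1 t.2.1 : ℝ) ∧ (partialQuotient q t.1 t.2.2 : ℝ) ≤ T ∨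
          T ^ 8 < (partialQuotient q t.1 t.2.2 : ℝ) ∧ (partialQuotient q t.1 t.2.1 : ℝ) ≤ T,
        weight (partialQuotient q t.1 t.2.1) * weight (partialQuotient q t.1 t.2.2) := by
  simp only [sum_filter, ← sum_add_distrib]
  refine sum_le_sum fun t _ => ?_
  have hT8 : T ≤ T ^ 8 := le_self_pow₀ hT (by norm_num)
  have hweight := mul_nonneg (weight_nonneg (partialQuotient q t.1 t.2.1))
    (weight_nonneg (partialQuotient q t.1 t.2.2))
  grind

/-- The threshold `T = exp (L^{1/3})` exceeds every fixed power of `L`, while the cube of `log T` is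
only `L`. -/
lemma exists_threshold (E : ℕ) : ∃ C : ℝ, 0 < C ∧ ∀ L : ℝ, 8 ≤ L → ∃ T : ℝ, 2 ≤ T ∧
    T ^ 4 ≤ exp L ∧ (1 + log (T ^ 8)) ^ 3 ≤ 2048 * (1 + L) ∧ (1 + L) ^ E ≤ C * T := by
  obtain ⟨C, hC, hexp⟩ := exists_one_add_pow_three_pow_le_exp E
  refine ⟨C, hC, fun L hL => ?_⟩
  obtain ⟨y, hy, rfl⟩ : ∃ y : ℝ, 2 ≤ y ∧ y ^ 3 = L := by
    have hcube : (L ^ ((3 : ℕ) : ℝ)⁻¹) ^ 3 = L := rpow_inv_natCast_pow (by linarith) three_ne_zero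
    refine ⟨_, ?_, hcube⟩
    rw [← pow_le_pow_iff_left₀ zero_le_two (by positivity) three_ne_zero, hcube]
    linarith
  have hy_nonneg : 0 ≤ y := zero_le_two.trans hy
  refine ⟨exp y, by linarith [add_one_le_exp y], ?_, ?_, hexp y hy_nonneg⟩
  · rw [← exp_nat_mul, exp_le_exp]
    push_cast
    nlinarith [mul_nonneg hy_nonneg (sub_nonneg.2 hy)]
  · rw [log_pow, log_exp]
    push_cast
    nlinarith [mul_nonneg hy_nonneg (sq_nonneg (y - 1))]

lemma exists_sum_pairs_le_of_eight_le_log : ∃ C : ℝ, 0 < C ∧ ∀ q : ℕ, q.Prime → 8 ≤ log q →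
    ∑ t ∈ positionPairs q,
      weight (partialQuotient q t.1 t.2.1) * weight (partialQuotient q t.1 t.2.2) ≤
        C * q * (1 + log q) ^ 2 := by
  obtain ⟨C, hC, hsmall⟩ := exists_sum_pairs_small_le
  obtain ⟨C', E, hC', hlarge⟩ := exists_sum_pairs_large_le
  obtain ⟨D, hD, hthreshold⟩ := exists_threshold (E + 3)
  refine ⟨C * 2049 + (C' + 256) * D, by positivity, fun q hq hlog => ?_⟩
  obtain ⟨T, hT, hTq, hlogT, hpow⟩ := hthreshold _ hlog
  rw [exp_log (by exact_mod_cast hq.pos)] at hTq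
  have hone : 1 ≤ 1 + log q := by linarith
  have hdiv : ∀ k ≤ E + 3, (1 + log q) ^ k / T ≤ D := fun k hk =>
    (div_le_iff₀ (by linarith)).2 ((pow_le_pow_right₀ hone hk).trans hpow)
  calc _ ≤ C * q * ((1 + log q) ^ 2 + (1 + log q) * (1 + log (T ^ 8)) ^ 3) +
          C' * q * (1 + log q) ^ E / T + 256 * q * (1 + log q) ^ 3 / T :=
        (sum_positionPairs_le_small_add_large_add_mixed q (by linarith)).trans
          (add_le_add (add_le_add (hsmall q hq _ (one_le_pow₀ (by linarith)))
            (hlarge q hq T hT hTq)) (sum_pairs_large_small_le hq (by linarith)))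
    _ ≤ C * q * ((1 + log q) ^ 2 + (1 + log q) * (2048 * (1 + log q))) + C' * q * D +
          256 * q * D := by
        rw [mul_div_assoc, mul_div_assoc]
        gcongr
        · exact hdiv E (by lia)
        · exact hdiv 3 (by lia)
    _ = C * 2049 * q * (1 + log q) ^ 2 + (C' + 256) * D * q * 1 := by ring
    _ ≤ C * 2049 * q * (1 + log q) ^ 2 + (C' + 256) * D * q * (1 + log q) ^ 2 := by
        gcongr
        exact one_le_pow₀ hone
    _ = _ := by ring

lemma exists_sum_pairs_le : ∃ C : ℝ, 0 < C ∧ ∀ q : ℕ, q.Prime →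
    ∑ t ∈ positionPairs q,
      weight (partialQuotient q t.1 t.2.1) * weight (partialQuotient q t.1 t.2.2) ≤
        C * q * (1 + log q) ^ 2 := by
  obtain ⟨C, hC, hsmall⟩ := exists_sum_pairs_small_le
  obtain ⟨C', hC', hlarge⟩ := exists_sum_pairs_le_of_eight_le_log
  refine ⟨82 * C + C', by positivity, fun q hq => ?_⟩
  have hbound : 0 ≤ q * (1 + log q) ^ 2 := by positivity
  rcases le_or_gt 8 (log q) with hlog8 | hlog8
  · nlinarith [hlarge q hq hlog8]
  have hle : ∀ t ∈ positionPairs q, (partialQuotient q t.1 t.2.1 : ℝ) ≤ q ∧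
      (partialQuotient q t.1 t.2.2 : ℝ) ≤ q := fun t ht => by
    obtain ⟨ha, hij, hj⟩ := mem_positionPairs.1 ht
    exact ⟨Nat.cast_le.2 (partialQuotient_le ha (hij.trans hj)),
      Nat.cast_le.2 (partialQuotient_le ha hj)⟩
  rw [← filter_true_of_mem hle]
  calc _ ≤ C * q * ((1 + log q) ^ 2 + (1 + log q) * (1 + log q) ^ 3) :=
        hsmall q hq q (by exact_mod_cast hq.one_le)
    _ = C * q * (1 + log q) ^ 2 * (1 + (1 + log q) ^ 2) := by ring
    _ ≤ C * q * (1 + log q) ^ 2 * (1 + (1 + 8) ^ 2) := by gcongr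
    _ ≤ (82 * C + C') * q * (1 + log q) ^ 2 := by nlinarith [mul_nonneg hC'.le hbound]

/-! ### Logarithmic sums over the hyperbola -/

lemma abs_sum_one_div_sub_log_add_eulerMascheroniConstant_le {t : ℝ} (ht : 1 ≤ t) :
    |∑ n ∈ Icc 1 ⌊t⌋₊, 1 / (n : ℝ) - (log t + eulerMascheroniConstant)| ≤ 2 / t := by
  set N := ⌊t⌋₊
  have hN : 1 ≤ N := (Nat.one_le_floor_iff _).2 ht
  have hN_pos : (0 : ℝ) < N := by exact_mod_cast hN
  have hNt : (N : ℝ) ≤ t := Nat.floor_le (by linarith)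
  have htN : t < N + 1 := Nat.lt_floor_add_one t
  have hharmonic : ∑ n ∈ Icc 1 N, 1 / (n : ℝ) = harmonic N := by
    simp only [harmonic_eq_sum_Icc, one_div, Rat.cast_sum, Rat.cast_inv, Rat.cast_natCast]
  have hlower := eulerMascheroniSeq_lt_eulerMascheroniConstant N
  have hupper := eulerMascheroniConstant_lt_eulerMascheroniSeq' N
  rw [eulerMascheroniSeq] at hlower
  rw [eulerMascheroniSeq', if_neg (by lia)] at hupper
  have hstep : log (N + 1) - log N ≤ 1 / N := by
    rw [← log_div (by positivity) hN_pos.ne']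
    refine (log_le_sub_one_of_pos (by positivity)).trans_eq ?_
    field_simp
    ring
  have hlogN : log N ≤ log t := log_le_log hN_pos hNt
  have hlogN' : log t ≤ log (N + 1) := log_le_log (by linarith) htN.le
  have hdiv : 1 / (N : ℝ) ≤ 2 / t := by
    rw [div_le_div_iff₀ hN_pos (by linarith)]
    have : (1 : ℝ) ≤ N := by exact_mod_cast hN
    linarith
  rw [hharmonic, abs_le]
  constructor <;> linarith

section LogPowerSum

variable (k : ℕ) {Y t : ℝ}

lemma hasDerivAt_log_div_pow (hY : Y ≠ 0) (ht : t ≠ 0) :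
    HasDerivAt (fun t => log (Y / t) ^ (k + 1)) (-((k + 1) * log (Y / t) ^ k / t)) t := by
  have hdiv : HasDerivAt (fun t => Y / t) (-Y / t ^ 2) t := by
    simpa using (hasDerivAt_const t Y).fun_div (hasDerivAt_id' t) ht
  refine ((hdiv.log (div_ne_zero hY ht)).fun_pow (k + 1)).congr_deriv ?_
  rw [Nat.add_sub_cancel]
  push_cast
  field_simp

lemma continuousOn_log_div_pow_div (hY : 0 < Y) :
    ContinuousOn (fun t => (k + 1) * log (Y / t) ^ k / t) (Set.Icc 1 Y) := by
  have hne : ∀ t ∈ Set.Icc 1 Y, t ≠ 0 := fun t ht => (zero_lt_one.trans_le ht.1).ne'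
  refine ContinuousOn.div ?_ continuousOn_id hne
  exact continuousOn_const.mul (((continuousOn_const.div continuousOn_id hne).log
    fun t ht => div_ne_zero hY.ne' (hne t ht)).pow k)

lemma intervalIntegrable_log_div_pow_mul (hY : 1 ≤ Y) (c : ℝ) :
    IntervalIntegrable (fun t => (k + 1) * log (Y / t) ^ k / t * (log t + c))
      MeasureTheory.volume 1 Y :=
  ((continuousOn_log_div_pow_div k (by linarith)).mul
    ((continuousOn_log.mono fun _ ht => (zero_lt_one.trans_le ht.1).ne').add
      continuousOn_const)).intervalIntegrable_of_Icc hY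

lemma integral_log_div_pow_mul (hY : 1 ≤ Y) (c : ℝ) :
    ∫ t in (1 : ℝ)..Y, (k + 1) * log (Y / t) ^ k / t * (log t + c) =
      log Y ^ (k + 2) / (k + 2) + c * log Y ^ (k + 1) := by
  have hY_pos : 0 < Y := by linarith
  rw [intervalIntegral.integral_eq_sub_of_hasDerivAt (f := fun t =>
    -(log (Y / t) ^ (k + 1) * (log t + c) + log (Y / t) ^ (k + 2) / (k + 2)))]
  · simp [hY_pos.ne']
    ring
  · intro t ht
    rw [Set.uIcc_of_le hY] at ht
    have ht_ne : t ≠ 0 := (zero_lt_one.trans_le ht.1).ne'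
    refine ((((hasDerivAt_log_div_pow k hY_pos.ne' ht_ne).fun_mul
      ((hasDerivAt_log ht_ne).add_const c)).fun_add
      ((hasDerivAt_log_div_pow (k + 1) hY_pos.ne' ht_ne).div_const
        (k + 2 : ℝ))).fun_neg).congr_deriv ?_
    have : (k + 2 : ℝ) ≠ 0 := by positivity
    push_cast
    field_simp
    ring
  · exact intervalIntegrable_log_div_pow_mul k hY c

/-- Abel summation; the boundary term vanishes because `log (Y / Y) = 0`. -/
lemma sum_log_div_pow_eq_integral (hY : 1 ≤ Y) :
    ∑ n ∈ Icc 1 ⌊Y⌋₊, log (Y / n) ^ (k + 1) / n =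
      ∫ t in (1 : ℝ)..Y, (k + 1) * log (Y / t) ^ k / t * ∑ n ∈ Icc 1 ⌊t⌋₊, 1 / (n : ℝ) := by
  have hY_pos : 0 < Y := by linarith
  have hne : ∀ t ∈ Set.Icc 1 Y, t ≠ 0 := fun t ht => (zero_lt_one.trans_le ht.1).ne'
  have hderiv : ∀ t ∈ Set.Icc 1 Y,
      deriv (fun t => log (Y / t) ^ (k + 1)) t = -((k + 1) * log (Y / t) ^ k / t) :=
    fun t ht => (hasDerivAt_log_div_pow k hY_pos.ne' (hne t ht)).deriv
  have hIcc : ∀ (f : ℕ → ℝ) (N : ℕ), f 0 = 0 → ∑ n ∈ Icc 0 N, f n = ∑ n ∈ Icc 1 N, f n :=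
    fun f N hf => by rw [← add_sum_Ioc_eq_sum_Icc N.zero_le, hf, zero_add]; rfl
  have habel := sum_mul_eq_sub_integral_mul₀ (fun n : ℕ => 1 / (n : ℝ)) (by simp) Y
    (fun t ht => (hasDerivAt_log_div_pow k hY_pos.ne' (hne t ht)).differentiableAt)
    (((continuousOn_log_div_pow_div k hY_pos).neg.congr hderiv).integrableOn_Icc)
  rw [hIcc _ _ (by simp), hIcc _ _ (by simp), div_self hY_pos.ne', log_one,
    zero_pow k.succ_ne_zero, zero_mul, zero_sub, ← MeasureTheory.integral_neg] at habel
  rw [intervalIntegral.integral_of_le hY]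
  simp only [mul_one_div] at habel
  rw [habel]
  refine MeasureTheory.setIntegral_congr_fun measurableSet_Ioc fun t ht => ?_
  rw [hderiv t (Set.Ioc_subset_Icc_self ht), hIcc _ _ (by simp), neg_mul, neg_neg]

lemma integral_zpow_neg_two (hY : 1 ≤ Y) : ∫ t in (1 : ℝ)..Y, t ^ (-2 : ℤ) = 1 - 1 / Y := by
  rw [integral_zpow (Or.inr ⟨by lia, fun h => by
    rw [Set.uIcc_of_le hY] at h
    linarith [h.1]⟩)]
  norm_num
  ring

lemma abs_sum_log_div_pow_sub_le (hY : 1 ≤ Y) :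
    |∑ n ∈ Icc 1 ⌊Y⌋₊, log (Y / n) ^ (k + 1) / n -
        (log Y ^ (k + 2) / (k + 2) + eulerMascheroniConstant * log Y ^ (k + 1))| ≤
      2 * (k + 1) * log Y ^ k := by
  have hY_pos : 0 < Y := by linarith
  have hL : 0 ≤ log Y := log_nonneg hY
  have hne : ∀ t ∈ Set.Icc 1 Y, t ≠ 0 := fun t ht => (zero_lt_one.trans_le ht.1).ne'
  have hint_sum : IntervalIntegrable (fun t => (k + 1) * log (Y / t) ^ k / t *
      ∑ n ∈ Icc 1 ⌊t⌋₊, 1 / (n : ℝ)) MeasureTheory.volume 1 Y := by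
    rw [intervalIntegrable_iff_integrableOn_Icc_of_le hY]
    exact integrableOn_mul_sum_Icc _ zero_le_one
      (continuousOn_log_div_pow_div k hY_pos).integrableOn_Icc
  have hint_zpow : IntervalIntegrable (fun t : ℝ => (2 * (k + 1) * log Y ^ k) * t ^ (-2 : ℤ))
      MeasureTheory.volume 1 Y :=
    (continuousOn_const.mul ((continuousOn_id.zpow₀ (-2))
      fun t ht => Or.inl (hne t ht))).intervalIntegrable_of_Icc hY
  rw [← Real.norm_eq_abs, sum_log_div_pow_eq_integral k hY, ← integral_log_div_pow_mul k hY,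
    ← intervalIntegral.integral_sub hint_sum (intervalIntegrable_log_div_pow_mul k hY _)]
  refine (intervalIntegral.norm_integral_le_of_norm_le hY (.of_forall fun t ht => ?_)
    hint_zpow).trans ?_
  · have ht_pos : 0 < t := zero_lt_one.trans ht.1
    have hlog_nonneg : 0 ≤ log (Y / t) := log_nonneg ((one_le_div ht_pos).2 ht.2)
    have hlog_le : log (Y / t) ≤ log Y :=
      log_le_log (div_pos hY_pos ht_pos) (div_le_self hY_pos.le ht.1.le)
    rw [← mul_sub, norm_mul, Real.norm_of_nonneg (by positivity), Real.norm_eq_abs]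
    calc (k + 1) * log (Y / t) ^ k / t * |∑ n ∈ Icc 1 ⌊t⌋₊, 1 / (n : ℝ) -
            (log t + eulerMascheroniConstant)|
        ≤ (k + 1) * log Y ^ k / t * (2 / t) := by
          gcongr
          exact abs_sum_one_div_sub_log_add_eulerMascheroniConstant_le ht.1.le
      _ = 2 * (k + 1) * log Y ^ k * t ^ (-2 : ℤ) := by
          rw [zpow_neg, zpow_ofNat]
          field_simp
  · rw [intervalIntegral.integral_const_mul, integral_zpow_neg_two hY]
    exact mul_le_of_le_one_right (by positivity) (by linarith [one_div_pos.2 hY_pos])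

end LogPowerSum

lemma sum_one_div_floor_le {Y : ℝ} (hY : 1 ≤ Y) :
    ∑ n ∈ Icc 1 ⌊Y⌋₊, 1 / (n : ℝ) ≤ 1 + log Y := by
  refine (sum_one_div_le _).trans ?_
  gcongr
  · exact_mod_cast (Nat.one_le_floor_iff Y).2 hY
  · exact Nat.floor_le (by linarith)

lemma abs_sum_one_div_floor_mul_le {Y M : ℝ} (hY : 1 ≤ Y) (hM : 0 ≤ M) {f : ℕ → ℝ}
    (hf : ∀ n ∈ Icc 1 ⌊Y⌋₊, |f n| ≤ M) :
    |∑ n ∈ Icc 1 ⌊Y⌋₊, 1 / (n : ℝ) * f n| ≤ M * (1 + log Y) := calc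
  _ ≤ ∑ n ∈ Icc 1 ⌊Y⌋₊, 1 / (n : ℝ) * M := by
    refine (abs_sum_le_sum_abs _ _).trans (sum_le_sum fun n hn => ?_)
    rw [abs_mul, abs_of_nonneg (by positivity)]
    gcongr
    exact hf n hn
  _ ≤ M * (1 + log Y) := by
    rw [← sum_mul, mul_comm]
    gcongr
    exact sum_one_div_floor_le hY

lemma exists_abs_sum_log_div_add_sq_sub_le (K : ℝ) : ∃ C : ℝ, 0 < C ∧ ∀ Y : ℝ, 1 ≤ Y →
    |∑ n ∈ Icc 1 ⌊Y⌋₊, (log (Y / n) + K) ^ 2 / n -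
        (1 / 3 * log Y ^ 3 + (eulerMascheroniConstant + K) * log Y ^ 2)| ≤ C * (1 + log Y) := by
  refine ⟨4 + 2 * |K| * (2 + |eulerMascheroniConstant|) + K ^ 2, by positivity, fun Y hY => ?_⟩
  have hL : 0 ≤ log Y := log_nonneg hY
  have hsq := abs_sum_log_div_pow_sub_le 1 hY
  have hone := abs_sum_log_div_pow_sub_le 0 hY
  have hzero : |∑ n ∈ Icc 1 ⌊Y⌋₊, 1 / (n : ℝ)| ≤ 1 + log Y := by
    rw [abs_of_nonneg (by positivity)]
    exact sum_one_div_floor_le hY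
  have hexpand : ∑ n ∈ Icc 1 ⌊Y⌋₊, (log (Y / n) + K) ^ 2 / n =
      ∑ n ∈ Icc 1 ⌊Y⌋₊, log (Y / n) ^ (1 + 1) / n +
        2 * K * ∑ n ∈ Icc 1 ⌊Y⌋₊, log (Y / n) ^ (0 + 1) / n +
        K ^ 2 * ∑ n ∈ Icc 1 ⌊Y⌋₊, 1 / (n : ℝ) := by
    rw [mul_sum, mul_sum, ← sum_add_distrib, ← sum_add_distrib]
    exact sum_congr rfl fun n _ => by ring
  rw [hexpand]
  generalize ∑ n ∈ Icc 1 ⌊Y⌋₊, log (Y / n) ^ (1 + 1) / n = S₂ at *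
  generalize ∑ n ∈ Icc 1 ⌊Y⌋₊, log (Y / n) ^ (0 + 1) / n = S₁ at *
  generalize ∑ n ∈ Icc 1 ⌊Y⌋₊, 1 / (n : ℝ) = S₀ at *
  generalize eulerMascheroniConstant = g at *
  generalize log Y = L at *
  norm_num at hsq hone
  calc _ = |(S₂ - (L ^ 3 / 3 + g * L ^ 2)) + 2 * K * (S₁ - (L ^ 2 / 2 + g * L)) +
          2 * K * g * L + K ^ 2 * S₀| := by ring_nf
    _ ≤ 4 * L + 2 * |K| * 2 + 2 * |K| * |g| * L + K ^ 2 * (1 + L) := by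
        refine (abs_add_le _ _).trans (add_le_add ((abs_add_le _ _).trans (add_le_add
          ((abs_add_le _ _).trans (add_le_add ?_ ?_)) ?_)) ?_)
        · linarith
        · rw [abs_mul, abs_mul, abs_two]
          gcongr
        · rw [abs_mul, abs_mul, abs_mul, abs_two, abs_of_nonneg hL]
        · rw [abs_mul, abs_of_nonneg (sq_nonneg K)]
          gcongr
    _ ≤ _ := by
        have : 0 ≤ |K| * L := by positivity
        have : 0 ≤ |K| * |g| := by positivity
        linarith

lemma mem_hyperbolicRegion_floor {Q : ℝ} {w : ℕ × ℕ} :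
    w ∈ hyperbolicRegion ⌊Q⌋₊ Q ↔ 0 < w.1 ∧ 0 < w.2 ∧ (w.1 * w.2 : ℝ) ≤ Q := by
  rw [mem_hyperbolicRegion]
  refine ⟨fun ⟨h₁, h₂, h⟩ => ⟨h₁.1, h₂.1, h⟩, fun ⟨h₁, h₂, h⟩ => ⟨⟨h₁, ?_⟩, ⟨h₂, ?_⟩, h⟩⟩ <;>
    refine Nat.le_floor (le_trans ?_ h)
  · exact le_mul_of_one_le_right (by positivity) (by exact_mod_cast h₂)
  · exact le_mul_of_one_le_left (by positivity) (by exact_mod_cast h₁)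

lemma sum_hyperbolicRegion_floor (Q : ℝ) (f : ℕ × ℕ → ℝ) :
    ∑ w ∈ hyperbolicRegion ⌊Q⌋₊ Q, f w = ∑ x ∈ Icc 1 ⌊Q⌋₊, ∑ y ∈ Icc 1 ⌊Q / x⌋₊, f (x, y) := by
  refine sum_finset_product _ _ _ fun w => ?_
  rw [mem_hyperbolicRegion_floor, mem_Icc, mem_Icc]
  constructor
  · rintro ⟨hx, hy, hxy⟩
    have hx' : (0 : ℝ) < w.1 := by exact_mod_cast hx
    refine ⟨⟨hx, Nat.le_floor ((le_mul_of_one_le_right hx'.le ?_).trans hxy)⟩, hy,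
      Nat.le_floor ((le_div_iff₀' hx').2 hxy)⟩
    exact_mod_cast hy
  · rintro ⟨⟨hx, -⟩, hy, hyQ⟩
    have hx' : (0 : ℝ) < w.1 := by exact_mod_cast hx
    exact ⟨hx, hy, (le_div_iff₀' hx').1 ((Nat.le_floor_iff' (by lia)).1 hyQ)⟩

/-- The contribution of `w = (x, y)` to the diagonal of the second moment, divided by `Q`: a partial
quotient with continuants `x`, `y` is about `Q / (x y)`. -/
noncomputable def hyperbolaTerm (K Q : ℝ) (w : ℕ × ℕ) : ℝ :=
  (log (Q / (w.1 * w.2)) + K) ^ 2 / (w.1 * w.2)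

lemma sum_hyperbolaTerm_eq (K Q : ℝ) :
    ∑ w ∈ hyperbolicRegion ⌊Q⌋₊ Q, hyperbolaTerm K Q w =
      ∑ x ∈ Icc 1 ⌊Q⌋₊, 1 / (x : ℝ) * ∑ y ∈ Icc 1 ⌊Q / x⌋₊, (log (Q / x / y) + K) ^ 2 / y := by
  rw [sum_hyperbolicRegion_floor]
  refine sum_congr rfl fun x _ => ?_
  rw [mul_sum]
  refine sum_congr rfl fun y _ => ?_
  rw [hyperbolaTerm, div_div, one_div_mul_eq_div, div_div, mul_comm (y : ℝ)]

lemma sum_hyperbolaTerm_eq_add (K Q α β : ℝ) :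
    ∑ w ∈ hyperbolicRegion ⌊Q⌋₊ Q, hyperbolaTerm K Q w =
      α * ∑ x ∈ Icc 1 ⌊Q⌋₊, log (Q / x) ^ 3 / x + β * ∑ x ∈ Icc 1 ⌊Q⌋₊, log (Q / x) ^ 2 / x +
        ∑ x ∈ Icc 1 ⌊Q⌋₊, 1 / (x : ℝ) * (∑ y ∈ Icc 1 ⌊Q / x⌋₊, (log (Q / x / y) + K) ^ 2 / y -
          (α * log (Q / x) ^ 3 + β * log (Q / x) ^ 2)) := by
  rw [sum_hyperbolaTerm_eq, mul_sum, mul_sum, ← sum_add_distrib, ← sum_add_distrib]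
  exact sum_congr rfl fun x _ => by ring

lemma exists_abs_sum_hyperbolaTerm_sub_le (K : ℝ) : ∃ B C : ℝ, 0 < C ∧ ∀ Q : ℝ, 1 ≤ Q →
    |∑ w ∈ hyperbolicRegion ⌊Q⌋₊ Q, hyperbolaTerm K Q w -
      (1 / 12 * log Q ^ 4 + B * log Q ^ 3)| ≤ C * (1 + log Q) ^ 2 := by
  obtain ⟨C, hC, hinner⟩ := exists_abs_sum_log_div_add_sq_sub_le K
  set g := eulerMascheroniConstant
  refine ⟨(2 * g + K) / 3, 2 + 4 * |g + K| + |g| * |g + K| + C, by positivity, fun Q hQ => ?_⟩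
  have hL : 0 ≤ log Q := log_nonneg hQ
  have hcube := abs_sum_log_div_pow_sub_le 2 hQ
  have hsq := abs_sum_log_div_pow_sub_le 1 hQ
  have herror : |∑ x ∈ Icc 1 ⌊Q⌋₊, 1 / (x : ℝ) * (∑ y ∈ Icc 1 ⌊Q / x⌋₊,
      (log (Q / x / y) + K) ^ 2 / y - (1 / 3 * log (Q / x) ^ 3 + (g + K) * log (Q / x) ^ 2))| ≤
      C * (1 + log Q) * (1 + log Q) := by
    refine abs_sum_one_div_floor_mul_le hQ (by positivity) fun x hx => ?_
    obtain ⟨hx_one, hxQ⟩ := mem_Icc.1 hx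
    have hx' : (1 : ℝ) ≤ x := by exact_mod_cast hx_one
    have hQx : 1 ≤ Q / x := (one_le_div (by linarith)).2 ((Nat.le_floor_iff' (by lia)).1 hxQ)
    refine (hinner _ hQx).trans ?_
    gcongr
    exact div_le_self (by linarith) hx'
  rw [sum_hyperbolaTerm_eq_add K Q (1 / 3) (g + K)]
  generalize ∑ x ∈ Icc 1 ⌊Q⌋₊, log (Q / x) ^ 3 / x = S₃ at *
  generalize ∑ x ∈ Icc 1 ⌊Q⌋₊, log (Q / x) ^ 2 / x = S₂ at *
  generalize ∑ x ∈ Icc 1 ⌊Q⌋₊, 1 / (x : ℝ) * _ = E at *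
  generalize log Q = L at *
  norm_num at hcube hsq
  calc _ = |1 / 3 * (S₃ - (L ^ 4 / 4 + g * L ^ 3)) + (g + K) * (S₂ - (L ^ 3 / 3 + g * L ^ 2)) +
          g * (g + K) * L ^ 2 + E| := by ring_nf
    _ ≤ 1 / 3 * (6 * L ^ 2) + |g + K| * (4 * L) + |g| * |g + K| * L ^ 2 +
          C * (1 + L) * (1 + L) := by
        refine (abs_add_le _ _).trans (add_le_add ((abs_add_le _ _).trans (add_le_add
          ((abs_add_le _ _).trans (add_le_add ?_ ?_)) ?_)) herror)
        · rw [abs_mul, abs_of_pos (by norm_num)]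
          gcongr
        · rw [abs_mul]
          gcongr
        · rw [abs_mul, abs_mul, abs_of_nonneg (sq_nonneg L)]
    _ ≤ _ := by
        have : 0 ≤ |g + K| * L := by positivity
        have : 0 ≤ |g + K| * L ^ 2 := by positivity
        have : 0 ≤ |g| * |g + K| * L := by positivity
        have : 0 ≤ |g| * |g + K| := by positivity
        linarith [abs_nonneg (g + K)]

/-! ### Möbius inversion over coprime pairs -/

lemma hasSum_moebius_div_sq :
    HasSum (fun d : ℕ => (ArithmeticFunction.moebius d : ℝ) / (d : ℝ) ^ 2) (6 / π ^ 2) := by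
  have hre : (1 : ℝ) < (2 : ℂ).re := by norm_num
  have hmul := ArithmeticFunction.LSeries_zeta_mul_Lseries_moebius hre
  have hsummable := ArithmeticFunction.LSeriesSummable_moebius_iff.2 hre
  rw [ArithmeticFunction.LSeries_zeta_eq_riemannZeta hre, riemannZeta_two] at hmul
  have hpi : (π : ℂ) ≠ 0 := by exact_mod_cast pi_ne_zero
  have hvalue : LSeries (fun n => ((ArithmeticFunction.moebius n : ℤ) : ℂ)) 2 =
      ((6 / π ^ 2 : ℝ) : ℂ) := by
    push_cast
    field_simp at hmul ⊢
    linear_combination hmul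
  have hsum := LSeriesSummable.LSeriesHasSum hsummable
  rw [LSeriesHasSum, hvalue] at hsum
  rw [← Complex.hasSum_ofReal]
  refine hsum.congr_fun fun d => ?_
  rcases Nat.eq_zero_or_pos d with rfl | hd
  · simp
  · rw [LSeries.term_of_ne_zero hd.ne']
    push_cast
    simp

lemma abs_moebius_div_sq_le (d : ℕ) :
    |(ArithmeticFunction.moebius d : ℝ) / (d : ℝ) ^ 2| ≤ 1 / (d : ℝ) ^ 2 := by
  rw [abs_div, abs_of_nonneg (sq_nonneg (d : ℝ))]
  gcongr
  exact_mod_cast ArithmeticFunction.abs_moebius_le_one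

lemma summable_one_add_log_sq_div_sq :
    Summable fun d : ℕ => (1 + log d) ^ 2 / (d : ℝ) ^ 2 := by
  refine Summable.of_nonneg_of_le (fun d => by positivity) (fun d => ?_)
    ((summable_one_div_nat_rpow.2 (by norm_num : (1 : ℝ) < 3 / 2)).mul_left 16)
  rcases Nat.eq_zero_or_pos d with rfl | hd
  · simp
  have hd' : (0 : ℝ) < d := by exact_mod_cast hd
  rw [div_le_iff₀ (by positivity)]
  calc (1 + log d) ^ 2 ≤ (4 * (d : ℝ) ^ (1 / 4 : ℝ)) ^ 2 := by
        gcongr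
        exact one_add_log_le hd'
    _ = 16 * ((d : ℝ) ^ (2 : ℝ) / (d : ℝ) ^ (3 / 2 : ℝ)) := by
        rw [← rpow_sub hd', mul_pow, ← rpow_natCast ((d : ℝ) ^ _), ← rpow_mul hd'.le]
        norm_num
    _ = 16 * (1 / (d : ℝ) ^ (3 / 2 : ℝ)) * (d : ℝ) ^ 2 := by
        rw [rpow_ofNat]
        ring

lemma indicator_coprime_eq_sum_moebius {N m n : ℕ} (hm : 0 < m) (hmN : m ≤ N) :
    (if m.Coprime n then (1 : ℝ) else 0) =
      ∑ d ∈ Icc 1 N with d ∣ m ∧ d ∣ n, (ArithmeticFunction.moebius d : ℝ) := by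
  have hdivisors : (m.gcd n).divisors = {d ∈ Icc 1 N | d ∣ m ∧ d ∣ n} := by
    ext d
    rw [Nat.mem_divisors, mem_filter, mem_Icc, Nat.dvd_gcd_iff]
    exact ⟨fun ⟨h, _⟩ => ⟨⟨Nat.pos_of_dvd_of_pos h.1 hm, (Nat.le_of_dvd hm h.1).trans hmN⟩, h⟩,
      fun ⟨_, h⟩ => ⟨h, Nat.gcd_ne_zero_left hm.ne'⟩⟩
  have h := congrArg (fun f : ArithmeticFunction ℤ => f (m.gcd n))
    ArithmeticFunction.moebius_mul_coe_zeta
  simp only [ArithmeticFunction.coe_mul_zeta_apply, ArithmeticFunction.one_apply,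
    hdivisors] at h
  rw [← Int.cast_sum, h]
  simp only [Nat.Coprime, Int.cast_ite, Int.cast_one, Int.cast_zero]

lemma sum_hyperbolicRegion_filter_dvd {N d : ℕ} (hd : 0 < d) (f : ℕ × ℕ → ℝ) :
    ∑ w ∈ hyperbolicRegion N N with d ∣ w.1 ∧ d ∣ w.2, f w =
      ∑ w ∈ hyperbolicRegion ⌊(N : ℝ) / d ^ 2⌋₊ (N / d ^ 2), f (d * w.1, d * w.2) := by
  have hmem : ∀ w, (d * w.1, d * w.2) ∈ hyperbolicRegion N N ↔
      w ∈ hyperbolicRegion ⌊(N : ℝ) / d ^ 2⌋₊ (N / d ^ 2) := fun w => by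
    have hfloor := mem_hyperbolicRegion_floor (Q := N) (w := (d * w.1, d * w.2))
    rw [Nat.floor_natCast] at hfloor
    rw [hfloor, mem_hyperbolicRegion_floor, le_div_iff₀ (by positivity),
      Nat.mul_pos_iff_of_pos_left hd, Nat.mul_pos_iff_of_pos_left hd]
    push_cast
    rw [show (d * w.1 * (d * w.2) : ℝ) = w.1 * w.2 * d ^ 2 by ring]
  symm
  refine sum_bij (fun w _ => (d * w.1, d * w.2)) (fun w hw => ?_) (fun w _ w' _ h => ?_)
    (fun w hw => ?_) fun _ _ => rfl
  · exact mem_filter.2 ⟨(hmem w).2 hw, Dvd.intro _ rfl, Dvd.intro _ rfl⟩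
  · rw [Prod.mk.injEq] at h
    exact Prod.ext (Nat.eq_of_mul_eq_mul_left hd h.1) (Nat.eq_of_mul_eq_mul_left hd h.2)
  · obtain ⟨m, n⟩ := w
    obtain ⟨hmn, ⟨x, rfl⟩, ⟨y, rfl⟩⟩ := mem_filter.1 hw
    exact ⟨(x, y), (hmem (x, y)).1 hmn, rfl⟩

lemma sum_hyperbolicRegion_filter_coprime (N : ℕ) (f : ℕ × ℕ → ℝ) :
    ∑ w ∈ hyperbolicRegion N N with w.1.Coprime w.2, f w =
      ∑ d ∈ Icc 1 N, (ArithmeticFunction.moebius d : ℝ) *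
        ∑ w ∈ hyperbolicRegion ⌊(N : ℝ) / d ^ 2⌋₊ (N / d ^ 2), f (d * w.1, d * w.2) := calc
  _ = ∑ w ∈ hyperbolicRegion N N, ∑ d ∈ Icc 1 N,
        if d ∣ w.1 ∧ d ∣ w.2 then (ArithmeticFunction.moebius d : ℝ) * f w else 0 := by
    rw [sum_filter]
    refine sum_congr rfl fun w hw => ?_
    have hw' := (mem_hyperbolicRegion.1 hw).1
    rw [← sum_filter, ← sum_mul, ← indicator_coprime_eq_sum_moebius hw'.1 hw'.2, ite_mul, one_mul,
      zero_mul]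
  _ = _ := by
    rw [sum_comm]
    refine sum_congr rfl fun d hd => ?_
    rw [← sum_filter, ← mul_sum, sum_hyperbolicRegion_filter_dvd (mem_Icc.1 hd).1]

lemma abs_add_le_mul_one_add_sq {A B a b l v : ℝ} (hl : 0 ≤ l) (hv : 0 ≤ v)
    (ha : |a| ≤ 24 * (l ^ 2 * v ^ 2)) (hb : |b| ≤ 6 * (l ^ 2 * v)) :
    |A * a + B * b| ≤ (24 * |A| + 6 * |B|) * ((1 + l) ^ 2 * (1 + v) ^ 2) := calc
  _ ≤ |A| * |a| + |B| * |b| := by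
    rw [← abs_mul, ← abs_mul]
    exact abs_add_le _ _
  _ ≤ |A| * (24 * ((1 + l) ^ 2 * (1 + v) ^ 2)) + |B| * (6 * ((1 + l) ^ 2 * (1 + v) ^ 2)) := by
    gcongr
    · refine ha.trans ?_
      gcongr <;> linarith
    · refine hb.trans ?_
      gcongr
      · linarith
      · nlinarith
  _ = _ := by ring

lemma abs_quartic_shift_sub_le (A B : ℝ) {l v : ℝ} (hv : 0 ≤ v) (hvl : 2 * v ≤ l) :
    |A * (l - 2 * v) ^ 4 + B * (l - 2 * v) ^ 3 - (A * (l ^ 4 - 8 * l ^ 3 * v) + B * l ^ 3)| ≤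
      (24 * |A| + 6 * |B|) * ((1 + l) ^ 2 * (1 + v) ^ 2) := by
  have hexpand : A * (l - 2 * v) ^ 4 + B * (l - 2 * v) ^ 3 -
      (A * (l ^ 4 - 8 * l ^ 3 * v) + B * l ^ 3) =
      A * (8 * v ^ 2 * (3 * l ^ 2 - 4 * l * v + 2 * v ^ 2)) +
        B * -(2 * v * (3 * l ^ 2 - 6 * l * v + 4 * v ^ 2)) := by ring
  rw [hexpand]
  have hl : 0 ≤ l := by linarith
  have hvlv : 2 * v * v ≤ l * v := mul_le_mul_of_nonneg_right hvl hv
  have hlv : 2 * v * l ≤ l * l := mul_le_mul_of_nonneg_right hvl hl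
  have hquad : 0 ≤ 3 * l ^ 2 - 4 * l * v + 2 * v ^ 2 ∧
      3 * l ^ 2 - 4 * l * v + 2 * v ^ 2 ≤ 3 * l ^ 2 := ⟨by nlinarith, by nlinarith⟩
  have hquad' : 0 ≤ 3 * l ^ 2 - 6 * l * v + 4 * v ^ 2 ∧
      3 * l ^ 2 - 6 * l * v + 4 * v ^ 2 ≤ 3 * l ^ 2 := ⟨by nlinarith, by nlinarith⟩
  refine abs_add_le_mul_one_add_sq hl hv ?_ ?_
  · rw [abs_of_nonneg (mul_nonneg (by positivity) hquad.1)]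
    calc _ ≤ 8 * v ^ 2 * (3 * l ^ 2) := by gcongr; exact hquad.2
      _ = _ := by ring
  · rw [abs_neg, abs_of_nonneg (mul_nonneg (by positivity) hquad'.1)]
    calc _ ≤ 2 * v * (3 * l ^ 2) := by gcongr; exact hquad'.2
      _ = _ := by ring

lemma abs_quartic_le (A B : ℝ) {l v : ℝ} (hl : 0 ≤ l) (hvl : l ≤ 2 * v) :
    |A * (l ^ 4 - 8 * l ^ 3 * v) + B * l ^ 3| ≤
      (24 * |A| + 6 * |B|) * ((1 + l) ^ 2 * (1 + v) ^ 2) := by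
  have hv : 0 ≤ v := by linarith
  have hcube : l ^ 3 ≤ 2 * (l ^ 2 * v) := by
    nlinarith [mul_le_mul_of_nonneg_left hvl (sq_nonneg l)]
  refine abs_add_le_mul_one_add_sq hl hv ?_ ?_
  · rw [abs_sub_comm, abs_of_nonneg]
    · nlinarith [mul_le_mul_of_nonneg_right hcube hv, pow_nonneg hl 4]
    · nlinarith [mul_le_mul_of_nonneg_left hvl (pow_nonneg hl 3), mul_nonneg (pow_nonneg hl 3) hv]
  · rw [abs_of_nonneg (by positivity)]
    nlinarith [mul_nonneg (sq_nonneg l) hv]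

lemma summable_moebius_div_sq_mul_log :
    Summable fun d : ℕ => (ArithmeticFunction.moebius d : ℝ) / (d : ℝ) ^ 2 * log d := by
  refine summable_one_add_log_sq_div_sq.of_norm_bounded fun d => ?_
  have hv := log_natCast_nonneg d
  rw [norm_mul, norm_of_nonneg hv, norm_eq_abs]
  calc _ ≤ 1 / (d : ℝ) ^ 2 * (1 + log d) ^ 2 := by
        gcongr
        · exact abs_moebius_div_sq_le d
        · nlinarith
    _ = _ := one_div_mul_eq_div _ _

section MoebiusAverage

variable {F : ℝ → ℝ} {A B C : ℝ}

lemma abs_comp_div_sq_sub_le (hC : 0 ≤ C) (hF : ∀ Q < 1, F Q = 0)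
    (hFasymp : ∀ Q, 1 ≤ Q → |F Q - (A * log Q ^ 4 + B * log Q ^ 3)| ≤ C * (1 + log Q) ^ 2)
    {q d : ℝ} (hq : 1 ≤ q) (hd : 1 ≤ d) :
    |F (q / d ^ 2) - (A * (log q ^ 4 - 8 * log q ^ 3 * log d) + B * log q ^ 3)| ≤
      (C + (24 * |A| + 6 * |B|)) * ((1 + log q) ^ 2 * (1 + log d) ^ 2) := by
  have hl : 0 ≤ log q := log_nonneg hq
  have hv : 0 ≤ log d := log_nonneg hd
  have hlog : log (q / d ^ 2) = log q - 2 * log d := by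
    rw [log_div (by positivity) (by positivity), log_pow]
    norm_num
  rw [add_mul]
  rcases lt_or_ge (q / d ^ 2) 1 with hlt | hge
  · have hneg := log_neg (by positivity) hlt
    rw [hF _ hlt, zero_sub, abs_neg]
    exact (abs_quartic_le A B hl (by linarith)).trans (le_add_of_nonneg_left (by positivity))
  · have hnonneg := log_nonneg hge
    have hasymp := hFasymp _ hge
    rw [hlog] at hasymp hnonneg
    refine (abs_sub_le _ _ _).trans (add_le_add (hasymp.trans ?_)
      (abs_quartic_shift_sub_le A B hv (by linarith)))
    gcongr
    exact (pow_le_pow_left₀ (by linarith) (by linarith) 2).trans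
      (le_mul_of_one_le_right (by positivity) (one_le_pow₀ (by linarith)))

lemma hasSum_moebius_mul_comp_div_sq (hF : ∀ Q < 1, F Q = 0) (q : ℕ) :
    HasSum (fun d : ℕ => (ArithmeticFunction.moebius d : ℝ) / (d : ℝ) ^ 2 * F (q / d ^ 2))
      (∑ d ∈ Icc 1 q, (ArithmeticFunction.moebius d : ℝ) / (d : ℝ) ^ 2 * F (q / d ^ 2)) := by
  refine hasSum_sum_of_ne_finset_zero fun d hd => ?_
  rcases Nat.eq_zero_or_pos d with rfl | hd_pos
  · simp
  have hqd : q < d ^ 2 := by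
    rw [mem_Icc, not_and, not_le] at hd
    exact (hd hd_pos).trans_le (Nat.le_self_pow two_ne_zero d)
  rw [hF _ ((div_lt_one (by positivity)).2 (by exact_mod_cast hqd)), mul_zero]

lemma exists_abs_sum_moebius_mul_comp_div_sq_sub_le (hC : 0 ≤ C) (hF : ∀ Q < 1, F Q = 0)
    (hFasymp : ∀ Q, 1 ≤ Q → |F Q - (A * log Q ^ 4 + B * log Q ^ 3)| ≤ C * (1 + log Q) ^ 2) :
    ∃ c C' : ℝ, 0 < C' ∧ ∀ q : ℕ, 0 < q →
      |∑ d ∈ Icc 1 q, (ArithmeticFunction.moebius d : ℝ) / (d : ℝ) ^ 2 * F (q / d ^ 2) -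
        (6 / π ^ 2 * A * log q ^ 4 + c * log q ^ 3)| ≤ C' * (1 + log q) ^ 2 := by
  set S₀ := ∑' d : ℕ, (1 + log d) ^ 2 / (d : ℝ) ^ 2
  obtain ⟨s, hs⟩ := summable_moebius_div_sq_mul_log
  refine ⟨6 / π ^ 2 * B - 8 * A * s, (C + (24 * |A| + 6 * |B|)) * S₀ + 1, by positivity,
    fun q hq => ?_⟩
  have hq_one : (1 : ℝ) ≤ q := by exact_mod_cast hq
  have hmain := (hasSum_moebius_div_sq.mul_right (A * log q ^ 4 + B * log q ^ 3)).sub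
    (hs.mul_right (8 * A * log q ^ 3))
  have hbound := summable_one_add_log_sq_div_sq.hasSum.mul_left
    ((C + (24 * |A| + 6 * |B|)) * (1 + log q) ^ 2)
  have hdiff := ((hasSum_moebius_mul_comp_div_sq hF q).sub hmain).norm_le_of_bounded hbound
    fun d => ?_
  · rw [norm_eq_abs] at hdiff
    have hpoly : 6 / π ^ 2 * A * log q ^ 4 + (6 / π ^ 2 * B - 8 * A * s) * log q ^ 3 =
        6 / π ^ 2 * (A * log q ^ 4 + B * log q ^ 3) - s * (8 * A * log q ^ 3) := by ring
    rw [hpoly]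
    exact hdiff.trans (by linarith [sq_nonneg (1 + log q)])
  · rcases Nat.eq_zero_or_pos d with rfl | hd
    · simp
    have hd_one : (1 : ℝ) ≤ d := by exact_mod_cast hd
    calc _ = |(ArithmeticFunction.moebius d : ℝ) / (d : ℝ) ^ 2| *
            |F (q / d ^ 2) - (A * (log q ^ 4 - 8 * log q ^ 3 * log d) + B * log q ^ 3)| := by
          rw [← abs_mul, norm_eq_abs]
          ring_nf
      _ ≤ 1 / (d : ℝ) ^ 2 *
            ((C + (24 * |A| + 6 * |B|)) * ((1 + log q) ^ 2 * (1 + log d) ^ 2)) := by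
          gcongr
          · exact abs_moebius_div_sq_le d
          · exact abs_comp_div_sq_sub_le hC hF hFasymp hq_one hd_one
      _ = _ := by ring

end MoebiusAverage

/-- The coprime pairs of positive integers with product at most `q`: up to boundary effects, the
pairs of continuants of the positions in the expansions of fractions with denominator `q`. -/
noncomputable def coprimePairs (q : ℕ) : Finset (ℕ × ℕ) :=
  {w ∈ hyperbolicRegion q q | w.1.Coprime w.2}

lemma sum_coprimePairs_hyperbolaTerm (K : ℝ) (q : ℕ) :
    ∑ w ∈ coprimePairs q, hyperbolaTerm K q w =
      ∑ d ∈ Icc 1 q, (ArithmeticFunction.moebius d : ℝ) / (d : ℝ) ^ 2 *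
        ∑ w ∈ hyperbolicRegion ⌊(q : ℝ) / d ^ 2⌋₊ (q / d ^ 2), hyperbolaTerm K (q / d ^ 2) w := by
  rw [coprimePairs, sum_hyperbolicRegion_filter_coprime]
  refine sum_congr rfl fun d _ => ?_
  rw [div_mul_eq_mul_div, mul_div_assoc, sum_div]
  refine congrArg _ (sum_congr rfl fun w _ => ?_)
  have hmul : ((d * w.1 : ℕ) * (d * w.2 : ℕ) : ℝ) = d ^ 2 * (w.1 * w.2) := by
    push_cast
    ring
  rw [hyperbolaTerm, hyperbolaTerm, hmul, div_div, ← div_div (q : ℝ), div_div,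
    mul_comm (_ * _ : ℝ) (d ^ 2)]

lemma exists_abs_sum_coprimePairs_sub_le (K : ℝ) : ∃ c C : ℝ, 0 < C ∧ ∀ q : ℕ, 0 < q →
    |∑ w ∈ coprimePairs q, hyperbolaTerm K q w - (1 / (2 * π ^ 2) * log q ^ 4 + c * log q ^ 3)| ≤
      C * (1 + log q) ^ 2 := by
  obtain ⟨B, C, hC, hasymp⟩ := exists_abs_sum_hyperbolaTerm_sub_le K
  have hzero : ∀ Q < (1 : ℝ), ∑ w ∈ hyperbolicRegion ⌊Q⌋₊ Q, hyperbolaTerm K Q w = 0 := by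
    intro Q hQ
    rw [sum_hyperbolicRegion_floor, Nat.floor_eq_zero.2 hQ]
    rfl
  obtain ⟨c, C', hC', h⟩ := exists_abs_sum_moebius_mul_comp_div_sq_sub_le hC.le hzero hasymp
  refine ⟨c, C', hC', fun q hq => ?_⟩
  have hconst : 1 / (2 * π ^ 2) = 6 / π ^ 2 * (1 / 12) := by ring
  rw [sum_coprimePairs_hyperbolaTerm, hconst]
  exact h q hq

/-! ### The diagonal -/

/-- The square of the summand of `fpm` at a partial quotient `t`, as a function of a real `t`. -/
noncomputable def squareTerm (K t : ℝ) : ℝ := t * (log t + K) ^ 2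

section SquareTerm

variable (K : ℝ) {b t : ℝ}

lemma log_add_sq_le (ht : 1 ≤ t) : (log t + K) ^ 2 ≤ 4 * (1 + |K|) ^ 2 * t := by
  have ht_nonneg : 0 ≤ t := by linarith
  have hlog := log_nonneg ht
  have hK := abs_nonneg K
  have hsqrt : 1 + log t ≤ 2 * √t := by
    have h := log_le_sub_one_of_pos (sqrt_pos.2 (one_pos.trans_le ht))
    rw [log_sqrt ht_nonneg] at h
    linarith
  have habs : |log t + K| ≤ (1 + |K|) * (2 * √t) :=
    calc |log t + K| ≤ |log t| + |K| := abs_add_le _ _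
      _ ≤ (1 + |K|) * (1 + log t) := by rw [abs_of_nonneg hlog]; nlinarith
      _ ≤ (1 + |K|) * (2 * √t) := by gcongr
  calc (log t + K) ^ 2 ≤ ((1 + |K|) * (2 * √t)) ^ 2 := sq_le_sq.2 (habs.trans (le_abs_self _))
    _ = 4 * (1 + |K|) ^ 2 * √t ^ 2 := by ring
    _ = 4 * (1 + |K|) ^ 2 * t := by rw [sq_sqrt ht_nonneg]

lemma abs_squareTerm_le (ht : 1 ≤ t) (ht' : t ≤ 4) :
    |squareTerm K t| ≤ 18 * (1 + |K|) ^ 2 * t := by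
  have ht_nonneg : 0 ≤ t := by linarith
  rw [squareTerm, abs_of_nonneg (by positivity)]
  calc t * (log t + K) ^ 2 ≤ 4 * (4 * (1 + |K|) ^ 2 * t) := by
        gcongr
        exact log_add_sq_le K ht
    _ ≤ 18 * (1 + |K|) ^ 2 * t := by nlinarith [mul_nonneg (sq_nonneg (1 + |K|)) ht_nonneg]

lemma abs_squareTerm_sub_le (hb : 1 ≤ b) (hbt : b ≤ t) (htb : t ≤ b + 2) :
    |squareTerm K b - squareTerm K t| ≤ 18 * (1 + |K|) ^ 2 * t := by
  have hb_pos : 0 < b := by linarith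
  have ht : 1 ≤ t := hb.trans hbt
  have ht_pos : 0 < t := by linarith
  have hlog_b := log_nonneg hb
  have hlog_le : log b ≤ log t := log_le_log hb_pos hbt
  have hlog_diff : b * (log t - log b) ≤ 2 := by
    rw [← log_div ht_pos.ne' hb_pos.ne']
    calc b * log (t / b) ≤ b * (t / b - 1) := by
          gcongr
          exact log_le_sub_one_of_pos (by positivity)
      _ = t - b := by field_simp
      _ ≤ 2 := by linarith
  have hlog_diff_nonneg : 0 ≤ b * (log t - log b) := mul_nonneg hb_pos.le (by linarith)
  have hlog_sum : |log t + log b + 2 * K| ≤ 1 + 4 * (1 + |K|) ^ 2 * t := by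
    have h := log_add_sq_le |K| ht
    rw [abs_abs] at h
    rw [abs_le]
    constructor <;> nlinarith [neg_abs_le K, le_abs_self K, sq_nonneg (log t + |K| - 1)]
  have hdiff : squareTerm K b - squareTerm K t = -((t - b) * (log t + K) ^ 2 +
      b * (log t - log b) * (log t + log b + 2 * K)) := by
    rw [squareTerm, squareTerm]
    ring
  rw [hdiff, abs_neg]
  calc _ ≤ |(t - b) * (log t + K) ^ 2| + |b * (log t - log b) * (log t + log b + 2 * K)| :=
        abs_add_le _ _
    _ = (t - b) * (log t + K) ^ 2 + b * (log t - log b) * |log t + log b + 2 * K| := by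
        rw [abs_mul, abs_mul, abs_of_nonneg hlog_diff_nonneg, abs_of_nonneg (sub_nonneg.2 hbt),
          abs_of_nonneg (sq_nonneg _)]
    _ ≤ 2 * (4 * (1 + |K|) ^ 2 * t) + 2 * (1 + 4 * (1 + |K|) ^ 2 * t) := by
        gcongr
        · linarith
        · exact log_add_sq_le K ht
    _ ≤ 18 * (1 + |K|) ^ 2 * t := by
        nlinarith [one_le_pow₀ (n := 2) (le_add_of_nonneg_right (abs_nonneg K))]

end SquareTerm

lemma abs_sum_sub_sum_le_of_injOn {ι κ : Type*} [DecidableEq κ] {s : Finset ι} {u : Finset κ}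
    {φ : ι → κ} (hφ : ∀ a ∈ s, φ a ∈ u) (hinj : Set.InjOn φ s) {f : ι → ℝ} {g τ : κ → ℝ}
    (himage : ∀ a ∈ s, |f a - g (φ a)| ≤ τ (φ a))
    (hcompl : ∀ b ∈ u, b ∉ s.image φ → |g b| ≤ τ b) :
    |∑ a ∈ s, f a - ∑ b ∈ u, g b| ≤ ∑ b ∈ u, τ b := by
  have hsub : s.image φ ⊆ u := image_subset_iff.2 hφ
  rw [← sum_sdiff hsub, ← sum_sdiff hsub, sum_image hinj, sum_image hinj]
  calc _ = |∑ a ∈ s, (f a - g (φ a)) - ∑ b ∈ u \ s.image φ, g b| := by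
        rw [sum_sub_distrib]
        ring_nf
    _ ≤ ∑ a ∈ s, |f a - g (φ a)| + ∑ b ∈ u \ s.image φ, |g b| :=
        (abs_sub _ _).trans (add_le_add (abs_sum_le_sum_abs _ _) (abs_sum_le_sum_abs _ _))
    _ ≤ ∑ b ∈ u \ s.image φ, τ b + ∑ a ∈ s, τ (φ a) := by
        rw [add_comm]
        gcongr with b hb a ha
        · exact hcompl b (mem_sdiff.1 hb).1 (mem_sdiff.1 hb).2
        · exact himage a ha

section PositionData

variable {q : ℕ}

lemma mem_coprimePairs {w : ℕ × ℕ} :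
    w ∈ coprimePairs q ↔ 0 < w.1 ∧ 0 < w.2 ∧ w.1 * w.2 ≤ q ∧ w.1.Coprime w.2 := by
  rw [coprimePairs, mem_filter, mem_hyperbolicRegion]
  constructor
  · rintro ⟨⟨h1, h2, h⟩, hc⟩
    exact ⟨h1.1, h2.1, by exact_mod_cast h, hc⟩
  · rintro ⟨h1, h2, h, hc⟩
    exact ⟨⟨⟨h1, (Nat.le_mul_of_pos_right _ h2).trans h⟩,
      ⟨h2, (Nat.le_mul_of_pos_left _ h1).trans h⟩, by exact_mod_cast h⟩, hc⟩

lemma positionData_mem (hq : q.Prime) {p : Σ _ : ℕ, ℕ} (hp : p ∈ positions q) :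
    positionData q p ∈ coprimePairs q ×ˢ range 2 := by
  obtain ⟨ha, hi⟩ := mem_positions.1 hp
  exact mem_product.2 ⟨mem_coprimePairs.2 ⟨leftContinuant_pos ha, rightContinuant_pos ha,
    (leftContinuant_mul_rightContinuant_lt ha hi).le,
    coprime_leftContinuant_rightContinuant hq ha hi⟩, mem_range.2 (Nat.mod_lt _ two_pos)⟩

lemma mem_image_positionData (hq : q.Prime) {v : (ℕ × ℕ) × ℕ}
    (hv : v ∈ coprimePairs q ×ˢ range 2) (hle : 4 * (v.1.1 * v.1.2) ≤ q) :
    v ∈ (positions q).image (positionData q) := by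
  obtain ⟨hw, hpar⟩ := mem_product.1 hv
  obtain ⟨hx, hy, -, hc⟩ := mem_coprimePairs.1 hw
  have hx_lt : v.1.1 < q := by nlinarith
  have hy_lt : v.1.2 < q := by nlinarith
  obtain ⟨a, ha, i, hi, hleft, hright, hmod⟩ := exists_position hx hy hc
    (Nat.coprime_of_lt_prime hx.ne' hx_lt hq) (Nat.coprime_of_lt_prime hy.ne' hy_lt hq)
    hle (mem_range.1 hpar)
  refine mem_image.2 ⟨⟨a, i⟩, mem_positions.2 ⟨ha, hi⟩, ?_⟩
  simp only [positionData, hleft, hright, hmod]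

end PositionData

/-- The real number approximating the partial quotient at a position with the given data. -/
noncomputable def quotientModel (q : ℕ) (v : (ℕ × ℕ) × ℕ) : ℝ := q / (v.1.1 * v.1.2)

lemma sum_squareTerm_quotientModel (K : ℝ) (q : ℕ) :
    ∑ v ∈ coprimePairs q ×ˢ range 2, squareTerm K (quotientModel q v) =
      2 * q * ∑ w ∈ coprimePairs q, hyperbolaTerm K q w := by
  rw [sum_product, mul_sum]
  refine sum_congr rfl fun w _ => ?_
  simp only [quotientModel, sum_const, card_range, nsmul_eq_mul, squareTerm, hyperbolaTerm]
  push_cast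
  ring

lemma sum_quotientModel_le (q : ℕ) :
    ∑ v ∈ coprimePairs q ×ˢ range 2, quotientModel q v ≤ 2 * q * (1 + log q) ^ 2 := by
  have hsub : coprimePairs q ⊆ Icc 1 q ×ˢ Icc 1 q := fun w hw => by
    obtain ⟨⟨hx, hy, -⟩, -⟩ := (mem_filter.trans (and_congr_left' mem_hyperbolicRegion)).1 hw
    exact mem_product.2 ⟨mem_Icc.2 hx, mem_Icc.2 hy⟩
  rw [sum_product]
  calc _ = 2 * q * ∑ w ∈ coprimePairs q, 1 / ((w.1 : ℝ) * w.2) := by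
        rw [mul_sum]
        refine sum_congr rfl fun w _ => ?_
        simp only [quotientModel, sum_const, card_range, nsmul_eq_mul]
        push_cast
        ring
    _ ≤ 2 * q * ∑ w ∈ Icc 1 q ×ˢ Icc 1 q, 1 / ((w.1 : ℝ) * w.2) := by gcongr
    _ ≤ 2 * q * (1 + log q) ^ 2 := by
        gcongr
        exact sum_one_div_mul_le q

section QuotientModel

variable {q : ℕ} {v : (ℕ × ℕ) × ℕ}

lemma abs_squareTerm_partialQuotient_sub_le (K : ℝ) {p : Σ _ : ℕ, ℕ} (hp : p ∈ positions q) :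
    |squareTerm K (partialQuotient q p.1 p.2) -
        squareTerm K (quotientModel q (positionData q p))| ≤
      18 * (1 + |K|) ^ 2 * quotientModel q (positionData q p) := by
  obtain ⟨ha, hi⟩ := mem_positions.1 hp
  have hx : (0 : ℝ) < leftContinuant q p.1 p.2 := by exact_mod_cast leftContinuant_pos ha
  have hy : (0 : ℝ) < rightContinuant q p.1 p.2 := by exact_mod_cast rightContinuant_pos ha
  refine abs_squareTerm_sub_le K (by exact_mod_cast partialQuotient_pos ha hi) ?_ ?_
  · rw [quotientModel, positionData, le_div_iff₀ (by positivity)]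
    exact_mod_cast partialQuotient_mul_le ha hi
  · rw [quotientModel, positionData, div_le_iff₀ (by positivity)]
    exact_mod_cast le_partialQuotient_add_two_mul ha hi

lemma abs_squareTerm_quotientModel_le (K : ℝ) (hq : q.Prime)
    (hv : v ∈ coprimePairs q ×ˢ range 2) (hv' : v ∉ (positions q).image (positionData q)) :
    |squareTerm K (quotientModel q v)| ≤ 18 * (1 + |K|) ^ 2 * quotientModel q v := by
  obtain ⟨hx, hy, hle, -⟩ := mem_coprimePairs.1 (mem_product.1 hv).1
  have hlt : q < 4 * (v.1.1 * v.1.2) := not_le.1 fun h => hv' (mem_image_positionData hq hv h)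
  apply abs_squareTerm_le
  · rw [quotientModel, le_div_iff₀ (by positivity), one_mul]
    exact_mod_cast hle
  · rw [quotientModel, div_le_iff₀ (by positivity)]
    exact_mod_cast hlt.le

end QuotientModel

lemma abs_sum_squareTerm_sub_le (K : ℝ) {q : ℕ} (hq : q.Prime) :
    |∑ p ∈ positions q, squareTerm K (partialQuotient q p.1 p.2) -
        2 * q * ∑ w ∈ coprimePairs q, hyperbolaTerm K q w| ≤
      36 * (1 + |K|) ^ 2 * q * (1 + log q) ^ 2 := by
  rw [← sum_squareTerm_quotientModel]
  refine (abs_sum_sub_sum_le_of_injOn (τ := fun v => 18 * (1 + |K|) ^ 2 * quotientModel q v)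
    (fun p hp => positionData_mem hq hp) (injOn_positionData hq)
    (fun p hp => abs_squareTerm_partialQuotient_sub_le K hp)
    fun v hv hv' => abs_squareTerm_quotientModel_le K hq hv hv').trans ?_
  rw [← mul_sum]
  calc _ ≤ 18 * (1 + |K|) ^ 2 * (2 * q * (1 + log q) ^ 2) := by
        gcongr
        exact sum_quotientModel_le q
    _ = _ := by ring

lemma exists_abs_sum_squareTerm_sub_le (K : ℝ) : ∃ c C : ℝ, 0 < C ∧ ∀ q : ℕ, q.Prime →
    |∑ p ∈ positions q, squareTerm K (partialQuotient q p.1 p.2) -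
        q * (1 / π ^ 2 * log q ^ 4 + c * log q ^ 3)| ≤ C * q * (1 + log q) ^ 2 := by
  obtain ⟨c, C, hC, h⟩ := exists_abs_sum_coprimePairs_sub_le K
  refine ⟨2 * c, 36 * (1 + |K|) ^ 2 + 2 * C, by positivity, fun q hq => ?_⟩
  have hmodel : |2 * q * ∑ w ∈ coprimePairs q, hyperbolaTerm K q w -
      q * (1 / π ^ 2 * log q ^ 4 + 2 * c * log q ^ 3)| ≤ 2 * C * q * (1 + log q) ^ 2 :=
    calc _ = |2 * (q : ℝ) * (∑ w ∈ coprimePairs q, hyperbolaTerm K q w -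
            (1 / (2 * π ^ 2) * log q ^ 4 + c * log q ^ 3))| := by ring_nf
      _ = 2 * (q : ℝ) * |∑ w ∈ coprimePairs q, hyperbolaTerm K q w -
            (1 / (2 * π ^ 2) * log q ^ 4 + c * log q ^ 3)| := by
          rw [abs_mul, abs_of_nonneg (by positivity)]
      _ ≤ 2 * (q : ℝ) * (C * (1 + log q) ^ 2) := by
          gcongr
          exact h q hq.pos
      _ = _ := by ring
  calc _ ≤ _ := abs_sub_le _ (2 * q * ∑ w ∈ coprimePairs q, hyperbolaTerm K q w) _
    _ ≤ 36 * (1 + |K|) ^ 2 * q * (1 + log q) ^ 2 + 2 * C * q * (1 + log q) ^ 2 :=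
        add_le_add (abs_sum_squareTerm_sub_le K hq) hmodel
    _ = _ := by ring

/-! ### The second moment -/

/-- The constant added to the logarithms in `fpm ε`. -/
noncomputable def logShift (ε : ℤ) : ℝ := eulerMascheroniConstant - log (8 * π) - ε * π / 2

/-- The summand of `fpm ε a q` at position `i` of the expansion of `q / a`. -/
noncomputable def fpmTerm (ε : ℤ) (q a i : ℕ) : ℝ :=
  (ε : ℝ) ^ (i + 1) * (√(partialQuotient q a i) * (log (partialQuotient q a i) + logShift ε))

lemma fpm_eq_sum_fpmTerm (ε : ℤ) {a q : ℕ} (ha : a ∈ reducedResidues q) :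
    fpm ε a q = ∑ i ∈ range (cfList q a).length, fpmTerm ε q a i := by
  have haq := (mem_reducedResidues.1 ha).1
  have hcf : cfList a q = 0 :: cfList q a := by
    rw [cfList_of_pos a (by lia), Nat.div_eq_of_lt haq, Nat.mod_eq_of_lt haq]
  rw [fpm, hcf, List.length_cons, Nat.add_sub_cancel, ← Finset.Ico_add_one_right_eq_Icc,
    sum_Ico_eq_sum_range, Nat.add_sub_cancel]
  refine sum_congr rfl fun i _ => ?_
  rw [add_comm 1 i, List.getD_cons_succ, fpmTerm, partialQuotient, logShift]
  ring

lemma reducedResidues_prime {q : ℕ} (hq : q.Prime) : reducedResidues q = Icc 1 (q - 1) := by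
  ext a
  rw [mem_reducedResidues, mem_Icc]
  have hq_one := hq.one_lt
  constructor
  · rintro ⟨hlt, hc⟩
    refine ⟨Nat.pos_of_ne_zero ?_, by lia⟩
    rintro rfl
    exact hq_one.ne' (Nat.coprime_zero_right q |>.1 hc)
  · rintro ⟨hpos, hle⟩
    exact ⟨by lia, Nat.coprime_of_lt_prime (by lia) (by lia) hq⟩

section FpmTerm

variable {ε : ℤ} (hε : ε = 1 ∨ ε = -1) (q a i : ℕ)
include hε

lemma fpmTerm_sq : fpmTerm ε q a i ^ 2 = squareTerm (logShift ε) (partialQuotient q a i) := by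
  have hε_sq : (ε : ℝ) ^ 2 = 1 := by rcases hε with rfl | rfl <;> norm_num
  rw [fpmTerm, squareTerm, mul_pow, mul_pow, sq_sqrt (Nat.cast_nonneg _), ← pow_mul, mul_comm,
    mul_comm (i + 1) 2, pow_mul, hε_sq, one_pow, mul_one]

lemma abs_fpmTerm_le :
    |fpmTerm ε q a i| ≤ (1 + |logShift ε|) * weight (partialQuotient q a i) := by
  have hε_abs : |(ε : ℝ)| = 1 := by rcases hε with rfl | rfl <;> norm_num
  have hlog := log_natCast_nonneg (partialQuotient q a i)
  have hsum : |log (partialQuotient q a i) + logShift ε| ≤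
      (1 + |logShift ε|) * (1 + log (partialQuotient q a i)) := by
    refine (abs_add_le _ _).trans ?_
    rw [abs_of_nonneg hlog]
    nlinarith [abs_nonneg (logShift ε)]
  calc |fpmTerm ε q a i|
      = √(partialQuotient q a i) * |log (partialQuotient q a i) + logShift ε| := by
        rw [fpmTerm, abs_mul, abs_pow, hε_abs, one_pow, one_mul, abs_mul,
          abs_of_nonneg (sqrt_nonneg _)]
    _ ≤ √(partialQuotient q a i) *
          ((1 + |logShift ε|) * (1 + log (partialQuotient q a i))) := by gcongr
    _ = _ := by
        rw [weight]
        ring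

lemma sum_fpm_sq_eq :
    ∑ a ∈ reducedResidues q, fpm ε a q ^ 2 =
      ∑ p ∈ positions q, squareTerm (logShift ε) (partialQuotient q p.1 p.2) +
        2 * ∑ t ∈ positionPairs q, fpmTerm ε q t.1 t.2.1 * fpmTerm ε q t.1 t.2.2 := by
  rw [positions, positionPairs, sum_sigma, sum_sigma, mul_sum, ← sum_add_distrib]
  refine sum_congr rfl fun a ha => ?_
  rw [fpm_eq_sum_fpmTerm ε ha, sq_sum_eq_sum_sq_add]
  simp only [fpmTerm_sq hε]

lemma abs_sum_fpm_sq_sub_le :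
    |∑ a ∈ reducedResidues q, fpm ε a q ^ 2 -
        ∑ p ∈ positions q, squareTerm (logShift ε) (partialQuotient q p.1 p.2)| ≤
      2 * (1 + |logShift ε|) ^ 2 * ∑ t ∈ positionPairs q,
        weight (partialQuotient q t.1 t.2.1) * weight (partialQuotient q t.1 t.2.2) := by
  rw [sum_fpm_sq_eq hε, add_sub_cancel_left, abs_mul, abs_two, mul_assoc, mul_sum]
  gcongr
  refine (abs_sum_le_sum_abs _ _).trans (sum_le_sum fun t _ => ?_)
  calc |fpmTerm ε q t.1 t.2.1 * fpmTerm ε q t.1 t.2.2|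
      ≤ (1 + |logShift ε|) * weight (partialQuotient q t.1 t.2.1) *
          ((1 + |logShift ε|) * weight (partialQuotient q t.1 t.2.2)) := by
        rw [abs_mul]
        gcongr
        · exact mul_nonneg (by positivity) (weight_nonneg _)
        · exact abs_fpmTerm_le hε q _ _
        · exact abs_fpmTerm_le hε q _ _
    _ = _ := by ring

lemma exists_abs_sum_fpm_sq_sub_le : ∃ c C : ℝ, 0 < C ∧ ∀ q : ℕ, q.Prime →
    |∑ a ∈ Icc 1 (q - 1), fpm ε a q ^ 2 - q * (1 / π ^ 2 * log q ^ 4 + c * log q ^ 3)| ≤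
      q * (C * (1 + log q) ^ 2) := by
  obtain ⟨c, C, hC, hdiag⟩ := exists_abs_sum_squareTerm_sub_le (logShift ε)
  obtain ⟨C', hC', hoff⟩ := exists_sum_pairs_le
  refine ⟨c, 2 * (1 + |logShift ε|) ^ 2 * C' + C, by positivity, fun q hq => ?_⟩
  rw [← reducedResidues_prime hq]
  calc _ ≤ _ := abs_sub_le _
        (∑ p ∈ positions q, squareTerm (logShift ε) (partialQuotient q p.1 p.2)) _
    _ ≤ 2 * (1 + |logShift ε|) ^ 2 * (C' * q * (1 + log q) ^ 2) + C * q * (1 + log q) ^ 2 := by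
        refine add_le_add ((abs_sum_fpm_sq_sub_le hε q).trans ?_) (hdiag q hq)
        gcongr
        exact hoff q hq
    _ = _ := by ring

end FpmTerm

/-- Corollary (second moment of `f_±`). -/
theorem second_moment_of_f (ε : ℤ) (hε : ε = 1 ∨ ε = -1) :
    ∃ (c C : ℝ), 0 < C ∧
      ∀ (q : ℕ) (hq : q.Prime), 3 ≤ q →
        |(1/(q:ℝ)) * ∑ a ∈ Finset.Icc 1 (q-1), (fpm ε a q)^2
            - (1/π^2) * (Real.log q)^4 - c * (Real.log q)^3|
          ≤ C * (Real.log q)^2 := by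
  obtain ⟨c, C, hC, h⟩ := exists_abs_sum_fpm_sq_sub_le hε
  refine ⟨c, C * 2 ^ 2, by positivity, fun q hq hq_three => ?_⟩
  have hq_pos : (0 : ℝ) < q := by exact_mod_cast hq.pos
  have hlog : 1 ≤ log q := by
    rw [le_log_iff_exp_le hq_pos]
    exact (exp_one_lt_three.trans_le (by exact_mod_cast hq_three)).le
  have hmul : 1 / (q : ℝ) * ∑ a ∈ Icc 1 (q - 1), fpm ε a q ^ 2 - 1 / π ^ 2 * log q ^ 4 -
      c * log q ^ 3 = (∑ a ∈ Icc 1 (q - 1), fpm ε a q ^ 2 -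
        q * (1 / π ^ 2 * log q ^ 4 + c * log q ^ 3)) / q := by
    field_simp
    ring
  rw [hmul, abs_div, abs_of_pos hq_pos, div_le_iff₀' hq_pos, mul_assoc C, ← mul_pow]
  refine (h q hq).trans ?_
  gcongr
  linarith
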